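/- arXiv:2411.02190 — 4 statements merged into one kernel-verified Lean document; each statement's English description precedes it below -/
import Mathlib

section
/- (Improved stability in the nucleus of a resonance) There are constants c₄, c₅ > 0, independent of the resonance, and ε₀ > 0 such that the following holds. Let ‖s‖ = sup_{𝒟_F}|s_ε|, ν₂ = d·‖h₀''‖. If 0 < ε ≤ ε₀, n is a natural number with n < ε^{−d/(2(d+1))}, I* ∈ B_R satisfies n·h₀'(I*) ∈ ℤ^d, and the initial condition satisfies |I₀ − I*|² ≤ 2 ν₂^{−1} ‖s‖ ε, then the trajectory (I_k,φ_k) = F_ε^k(I₀,φ₀) satisfies |I_k − I*|² ≤ 11 ν^{−1} ‖s‖ ε for all integers 0 ≤ k ≤ c₄·exp(c₅/√(n²ε)). -/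
/-- Real phase space `ℝ^d × ℝ^d` (actions–angles, sup norm), a lift of `ℝ^d × 𝕋^d`. -/
abbrev RPhase (d : ℕ) := (Fin d → ℝ) × (Fin d → ℝ)

/-- Complex phase space `ℂ^d × ℂ^d` with the sup norm. -/
abbrev CPhase (d : ℕ) := (Fin d → ℂ) × (Fin d → ℂ)

/-- Complexification of a real vector. -/
def cx (d : ℕ) (v : Fin d → ℝ) : Fin d → ℂ := fun i => (v i : ℂ)


section NearIdentity

open Metric Set

variable {E F : Type*} [NormedAddCommGroup E] [NormedSpace ℂ E]
  [NormedAddCommGroup F] [NormedSpace ℂ F]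

theorem ni_mapsTo {g : E → F} {c : E} {η M : ℝ} (hη : 0 < η)
    (hM : ∀ y ∈ ball c η, ‖g y‖ ≤ M) : MapsTo g (ball c η) (closedBall (g c) (2 * M)) := by
  intro y hy
  rw [mem_closedBall, dist_eq_norm]
  have h1 := hM y hy
  have h2 := hM c (mem_ball_self hη)
  have h3 := norm_sub_le (g y) (g c)
  linarith

theorem ni_schwarz {g : E → F} {c z : E} {η M : ℝ} (hd : DifferentiableOn ℂ g (ball c η))
    (hM : ∀ y ∈ ball c η, ‖g y‖ ≤ M) (hz : z ∈ ball c η) :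
    ‖g z - g c‖ ≤ 2 * M / η * ‖z - c‖ := by
  have hη : 0 < η := nonempty_ball.1 ⟨z, hz⟩
  have := Complex.dist_le_div_mul_dist_of_mapsTo_ball hd (ni_mapsTo hη hM) hz
  simpa [dist_eq_norm] using this

theorem ni_fderiv {g : E → F} {c : E} {η M : ℝ} (hη : 0 < η)
    (hd : DifferentiableOn ℂ g (ball c η))
    (hM : ∀ y ∈ ball c η, ‖g y‖ ≤ M) : ‖fderiv ℂ g c‖ ≤ 2 * M / η :=
  Complex.norm_fderiv_le_div_of_mapsTo_ball hd (ni_mapsTo hη hM) hη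

/-- Koopman operator. -/
noncomputable def koop (F : Type*) [NormedAddCommGroup F] [NormedSpace ℂ F] (f : E → E) :
    Module.End ℂ (E → F) := LinearMap.funLeft ℂ F f

/-- Difference operator. -/
noncomputable def kdiff (F : Type*) [NormedAddCommGroup F] [NormedSpace ℂ F] (f : E → E) :
    Module.End ℂ (E → F) := koop F f - 1

theorem koop_apply (f : E → E) (g : E → F) (x : E) : koop F f g x = g (f x) := rfl

theorem kdiff_apply (f : E → E) (g : E → F) (x : E) : kdiff F f g x = g (f x) - g x := rfl

theorem koop_pow_apply (f : E → E) (g : E → F) (j : ℕ) (x : E) :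
    (koop F f ^ j) g x = g (f^[j] x) := by
  induction j generalizing x with
  | zero => simp
  | succ j ih =>
    rw [pow_succ', Module.End.mul_apply, koop_apply, ih, Function.iterate_succ_apply]

theorem kdiff_comm (f : E → E) (g : E → F) (k : ℕ) (x : E) :
    (kdiff F f ^ k) g (f x) = (kdiff F f ^ k) (fun y => g (f y)) x := by
  have h : Commute (koop F f) (kdiff F f ^ k) :=
    ((Commute.refl _).sub_right (Commute.one_right _)).pow_right k
  have := congrFun (LinearMap.congr_fun h.eq g) x
  exact this

theorem kdiff_succ (f : E → E) (g : E → F) (k : ℕ) (x : E) :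
    (kdiff F f ^ (k + 1)) g x = (kdiff F f ^ k) g (f x) - (kdiff F f ^ k) g x := by
  rw [pow_succ', Module.End.mul_apply, kdiff_apply]

theorem newton_orbit (f : E → E) (g : E → F) (j : ℕ) (x : E) :
    g (f^[j] x) = ∑ k ∈ Finset.range (j + 1), (j.choose k : ℂ) • (kdiff F f ^ k) g x := by
  have h : koop F f = kdiff F f + 1 := by simp [kdiff]
  rw [← koop_pow_apply f g j x, h, (Commute.one_right _).add_pow]
  simp only [one_pow, mul_one, LinearMap.sum_apply, Finset.sum_apply]
  refine Finset.sum_congr rfl fun k _ => ?_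
  rw [← nsmul_eq_mul']
  simp [Nat.cast_smul_eq_nsmul]

/-- Nested-domain estimate. -/
theorem kdiff_nested {f : E → E} {g : E → F} {x : E} {ρ η δ M : ℝ}
    (hδ : 0 ≤ δ) (hδη : δ < η)
    (hf : DifferentiableOn ℂ f (ball x ρ)) (hfb : ∀ z ∈ ball x ρ, ‖f z - z‖ ≤ δ)
    (hg : DifferentiableOn ℂ g (ball x ρ)) (hgb : ∀ z ∈ ball x ρ, ‖g z‖ ≤ M) (k : ℕ) :
    DifferentiableOn ℂ ((kdiff F f ^ k) g) (ball x (ρ - k * η)) ∧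
      ∀ z ∈ ball x (ρ - k * η), ‖(kdiff F f ^ k) g z‖ ≤ M * (2 * δ / η) ^ k := by
  have hη : 0 < η := by linarith
  induction k with
  | zero => simpa using ⟨hg, hgb⟩
  | succ k ih =>
    obtain ⟨ih1, ih2⟩ := ih
    have e : ρ - (k + 1 : ℕ) * η = ρ - k * η - η := by push_cast; ring
    rw [e]
    have hk : 0 ≤ k * η := by positivity
    have hsub : ∀ z ∈ ball x (ρ - k * η - η), ball z η ⊆ ball x (ρ - k * η) := by
      intro z hz
      apply ball_subset_ball'
      rw [mem_ball] at hz
      linarith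
    have hρ : ∀ z ∈ ball x (ρ - k * η - η), z ∈ ball x ρ := fun z hz =>
      ball_subset_ball (by linarith) hz
    have hfz : ∀ z ∈ ball x (ρ - k * η - η), f z ∈ ball z η := by
      intro z hz
      rw [mem_ball, dist_eq_norm]
      exact (hfb z (hρ z hz)).trans_lt hδη
    have hS : ∀ z, (kdiff F f ^ (k + 1)) g z = (kdiff F f ^ k) g (f z) - (kdiff F f ^ k) g z :=
      fun z => kdiff_succ f g k z
    constructor
    · have : (kdiff F f ^ (k + 1)) g =
          fun z => (kdiff F f ^ k) g (f z) - (kdiff F f ^ k) g z := funext hS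
      rw [this]
      refine DifferentiableOn.sub ?_ (ih1.mono (ball_subset_ball (by linarith)))
      exact ih1.comp (hf.mono fun z hz => hρ z hz) fun z hz => hsub z hz (hfz z hz)
    · intro z hz
      rw [hS]
      have h1 := ni_schwarz (ih1.mono (hsub z hz)) (fun y hy => ih2 y (hsub z hz hy)) (hfz z hz)
      have h2 := hfb z (hρ z hz)
      have hM : 0 ≤ M * (2 * δ / η) ^ k :=
        (norm_nonneg _).trans (ih2 z (hsub z hz (mem_ball_self hη)))
      calc _ ≤ _ := h1
        _ ≤ 2 * (M * (2 * δ / η) ^ k) / η * δ := by gcongr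
        _ = _ := by rw [pow_succ]; ring

theorem kdiff_bound {f : E → E} {g : E → F} {x : E} {ρ δ M : ℝ} (hρ : 0 < ρ)
    (hδ : 0 ≤ δ) {m : ℕ} (hm : 240 * m * δ ≤ ρ)
    (hf : DifferentiableOn ℂ f (ball x ρ)) (hfb : ∀ z ∈ ball x ρ, ‖f z - z‖ ≤ δ)
    (hg : DifferentiableOn ℂ g (ball x ρ)) (hgb : ∀ z ∈ ball x ρ, ‖g z‖ ≤ M) (k : ℕ)
    (hk : k ≤ m) :
    (5 * m : ℝ) ^ k / (k.factorial : ℝ) * ‖(kdiff F f ^ k) g x‖ ≤ M * (1 / 4) ^ k := by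
  rcases Nat.eq_zero_or_pos k with rfl | hk0
  · simpa using hgb x (mem_ball_self hρ)
  have hM : 0 ≤ M := (norm_nonneg _).trans (hgb x (mem_ball_self hρ))
  have hkR : (1 : ℝ) ≤ k := by exact_mod_cast hk0
  have hkm : (k : ℝ) ≤ m := by exact_mod_cast hk
  have hkd : k * δ ≤ ρ / 240 := by nlinarith
  have key : ‖(kdiff F f ^ k) g x‖ ≤ M * (2 * δ / (ρ / (k + 1))) ^ k := by
    have hlt : δ < ρ / (k + 1) := by
      rw [lt_div_iff₀ (by positivity)]; nlinarith
    refine (kdiff_nested hδ hlt hf hfb hg hgb k).2 x (mem_ball_self ?_)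
    have : k * (ρ / (k + 1)) = ρ - ρ / (k + 1) := by field_simp; ring
    rw [this]; simp; positivity
  have h3 : (k : ℝ) ^ k / k.factorial ≤ 3 ^ k := by
    have := Real.pow_div_factorial_le_exp (k : ℝ) (by positivity) k
    refine this.trans ?_
    have e : Real.exp k = Real.exp 1 ^ k := by rw [← Real.exp_nat_mul]; simp
    rw [e]
    gcongr
    linarith [Real.exp_one_lt_d9]
  calc (5 * m : ℝ) ^ k / (k.factorial : ℝ) * ‖(kdiff F f ^ k) g x‖
      ≤ (5 * m : ℝ) ^ k / (k.factorial : ℝ) * (M * (2 * δ / (ρ / (k + k))) ^ k) := by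
        gcongr
        refine key.trans ?_
        gcongr
    _ = M * ((20 * m * δ / ρ) ^ k * ((k : ℝ) ^ k / k.factorial)) := by
        rw [div_mul_eq_mul_div, mul_div_assoc', mul_div_assoc']
        congr 1
        rw [mul_left_comm, ← mul_pow, ← mul_pow]
        congr 2
        field_simp
        ring
    _ ≤ M * ((20 * m * δ / ρ) ^ k * 3 ^ k) := by gcongr
    _ = M * (60 * m * δ / ρ) ^ k := by rw [← mul_pow]; congr 2; ring
    _ ≤ M * (1 / 4) ^ k := by
        have : 60 * m * δ / ρ ≤ 1 / 4 := by rw [div_le_iff₀ hρ]; linarith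
        gcongr

/-- Binomial polynomial. -/
noncomputable def binp (k : ℕ) (t : ℂ) : ℂ :=
  (∏ j ∈ Finset.range k, (t - j)) / k.factorial

theorem binp_nat (k j : ℕ) : binp k (j : ℂ) = (j.choose k : ℂ) := by
  unfold binp
  rw [← descPochhammer_eval_eq_prod_range, descPochhammer_eval_eq_descFactorial,
    Nat.descFactorial_eq_factorial_mul_choose]
  have : (k.factorial : ℂ) ≠ 0 := by exact_mod_cast k.factorial_ne_zero
  push_cast
  field_simp

theorem binp_differentiable (k : ℕ) : Differentiable ℂ (binp k) := by
  unfold binp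
  fun_prop

theorem binp_hasDerivAt_zero (k : ℕ) :
    HasDerivAt (binp (k + 1)) ((-1) ^ k / (k + 1 : ℂ)) 0 := by
  have h1 : binp (k + 1) = fun t : ℂ => t * ((∏ j ∈ Finset.range k, (t - ((j + 1 : ℕ) : ℂ))) /
      ((k + 1).factorial : ℂ)) := by
    funext t
    unfold binp
    rw [Finset.prod_range_succ']
    push_cast
    ring
  have h2 : DifferentiableAt ℂ (fun t : ℂ => ((∏ j ∈ Finset.range k, (t - (j + 1 : ℕ))) /
      (k + 1).factorial)) 0 := by fun_prop
  have h3 := (hasDerivAt_id (0 : ℂ)).mul h2.hasDerivAt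
  rw [h1]
  refine h3.congr_deriv ?_
  have h4 : ∀ k : ℕ, ∏ j ∈ Finset.range k, ((0 : ℂ) - (j + 1 : ℕ)) = (-1) ^ k * k.factorial := by
    intro k
    induction k with
    | zero => simp
    | succ k ih => rw [Finset.prod_range_succ, ih, Nat.factorial_succ]; push_cast; ring
  have h5 : (k.factorial : ℂ) ≠ 0 := by exact_mod_cast k.factorial_ne_zero
  have h6 : (k + 1 : ℂ) ≠ 0 := by exact_mod_cast k.succ_ne_zero
  simp only [id, h4, Nat.factorial_succ]
  push_cast
  field_simp
  ring

theorem binp_norm_le {m k : ℕ} (hk : k ≤ m) {t : ℂ} (ht : ‖t‖ ≤ 4 * m) :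
    ‖binp k t‖ ≤ (5 * m : ℝ) ^ k / k.factorial := by
  unfold binp
  rw [norm_div, norm_prod, Complex.norm_natCast]
  gcongr
  calc _ ≤ ∏ j ∈ Finset.range k, (5 * m : ℝ) := by
        refine Finset.prod_le_prod (fun _ _ => norm_nonneg _) fun j hj => ?_
        have hj' : (j : ℝ) ≤ m := by
          have := Finset.mem_range.1 hj
          exact_mod_cast (by omega : j ≤ m)
        have := norm_sub_le t j
        rw [Complex.norm_natCast] at this
        linarith
    _ = _ := by simp

/-- Division by zeros plus the maximum principle. -/
theorem zeros_factor [CompleteSpace F] {G : ℂ → F} {s : Set ℂ} (N : ℕ)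
    (hs : ∀ j < N, s ∈ nhds (j : ℂ))
    (hG : DifferentiableOn ℂ G s) (hz : ∀ j < N, G (j : ℂ) = 0) :
    ∃ K : ℂ → F, DifferentiableOn ℂ K s ∧
      ∀ t, G t = (∏ j ∈ Finset.range N, (t - j)) • K t := by
  induction N with
  | zero => exact ⟨G, hG, by simp⟩
  | succ N ih =>
    obtain ⟨K, hK, hGK⟩ := ih (fun j hj => hs j (by omega)) (fun j hj => hz j (by omega))
    refine ⟨dslope K N, (Complex.differentiableOn_dslope (hs N (by omega))).2 hK, fun t => ?_⟩
    have h0 : K N = 0 := by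
      have h1 := hGK N
      rw [hz N (by omega)] at h1
      rcases smul_eq_zero.1 h1.symm with h | h
      · rw [Finset.prod_eq_zero_iff] at h
        obtain ⟨j, hj, hj'⟩ := h
        have := Finset.mem_range.1 hj
        rw [sub_eq_zero] at hj'
        have : N = j := by exact_mod_cast hj'
        omega
      · exact h
    rw [Finset.prod_range_succ, mul_smul, sub_smul_dslope, h0, sub_zero]
    exact hGK t

theorem zeros_deriv_bound [CompleteSpace F] {G : ℂ → F} {m : ℕ} (hm : 1 ≤ m) {M : ℝ}
    (hG : DifferentiableOn ℂ G (closedBall 0 (4 * m)))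
    (hb : ∀ t, ‖t‖ ≤ 4 * m → ‖G t‖ ≤ M) (hz : ∀ j < m + 1, G (j : ℂ) = 0) :
    ‖deriv G 0‖ ≤ M / 3 ^ (m + 1) := by
  have hm' : (1 : ℝ) ≤ m := by exact_mod_cast hm
  obtain ⟨K, hK, hGK⟩ := zeros_factor (m + 1) (s := closedBall 0 (4 * m)) (fun j hj => by
    apply closedBall_mem_nhds_of_mem
    have : (j : ℝ) ≤ m := by exact_mod_cast (by omega : j ≤ m)
    rw [mem_ball_zero_iff, Complex.norm_natCast]
    linarith) hG hz
  have hK0 : ‖K 0‖ ≤ M / (3 * m) ^ (m + 1) := by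
    refine Complex.norm_le_of_forall_mem_frontier_norm_le (U := ball 0 (4 * m)) isBounded_ball
      (hK.diffContOnCl_ball subset_rfl) ?_ (subset_closure (mem_ball_self (by positivity)))
    intro t ht
    rw [frontier_ball _ (by positivity), mem_sphere_zero_iff_norm] at ht
    have h1 := hb t ht.le
    rw [hGK, norm_smul, norm_prod] at h1
    rw [le_div_iff₀ (by positivity), mul_comm]
    refine le_trans ?_ h1
    gcongr
    calc ((3 * m : ℝ)) ^ (m + 1) = ∏ j ∈ Finset.range (m + 1), (3 * m : ℝ) := by simp
      _ ≤ _ := by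
        refine Finset.prod_le_prod (fun _ _ => by positivity) fun j hj => ?_
        have hj' : (j : ℝ) ≤ m := by
          have := Finset.mem_range.1 hj
          exact_mod_cast (by omega : j ≤ m)
        have := norm_sub_norm_le t j
        rw [Complex.norm_natCast, ht] at this
        linarith
  have hKd : DifferentiableAt ℂ K 0 := hK.differentiableAt
    (closedBall_mem_nhds _ (by positivity))
  have h1 : G = fun t => binp (m + 1) t • (((m + 1).factorial : ℂ) • K t) := by
    funext t
    have h5 : ((m + 1).factorial : ℂ) ≠ 0 := by exact_mod_cast (m + 1).factorial_ne_zero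
    rw [hGK, smul_smul, binp, div_mul_cancel₀ _ h5]
  have h2 := (binp_hasDerivAt_zero m).smul (hKd.hasDerivAt.const_smul ((m + 1).factorial : ℂ))
  have h3 : HasDerivAt G (((-1) ^ m / (m + 1 : ℂ)) • (((m + 1).factorial : ℂ) • K 0)) 0 := by
    rw [h1]
    refine h2.congr_deriv ?_
    have : binp (m + 1) 0 = 0 := by
      have := binp_nat (m + 1) 0
      simpa using this
    rw [this]
    simp
  rw [h3.deriv]
  have h6 : (m + 1 : ℂ) ≠ 0 := by exact_mod_cast m.succ_ne_zero
  have h7 : ((-1) ^ m / (m + 1 : ℂ)) • (((m + 1).factorial : ℂ) • K 0)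
      = ((-1) ^ m * (m.factorial : ℂ)) • K 0 := by
    rw [smul_smul, Nat.factorial_succ]
    congr 1
    push_cast
    field_simp
  rw [h7, norm_smul, norm_mul, norm_pow, norm_neg, norm_one, one_pow, one_mul,
    Complex.norm_natCast]
  have hM : 0 ≤ M := (norm_nonneg _).trans (hb 0 (by simp))
  have hfac : (m.factorial : ℝ) ≤ m ^ (m + 1) := by
    exact_mod_cast (m.factorial_le_pow).trans (Nat.pow_le_pow_right hm (by omega))
  calc _ ≤ (m : ℝ) ^ (m + 1) * (M / (3 * m) ^ (m + 1)) := by gcongr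
    _ = _ := by rw [mul_pow]; field_simp

/-- Newton interpolation polynomial along the orbit of `x`. -/
noncomputable def interp (f : E → E) (m : ℕ) (g : E → F) (x : E) (t : ℂ) : F :=
  ∑ k ∈ Finset.range (m + 1), binp k t • (kdiff F f ^ k) g x

/-- Truncated logarithm of the Koopman operator. -/
noncomputable def dop (f : E → E) (m : ℕ) (g : E → F) (x : E) : F :=
  ∑ k ∈ Finset.range m, ((-1) ^ k / (k + 1 : ℂ)) • (kdiff F f ^ (k + 1)) g x

theorem interp_hasDerivAt (f : E → E) (m : ℕ) (g : E → F) (x : E) :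
    HasDerivAt (interp f m g x) (dop f m g x) 0 := by
  have h : interp f m g x = fun t => (∑ k ∈ Finset.range m,
      binp (k + 1) t • (kdiff F f ^ (k + 1)) g x) + g x := by
    funext t
    rw [interp, Finset.sum_range_succ']
    simp [binp]
  rw [h]
  refine HasDerivAt.add_const _ (HasDerivAt.fun_sum fun k _ => ?_)
  exact (binp_hasDerivAt_zero k).smul_const _

theorem interp_differentiable (f : E → E) (m : ℕ) (g : E → F) (x : E) :
    Differentiable ℂ (interp f m g x) := by
  unfold interp
  refine Differentiable.fun_sum fun k _ => ?_
  exact (binp_differentiable k).smul_const _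

theorem interp_nat (f : E → E) {m : ℕ} (g : E → F) (x : E) {j : ℕ} (hj : j ≤ m) :
    interp f m g x j = g (f^[j] x) := by
  rw [newton_orbit f g j x, interp]
  symm
  simp only [binp_nat]
  refine Finset.sum_subset (Finset.range_mono (by omega)) fun k _ hk => ?_
  rw [Finset.mem_range, not_lt] at hk
  rw [Nat.choose_eq_zero_of_lt (by omega)]
  simp

theorem interp_zero (f : E → E) (m : ℕ) (g : E → F) (x : E) : interp f m g x 0 = g x := by
  simpa using interp_nat f g x (Nat.zero_le m)

theorem geom_quarter (n : ℕ) : ∑ k ∈ Finset.range n, (1 / 4 : ℝ) ^ k ≤ 4 / 3 := by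
  rw [geom_sum_eq (by norm_num)]
  have : (0 : ℝ) ≤ (1 / 4) ^ n := by positivity
  rw [div_le_iff_of_neg (by norm_num)]
  linarith

theorem interp_norm_le {f : E → E} {g : E → F} {x : E} {ρ δ M : ℝ} (hρ : 0 < ρ)
    (hδ : 0 ≤ δ) {m : ℕ} (hm : 240 * m * δ ≤ ρ)
    (hf : DifferentiableOn ℂ f (ball x ρ)) (hfb : ∀ z ∈ ball x ρ, ‖f z - z‖ ≤ δ)
    (hg : DifferentiableOn ℂ g (ball x ρ)) (hgb : ∀ z ∈ ball x ρ, ‖g z‖ ≤ M)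
    {t : ℂ} (ht : ‖t‖ ≤ 4 * m) : ‖interp f m g x t‖ ≤ M * (4 / 3) := by
  have hM : 0 ≤ M := (norm_nonneg _).trans (hgb x (mem_ball_self hρ))
  calc _ ≤ ∑ k ∈ Finset.range (m + 1), M * (1 / 4) ^ k := by
        refine norm_sum_le_of_le _ fun k hk => ?_
        have hk' : k ≤ m := by have := Finset.mem_range.1 hk; omega
        rw [norm_smul]
        refine le_trans ?_ (kdiff_bound hρ hδ hm hf hfb hg hgb k hk')
        gcongr
        exact binp_norm_le hk' ht
    _ = M * ∑ k ∈ Finset.range (m + 1), (1 / 4) ^ k := by rw [Finset.mul_sum]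
    _ ≤ _ := by gcongr; exact geom_quarter _

theorem interp_id_mem {f : E → E} {x : E} {ρ δ : ℝ} (hρ : 0 < ρ)
    (hδ : 0 ≤ δ) {m : ℕ} (hm : 240 * m * δ ≤ ρ)
    (hf : DifferentiableOn ℂ f (ball x ρ)) (hfb : ∀ z ∈ ball x ρ, ‖f z - z‖ ≤ δ)
    {t : ℂ} (ht : ‖t‖ ≤ 4 * m) : interp f m (fun y => y) x t ∈ ball x ρ := by
  have h0 : ∀ k, (kdiff E f ^ (k + 1)) (fun y => y) x
      = (kdiff E f ^ (k + 1)) (fun y => y - x) x := by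
    intro k
    rw [pow_succ, Module.End.mul_apply, Module.End.mul_apply]
    have : kdiff E f (fun y => y) = kdiff E f (fun y => y - x) := by
      funext y
      simp [kdiff_apply]
    rw [this]
  rw [mem_ball, dist_eq_norm, interp, Finset.sum_range_succ']
  simp only [h0]
  have h1 : binp 0 t • (kdiff E f ^ 0) (fun y => y) x = x := by simp [binp]
  rw [h1, add_sub_cancel_right]
  have hgd : DifferentiableOn ℂ (fun y => y - x) (ball x ρ) := by fun_prop
  have hgb : ∀ z ∈ ball x ρ, ‖z - x‖ ≤ ρ := fun z hz => by
    rw [mem_ball, dist_eq_norm] at hz; exact hz.le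
  calc _ ≤ ∑ k ∈ Finset.range m, ρ * (1 / 4) ^ (k + 1) := by
        refine norm_sum_le_of_le _ fun k hk => ?_
        have hk' : k + 1 ≤ m := by have := Finset.mem_range.1 hk; omega
        rw [norm_smul]
        refine le_trans ?_ (kdiff_bound hρ hδ hm hf hfb hgd hgb (k + 1) hk')
        gcongr
        exact binp_norm_le hk' ht
    _ = ρ / 4 * ∑ k ∈ Finset.range m, (1 / 4) ^ k := by
        rw [Finset.mul_sum]; exact Finset.sum_congr rfl fun k _ => by rw [pow_succ]; ring
    _ ≤ ρ / 4 * (4 / 3) := by gcongr; exact geom_quarter _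
    _ < ρ := by linarith

/-- The truncated logarithm acts as a derivation up to an exponentially small error. -/
theorem dop_chain [CompleteSpace F] {f : E → E} {g : E → F} {x : E} {ρ δ M : ℝ} (hρ : 0 < ρ)
    (hδ : 0 ≤ δ) {m : ℕ} (hm1 : 1 ≤ m) (hm : 240 * m * δ ≤ ρ)
    (hf : DifferentiableOn ℂ f (ball x ρ)) (hfb : ∀ z ∈ ball x ρ, ‖f z - z‖ ≤ δ)
    (hg : DifferentiableOn ℂ g (ball x ρ)) (hgb : ∀ z ∈ ball x ρ, ‖g z‖ ≤ M) :
    ‖dop f m g x - deriv (fun t => g (interp f m (fun y => y) x t)) 0‖ ≤ M / 3 ^ m := by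
  set P := interp f m (fun y => y) x with hP
  have hM : 0 ≤ M := (norm_nonneg _).trans (hgb x (mem_ball_self hρ))
  have hPm : ∀ t, ‖t‖ ≤ 4 * m → P t ∈ ball x ρ := fun t ht =>
    interp_id_mem hρ hδ hm hf hfb ht
  have hd : ∀ t, ‖t‖ ≤ 4 * m → DifferentiableAt ℂ (fun t => g (P t)) t := fun t ht =>
    (hg.differentiableAt (isOpen_ball.mem_nhds (hPm t ht))).comp t
      (interp_differentiable _ _ _ _ t)
  have h := zeros_deriv_bound (G := fun t => interp f m g x t - g (P t)) hm1
    (M := M * (4 / 3) + M) (fun t ht => by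
      rw [mem_closedBall_zero_iff] at ht
      exact ((interp_differentiable f m g x t).sub (hd t ht)).differentiableWithinAt)
    (fun t ht => by
      refine (norm_sub_le _ _).trans (add_le_add ?_ (hgb _ (hPm t ht)))
      exact interp_norm_le hρ hδ hm hf hfb hg hgb ht)
    (fun j hj => by
      simp only [hP]
      rw [interp_nat _ _ _ (by omega), interp_nat _ _ _ (by omega), sub_self])
  have h0 : ‖(0 : ℂ)‖ ≤ 4 * m := by simp
  have h2 := (interp_hasDerivAt f m g x).sub (hd 0 h0).hasDerivAt
  have h3 : deriv (fun t => interp f m g x t - g (P t)) 0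
      = dop f m g x - deriv (fun t => g (P t)) 0 := h2.deriv
  rw [h3] at h
  refine h.trans ?_
  rw [div_le_div_iff₀ (by positivity) (by positivity), pow_succ]
  have : (0 : ℝ) ≤ M * 3 ^ m := by positivity
  nlinarith

end NearIdentity


section Energy

open Metric Set

theorem kdiff_postcomp {E F G : Type*} [NormedAddCommGroup E] [NormedSpace ℂ E]
    [NormedAddCommGroup F] [NormedSpace ℂ F] [NormedAddCommGroup G] [NormedSpace ℂ G]
    (f : E → E) (g : E → F) (l : F →ₗ[ℂ] G) (k : ℕ) (x : E) :
    (kdiff G f ^ k) (fun y => l (g y)) x = l ((kdiff F f ^ k) g x) := by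
  induction k generalizing x with
  | zero => simp
  | succ k ih => rw [kdiff_succ, kdiff_succ, ih, ih, map_sub]

theorem kdiff_tail {E F : Type*} [NormedAddCommGroup E] [NormedSpace ℂ E]
    [NormedAddCommGroup F] [NormedSpace ℂ F]
    {f : E → E} {g : E → F} {x : E} {ρ δ M : ℝ} (hρ : 0 < ρ)
    (hδ : 0 ≤ δ) {m : ℕ} (hm1 : 1 ≤ m) (hm : 240 * m * δ ≤ ρ)
    (hf : DifferentiableOn ℂ f (ball x ρ)) (hfb : ∀ z ∈ ball x ρ, ‖f z - z‖ ≤ δ)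
    (hg : DifferentiableOn ℂ g (ball x ρ)) (hgb : ∀ z ∈ ball x ρ, ‖g z‖ ≤ M) :
    ‖(∑ k ∈ Finset.range m, ((-1) ^ k / (k + 1 : ℂ)) • (kdiff F f ^ k) g x) - g x‖ ≤ M / m := by
  obtain ⟨m, rfl⟩ : ∃ m', m = m' + 1 := ⟨m - 1, by omega⟩
  have hM : 0 ≤ M := (norm_nonneg _).trans (hgb x (mem_ball_self hρ))
  rw [Finset.sum_range_succ']
  have h0 : ((-1) ^ 0 / ((0 : ℕ) + 1 : ℂ)) • (kdiff F f ^ 0) g x = g x := by simp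
  rw [h0, add_sub_cancel_right]
  set N : ℕ := m + 1 with hN
  have hNpos : (0 : ℝ) < N := by positivity
  calc _ ≤ ∑ k ∈ Finset.range m, M / N * (1 / 4) ^ (k + 1) := by
        refine norm_sum_le_of_le _ fun k hk => ?_
        have hk' : k + 1 ≤ N := by have := Finset.mem_range.1 hk; omega
        have h1 := kdiff_bound hρ hδ hm hf hfb hg hgb (k + 1) hk'
        have hc : ‖((-1) ^ (k + 1) / (((k + 1 : ℕ) : ℂ) + 1))‖ ≤ 1 := by
          rw [norm_div, norm_pow, norm_neg, norm_one, one_pow]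
          have : ((((k + 1 : ℕ) : ℂ) + 1)) = ((k + 2 : ℕ) : ℂ) := by push_cast; ring
          rw [this, Complex.norm_natCast]
          have h2 : (1 : ℝ) ≤ (k + 2 : ℕ) := by push_cast; linarith [Nat.cast_nonneg (α := ℝ) k]
          exact (div_le_one (by linarith)).2 h2
        have hfac : ((k + 1).factorial : ℝ) ≤ (N : ℝ) ^ k := by
          have : (k + 1).factorial ≤ N ^ k := by
            calc (k + 1).factorial ≤ (k + 1) ^ k := by
                  have := Nat.factorial_le_pow k
                  rw [Nat.factorial_succ]
                  clear * -
                  induction k with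
                  | zero => simp
                  | succ k ih =>
                    rw [Nat.factorial_succ]
                    calc (k + 1 + 1) * ((k + 1) * k.factorial) ≤ (k + 1 + 1) * (k + 1) ^ k := by gcongr
                      _ ≤ (k + 1 + 1) * (k + 1 + 1) ^ k := by gcongr; omega
                      _ = _ := by ring
              _ ≤ N ^ k := by gcongr
          exact_mod_cast this
        have hlow : (N : ℝ) ≤ (5 * N : ℝ) ^ (k + 1) / ((k + 1).factorial : ℝ) := by
          rw [le_div_iff₀ (by positivity)]
          calc (N : ℝ) * (k + 1).factorial ≤ N * N ^ k := by gcongr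
            _ = (1 * N : ℝ) ^ (k + 1) := by ring
            _ ≤ _ := by gcongr; norm_num
        rw [norm_smul]
        calc _ ≤ 1 * ‖(kdiff F f ^ (k + 1)) g x‖ := by gcongr
          _ ≤ _ := by
            rw [one_mul, div_mul_eq_mul_div, le_div_iff₀ hNpos, mul_comm]
            refine le_trans ?_ h1
            gcongr
    _ = M / N / 4 * ∑ k ∈ Finset.range m, (1 / 4) ^ k := by
        rw [Finset.mul_sum]; exact Finset.sum_congr rfl fun k _ => by rw [pow_succ]; ring
    _ ≤ M / N / 4 * (4 / 3) := by gcongr; exact geom_quarter _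
    _ ≤ M / N := by
        have : 0 ≤ M / N := by positivity
        linarith

/-- The primitive part of the energy. -/
noncomputable def bop {E : Type*} [NormedAddCommGroup E] [NormedSpace ℂ E]
    (f : E → E) (m : ℕ) (A : E → ℂ) (x : E) : ℂ :=
  ∑ k ∈ Finset.range m, ((-1) ^ k / (k + 1 : ℂ)) • (kdiff ℂ f ^ k) A x

theorem bop_step {E : Type*} [NormedAddCommGroup E] [NormedSpace ℂ E]
    (f : E → E) (m : ℕ) (A : E → ℂ) (x : E) :
    bop f m A (f x) - bop f m A x = dop f m A x := by
  rw [bop, bop, dop, ← Finset.sum_sub_distrib]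
  refine Finset.sum_congr rfl fun k _ => ?_
  rw [kdiff_succ, smul_sub]

variable {d : ℕ}

/-- Near-integral of a near-identity exact symplectic map with primitive `A`. -/
noncomputable def energy (f : (Fin d → ℂ) × (Fin d → ℂ) → (Fin d → ℂ) × (Fin d → ℂ)) (m : ℕ)
    (A : (Fin d → ℂ) × (Fin d → ℂ) → ℂ) (x : (Fin d → ℂ) × (Fin d → ℂ)) : ℂ :=
  ∑ i, x.1 i * dop f m (fun z => z.2 i) x - bop f m A x

theorem norm_snd_apply_le (z : (Fin d → ℂ) × (Fin d → ℂ)) (i : Fin d) : ‖z.2 i‖ ≤ ‖z‖ :=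
  (norm_le_pi_norm z.2 i).trans (norm_snd_le z)

theorem norm_fst_apply_le (z : (Fin d → ℂ) × (Fin d → ℂ)) (i : Fin d) : ‖z.1 i‖ ≤ ‖z‖ :=
  (norm_le_pi_norm z.1 i).trans (norm_fst_le z)

theorem dop_shift {E F : Type*} [NormedAddCommGroup E] [NormedSpace ℂ E]
    [NormedAddCommGroup F] [NormedSpace ℂ F] (f : E → E) (m : ℕ) (g : E → F) (x : E) :
    dop f m g (f x) = dop f m (fun y => g (f y) - g y) x + dop f m g x := by
  rw [dop, dop, dop, ← Finset.sum_add_distrib]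
  refine Finset.sum_congr rfl fun k _ => ?_
  rw [kdiff_comm, ← smul_add]
  congr 1
  have : (fun y => g (f y)) = (fun y => g (f y) - g y) + g := by funext y; simp
  conv_lhs => rw [this, map_add]
  rfl

theorem energy_step {f : (Fin d → ℂ) × (Fin d → ℂ) → (Fin d → ℂ) × (Fin d → ℂ)}
    {A : (Fin d → ℂ) × (Fin d → ℂ) → ℂ} {x : (Fin d → ℂ) × (Fin d → ℂ)} {ρ δ M Λ : ℝ}
    (hρ : 0 < ρ) (hδ : 0 ≤ δ) {m : ℕ} (hm1 : 1 ≤ m) (hm : 240 * m * δ ≤ ρ)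
    (hf : DifferentiableOn ℂ f (ball x ρ)) (hfb : ∀ z ∈ ball x ρ, ‖f z - z‖ ≤ δ)
    (hA : DifferentiableOn ℂ A (ball x ρ)) (hAb : ∀ z ∈ ball x ρ, ‖A z‖ ≤ M)
    (hΛ : ∀ i, ‖(f x).1 i‖ ≤ Λ)
    (hex : ∀ P : ℂ → (Fin d → ℂ) × (Fin d → ℂ), DifferentiableAt ℂ P 0 → P 0 = x →
      deriv (fun t => A (P t)) 0 = ∑ i, ((f x).1 i * deriv (fun t => (f (P t)).2 i) 0
        - x.1 i * deriv (fun t => (P t).2 i) 0)) :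
    ‖energy f m A (f x) - energy f m A x‖ ≤ (d * Λ * δ + M) / 3 ^ m := by
  set P := interp f m (fun y => y) x with hP
  have hPd : DifferentiableAt ℂ P 0 := interp_differentiable _ _ _ _ 0
  have hP0 : P 0 = x := interp_zero _ _ _ _
  have hE := hex P hPd hP0
  have hD : ∀ i, deriv (fun t => (P t).2 i) 0 = dop f m (fun z => z.2 i) x := by
    intro i
    have h1 : (fun t => (P t).2 i) = interp f m (fun z => z.2 i) x := by
      funext t
      simp only [hP, interp]
      rw [Prod.snd_sum, Finset.sum_apply]
      refine Finset.sum_congr rfl fun k _ => ?_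
      have := kdiff_postcomp f (fun y => y)
        ((LinearMap.proj i).comp (LinearMap.snd ℂ (Fin d → ℂ) (Fin d → ℂ)) :
          (Fin d → ℂ) × (Fin d → ℂ) →ₗ[ℂ] ℂ) k x
      simp only [LinearMap.comp_apply, LinearMap.snd_apply, LinearMap.proj_apply] at this
      rw [this]
      simp
    rw [h1]
    exact (interp_hasDerivAt _ _ _ _).deriv
  have hx := mem_ball_self (x := x) hρ
  have hfP : DifferentiableAt ℂ (fun t => f (P t)) 0 := by
    refine DifferentiableAt.comp (g := f) 0 ?_ hPd
    rw [hP0]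
    exact hf.differentiableAt (isOpen_ball.mem_nhds hx)
  have hfPi : ∀ i, DifferentiableAt ℂ (fun t => (f (P t)).2 i) 0 := fun i =>
    differentiableAt_pi.1 hfP.snd i
  have hPi : ∀ i, DifferentiableAt ℂ (fun t => (P t).2 i) 0 := fun i =>
    differentiableAt_pi.1 hPd.snd i
  have hc1 : ∀ i, ‖dop f m (fun y => (f y).2 i - y.2 i) x -
      deriv (fun t => (f (P t)).2 i - (P t).2 i) 0‖ ≤ δ / 3 ^ m := by
    intro i
    refine dop_chain (g := fun y => (f y).2 i - y.2 i) hρ hδ hm1 hm hf hfb ?_ ?_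
    · have h1 : DifferentiableOn ℂ (fun y => (f y).2 i) (ball x ρ) :=
        differentiableOn_pi.1 hf.snd i
      exact h1.sub (by fun_prop)
    · intro z hz
      exact (norm_snd_apply_le (f z - z) i).trans (hfb z hz)
  have hc2 : ‖dop f m A x - deriv (fun t => A (P t)) 0‖ ≤ M / 3 ^ m :=
    dop_chain hρ hδ hm1 hm hf hfb hA hAb
  have hid : energy f m A (f x) - energy f m A x =
      ∑ i, (f x).1 i * (dop f m (fun y => (f y).2 i - y.2 i) x -
        deriv (fun t => (f (P t)).2 i - (P t).2 i) 0)
      - (dop f m A x - deriv (fun t => A (P t)) 0) := by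
    have hs : energy f m A (f x) - energy f m A x =
      ∑ i, ((f x).1 i * dop f m (fun z => z.2 i) (f x) - x.1 i * dop f m (fun z => z.2 i) x)
        - dop f m A x := by
      rw [← bop_step, Finset.sum_sub_distrib]
      simp only [energy]
      ring
    rw [hs, hE]
    rw [sub_sub_eq_add_sub, sub_left_inj, ← Finset.sum_add_distrib]
    refine Finset.sum_congr rfl fun i _ => ?_
    rw [dop_shift, deriv_fun_sub (hfPi i) (hPi i), hD]
    ring
  rw [hid]
  refine (norm_sub_le _ _).trans ?_
  rw [add_div]
  refine add_le_add ?_ hc2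
  calc _ ≤ ∑ i : Fin d, Λ * (δ / 3 ^ m) := by
        refine norm_sum_le_of_le _ fun i _ => ?_
        rw [norm_mul]
        have : 0 ≤ Λ := (norm_nonneg _).trans (hΛ i)
        exact mul_le_mul (hΛ i) (hc1 i) (norm_nonneg _) this
    _ = _ := by simp; ring

theorem energy_approx {f : (Fin d → ℂ) × (Fin d → ℂ) → (Fin d → ℂ) × (Fin d → ℂ)}
    {A : (Fin d → ℂ) × (Fin d → ℂ) → ℂ} {x : (Fin d → ℂ) × (Fin d → ℂ)} {ρ δ M Λ : ℝ}
    (hρ : 0 < ρ) (hδ : 0 ≤ δ) {m : ℕ} (hm1 : 1 ≤ m) (hm : 240 * m * δ ≤ ρ)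
    (hf : DifferentiableOn ℂ f (ball x ρ)) (hfb : ∀ z ∈ ball x ρ, ‖f z - z‖ ≤ δ)
    (hA : DifferentiableOn ℂ A (ball x ρ)) (hAb : ∀ z ∈ ball x ρ, ‖A z‖ ≤ M)
    (hΛ : ∀ i, ‖x.1 i‖ ≤ Λ) :
    ‖energy f m A x - (∑ i, x.1 i * ((f x).2 i - x.2 i) - A x)‖ ≤ (d * Λ * δ + M) / m := by
  have hb := kdiff_tail hρ hδ hm1 hm hf hfb hA hAb
  have hdd : ∀ i, ‖dop f m (fun z => z.2 i) x - ((f x).2 i - x.2 i)‖ ≤ δ / m := by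
    intro i
    have h := kdiff_tail (g := fun y => (f y).2 i - y.2 i) (M := δ) hρ hδ hm1 hm hf hfb ?_ ?_
    · have e : dop f m (fun z => z.2 i) x = ∑ k ∈ Finset.range m,
          ((-1) ^ k / (k + 1 : ℂ)) • (kdiff ℂ f ^ k) (fun y => (f y).2 i - y.2 i) x := by
        rw [dop]
        refine Finset.sum_congr rfl fun k _ => ?_
        rw [pow_succ, Module.End.mul_apply]
        rfl
      rw [e]
      exact h
    · have h1 : DifferentiableOn ℂ (fun y => (f y).2 i) (ball x ρ) :=
        differentiableOn_pi.1 hf.snd i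
      exact h1.sub (by fun_prop)
    · intro z hz
      exact (norm_snd_apply_le (f z - z) i).trans (hfb z hz)
  have e : energy f m A x - (∑ i, x.1 i * ((f x).2 i - x.2 i) - A x) =
      ∑ i, x.1 i * (dop f m (fun z => z.2 i) x - ((f x).2 i - x.2 i))
        - (bop f m A x - A x) := by
    simp only [energy, mul_sub, Finset.sum_sub_distrib]
    ring
  rw [e]
  refine (norm_sub_le _ _).trans ?_
  rw [add_div]
  refine add_le_add ?_ hb
  calc _ ≤ ∑ i : Fin d, Λ * (δ / m) := by
        refine norm_sum_le_of_le _ fun i _ => ?_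
        rw [norm_mul]
        have : 0 ≤ Λ := (norm_nonneg _).trans (hΛ i)
        exact mul_le_mul (hΛ i) (hdd i) (norm_nonneg _) this
    _ = _ := by simp; ring

end Energy


section GenMap

open Metric Set

variable {d : ℕ}

/-- Complex neighbourhoods of the real phase space. -/
def Vdom (d : ℕ) (L t : ℝ) : Set (CPhase d) := {w | ‖w.1‖ < L + t ∧ ∀ i, |(w.2 i).im| < t}

theorem Vdom_isOpen (L t : ℝ) : IsOpen (Vdom d L t) := by
  have h1 : IsOpen {w : CPhase d | ‖w.1‖ < L + t} :=
    isOpen_lt (by fun_prop) continuous_const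
  have h2 : IsOpen {w : CPhase d | ∀ i, |(w.2 i).im| < t} := by
    simp only [Set.ofPred_forall]
    refine isOpen_iInter_of_finite fun i => ?_
    exact isOpen_lt (by fun_prop) continuous_const
  exact h1.inter h2

theorem Vdom_convex (L t : ℝ) : Convex ℝ (Vdom d L t) := by
  intro x hx y hy a b ha hb hab
  refine ⟨?_, fun i => ?_⟩
  · have h := (convex_ball (0 : Fin d → ℂ) (L + t)) (x := x.1) (by simpa using hx.1)
      (y := y.1) (by simpa using hy.1) ha hb hab
    simpa using h
  · have h1 := abs_lt.1 (hx.2 i)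
    have h2 := abs_lt.1 (hy.2 i)
    have e : ((a • x + b • y).2 i).im = a * (x.2 i).im + b * (y.2 i).im := by simp
    rw [e]
    have h := (convex_Ioo (-t) t) (x := (x.2 i).im) h1 (y := (y.2 i).im) h2 ha hb hab
    exact abs_lt.2 h

theorem Vdom_add {L t η : ℝ} {w z : CPhase d} (hw : w ∈ Vdom d L t) (h : ‖z - w‖ ≤ η) :
    z ∈ Vdom d L (t + η) := by
  refine ⟨?_, fun i => ?_⟩
  · have h1 : ‖z.1 - w.1‖ ≤ η := (norm_fst_le (z - w)).trans h
    have h2 := norm_sub_norm_le z.1 w.1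
    have := hw.1
    linarith
  · have h1 : ‖z.2 i - w.2 i‖ ≤ η := (norm_snd_apply_le (z - w) i).trans h
    have h2 := (Complex.abs_im_le_norm (z.2 i - w.2 i)).trans h1
    rw [Complex.sub_im] at h2
    have := hw.2 i
    rw [abs_lt] at *
    rw [abs_le] at h2
    constructor <;> linarith [h2.1, h2.2, this.1, this.2]

theorem Vdom_mono {L t t' : ℝ} (h : t ≤ t') : Vdom d L t ⊆ Vdom d L t' := fun w hw =>
  ⟨by have := hw.1; linarith, fun i => (hw.2 i).trans_le h⟩

theorem Vdom_ball {L t η : ℝ} {w : CPhase d} (hw : w ∈ Vdom d L t) :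
    ball w η ⊆ Vdom d L (t + η) := fun z hz =>
  Vdom_add hw (by rw [mem_ball, dist_eq_norm] at hz; exact hz.le)

theorem Vdom_shift {L t : ℝ} {w : CPhase d} (hw : w ∈ Vdom d L t) {c : Fin d → ℂ}
    (hc : ∀ i, (c i).im = 0) (j : ℂ) (hj : j.im = 0) :
    w + (0, j • c) ∈ Vdom d L t := by
  refine ⟨by simpa using hw.1, fun i => ?_⟩
  have : ((w + (0, j • c)).2 i).im = (w.2 i).im := by simp [hc, hj]
  rw [this]
  exact hw.2 i

/-- Partial gradient in the angles. -/
noncomputable def gradPhi (K : CPhase d → ℂ) (w : CPhase d) : Fin d → ℂ :=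
  fun i => fderiv ℂ K w (0, Pi.single i 1)

/-- Partial gradient in the actions. -/
noncomputable def gradJ (K : CPhase d → ℂ) (w : CPhase d) : Fin d → ℂ :=
  fun i => fderiv ℂ K w (Pi.single i 1, 0)

theorem norm_single_one (i : Fin d) : ‖(Pi.single i 1 : Fin d → ℂ)‖ ≤ 1 := by
  rw [pi_norm_le_iff_of_nonneg zero_le_one]
  intro j
  by_cases h : j = i
  · subst h; simp
  · simp [Pi.single_eq_of_ne h]

theorem norm_gradPhi_le (K : CPhase d → ℂ) (w : CPhase d) : ‖gradPhi K w‖ ≤ ‖fderiv ℂ K w‖ := by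
  rw [pi_norm_le_iff_of_nonneg (norm_nonneg _)]
  intro i
  refine ((fderiv ℂ K w).le_opNorm _).trans ?_
  have : ‖((0, Pi.single i 1) : CPhase d)‖ ≤ 1 := by
    rw [Prod.norm_def]; simpa using norm_single_one i
  nlinarith [norm_nonneg (fderiv ℂ K w)]

theorem norm_gradJ_le (K : CPhase d → ℂ) (w : CPhase d) : ‖gradJ K w‖ ≤ ‖fderiv ℂ K w‖ := by
  rw [pi_norm_le_iff_of_nonneg (norm_nonneg _)]
  intro i
  refine ((fderiv ℂ K w).le_opNorm _).trans ?_
  have : ‖((Pi.single i 1, 0) : CPhase d)‖ ≤ 1 := by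
    rw [Prod.norm_def]; simpa using norm_single_one i
  nlinarith [norm_nonneg (fderiv ℂ K w)]

theorem fderiv_decomp (K : CPhase d → ℂ) (w v : CPhase d) :
    fderiv ℂ K w v = ∑ i, v.1 i * gradJ K w i + ∑ i, v.2 i * gradPhi K w i := by
  have h : v = ∑ i, v.1 i • ((Pi.single i 1, 0) : CPhase d)
      + ∑ i, v.2 i • ((0, Pi.single i 1) : CPhase d) := by
    ext j
    · simp [Prod.fst_sum, Finset.sum_apply, Pi.single_apply]
    · simp [Prod.snd_sum, Finset.sum_apply, Pi.single_apply]
  conv_lhs => rw [h]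
  simp only [map_add, map_sum, map_smul, smul_eq_mul]
  rfl

/-- Hypotheses on the scaled generating function. -/
structure GenHyp (d : ℕ) (L τ M μ : ℝ) (K : CPhase d → ℂ) : Prop where
  τ_pos : 0 < τ
  L_nonneg : 0 ≤ L
  μ_pos : 0 < μ
  M_nonneg : 0 ≤ M
  an : AnalyticOnNhd ℂ K (Vdom d L (4 * τ))
  bd : ∀ w ∈ Vdom d L (4 * τ), ‖K w‖ ≤ M
  small1 : μ * (2 * M / τ) ≤ τ / 2
  small2 : μ * (4 * M / τ ^ 2) ≤ 1 / 2

namespace GenHyp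

variable {L τ M μ : ℝ} {K : CPhase d → ℂ}

theorem fderiv_bd (h : GenHyp d L τ M μ K) {w : CPhase d} (hw : w ∈ Vdom d L (3 * τ)) :
    ‖fderiv ℂ K w‖ ≤ 2 * M / τ := by
  have hb : ball w τ ⊆ Vdom d L (4 * τ) := by
    have := Vdom_ball (η := τ) hw
    rwa [show 3 * τ + τ = 4 * τ by ring] at this
  exact ni_fderiv h.τ_pos (h.an.differentiableOn.mono hb) fun y hy => h.bd y (hb hy)

theorem gradPhi_bd (h : GenHyp d L τ M μ K) {w : CPhase d} (hw : w ∈ Vdom d L (3 * τ)) :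
    ‖gradPhi K w‖ ≤ 2 * M / τ := (norm_gradPhi_le K w).trans (h.fderiv_bd hw)

theorem gradJ_bd (h : GenHyp d L τ M μ K) {w : CPhase d} (hw : w ∈ Vdom d L (3 * τ)) :
    ‖gradJ K w‖ ≤ 2 * M / τ := (norm_gradJ_le K w).trans (h.fderiv_bd hw)

theorem gradPhi_diff (h : GenHyp d L τ M μ K) : DifferentiableOn ℂ (gradPhi K) (Vdom d L (4 * τ)) := by
  unfold gradPhi
  refine differentiableOn_pi.2 fun i => ?_
  exact h.an.fderiv.differentiableOn.clm_apply (differentiableOn_const _)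

theorem gradJ_diff (h : GenHyp d L τ M μ K) : DifferentiableOn ℂ (gradJ K) (Vdom d L (4 * τ)) := by
  unfold gradJ
  refine differentiableOn_pi.2 fun i => ?_
  exact h.an.fderiv.differentiableOn.clm_apply (differentiableOn_const _)

/-- The perturbation of the identity to be inverted. -/
noncomputable def psi (μ : ℝ) (K : CPhase d → ℂ) (w : CPhase d) : CPhase d :=
  ((μ : ℂ) • gradPhi K w, 0)

theorem psi_diff (h : GenHyp d L τ M μ K) : DifferentiableOn ℂ (psi μ K) (Vdom d L (4 * τ)) := by
  have h1 : DifferentiableOn ℂ (fun w => (μ : ℂ) • gradPhi K w) (Vdom d L (4 * τ)) :=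
    h.gradPhi_diff.const_smul (μ : ℂ)
  exact h1.prodMk (differentiableOn_const (0 : Fin d → ℂ))

theorem psi_bd (h : GenHyp d L τ M μ K) {w : CPhase d} (hw : w ∈ Vdom d L (3 * τ)) :
    ‖psi μ K w‖ ≤ μ * (2 * M / τ) := by
  have h1 := h.gradPhi_bd hw
  have h2 : ‖psi μ K w‖ = μ * ‖gradPhi K w‖ := by
    rw [psi, Prod.norm_def, norm_smul]
    simp [abs_of_pos h.μ_pos, mul_nonneg h.μ_pos.le]
  rw [h2]
  have := h.μ_pos.le
  gcongr

theorem psi_fderiv (h : GenHyp d L τ M μ K) {w : CPhase d} (hw : w ∈ Vdom d L (2 * τ)) :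
    ‖fderiv ℂ (psi μ K) w‖ ≤ 1 / 2 := by
  have hb : ball w τ ⊆ Vdom d L (3 * τ) := by
    have := Vdom_ball (η := τ) hw
    rwa [show 2 * τ + τ = 3 * τ by ring] at this
  have hτ := h.τ_pos
  have h1 := ni_fderiv h.τ_pos (h.psi_diff.mono (hb.trans (Vdom_mono (by linarith))))
    fun y hy => h.psi_bd (hb hy)
  refine h1.trans (le_trans (le_of_eq ?_) h.small2)
  field_simp
  ring

theorem psi_lip (h : GenHyp d L τ M μ K) {w w' : CPhase d} (hw : w ∈ Vdom d L (2 * τ))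
    (hw' : w' ∈ Vdom d L (2 * τ)) : ‖psi μ K w - psi μ K w'‖ ≤ 1 / 2 * ‖w - w'‖ := by
  have hτ := h.τ_pos
  refine (Vdom_convex L (2 * τ)).norm_image_sub_le_of_norm_fderiv_le (𝕜 := ℂ) (fun z hz => ?_)
    (fun z hz => h.psi_fderiv hz) hw' hw
  exact h.psi_diff.differentiableAt ((Vdom_isOpen L _).mem_nhds (Vdom_mono (by linarith) hz))

theorem inv_exists (h : GenHyp d L τ M μ K) {z : CPhase d} (hz : z ∈ Vdom d L τ) :
    ∃ w ∈ Vdom d L (2 * τ), w + psi μ K w = z := by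
  have hτ := h.τ_pos
  set s := closedBall z (μ * (2 * M / τ)) with hs
  have hr0 : 0 ≤ μ * (2 * M / τ) := by
    have := h.μ_pos.le; have := h.M_nonneg; positivity
  have hsub : s ⊆ Vdom d L (2 * τ) := by
    intro w hw
    rw [hs, mem_closedBall, dist_eq_norm] at hw
    have := Vdom_add hz (hw.trans h.small1)
    exact Vdom_mono (by linarith) this
  set T : CPhase d → CPhase d := fun w => z - psi μ K w with hT
  have hmaps : MapsTo T s s := by
    intro w hw
    rw [hs, mem_closedBall, dist_eq_norm]
    simp only [hT, sub_sub_cancel_left, norm_neg]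
    exact h.psi_bd (Vdom_mono (by linarith) (hsub hw))
  have hcon : ContractingWith (1 / 2) (hmaps.restrict T s s) := by
    refine ⟨by norm_num, LipschitzWith.of_dist_le_mul fun a b => ?_⟩
    rw [Subtype.dist_eq, Subtype.dist_eq, dist_eq_norm, dist_eq_norm]
    have := h.psi_lip (hsub a.2) (hsub b.2)
    simp only [hT, MapsTo.val_restrict_apply, sub_sub_sub_cancel_left]
    rw [norm_sub_rev]
    simpa using this
  obtain ⟨w, hw, hfix, -⟩ := hcon.exists_fixedPoint' (isClosed_closedBall.isComplete) hmaps
    (mem_closedBall_self hr0) (edist_ne_top z (T z))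
  refine ⟨w, hsub hw, ?_⟩
  have : z - psi μ K w = w := hfix
  exact (sub_eq_iff_eq_add.1 this).symm

open Classical in
/-- The inverse of `w ↦ w + psi w`. -/
noncomputable def ginv (L τ μ : ℝ) (K : CPhase d → ℂ) (z : CPhase d) : CPhase d :=
  if h : ∃ w ∈ Vdom d L (2 * τ), w + psi μ K w = z then h.choose else z

theorem ginv_mem (h : GenHyp d L τ M μ K) {z : CPhase d} (hz : z ∈ Vdom d L τ) :
    ginv L τ μ K z ∈ Vdom d L (2 * τ) := by
  rw [ginv, dif_pos (h.inv_exists hz)]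
  exact (h.inv_exists hz).choose_spec.1

theorem ginv_eq (h : GenHyp d L τ M μ K) {z : CPhase d} (hz : z ∈ Vdom d L τ) :
    ginv L τ μ K z + psi μ K (ginv L τ μ K z) = z := by
  rw [ginv, dif_pos (h.inv_exists hz)]
  exact (h.inv_exists hz).choose_spec.2

theorem inv_lip (h : GenHyp d L τ M μ K) {w w' : CPhase d} (hw : w ∈ Vdom d L (2 * τ))
    (hw' : w' ∈ Vdom d L (2 * τ)) :
    ‖w - w'‖ ≤ 2 * ‖(w + psi μ K w) - (w' + psi μ K w')‖ := by
  have h1 := h.psi_lip hw hw'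
  have e : w - w' = ((w + psi μ K w) - (w' + psi μ K w')) - (psi μ K w - psi μ K w') := by abel
  have h2 := norm_sub_le ((w + psi μ K w) - (w' + psi μ K w')) (psi μ K w - psi μ K w')
  rw [← e] at h2
  linarith

theorem ginv_unique (h : GenHyp d L τ M μ K) {z w : CPhase d} (hz : z ∈ Vdom d L τ)
    (hw : w ∈ Vdom d L (2 * τ)) (hwz : w + psi μ K w = z) : ginv L τ μ K z = w := by
  have h1 := h.inv_lip (h.ginv_mem hz) hw
  rw [h.ginv_eq hz, hwz, sub_self, norm_zero, mul_zero] at h1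
  exact sub_eq_zero.1 (norm_le_zero_iff.1 h1)

theorem ginv_snd (h : GenHyp d L τ M μ K) {z : CPhase d} (hz : z ∈ Vdom d L τ) :
    (ginv L τ μ K z).2 = z.2 := by
  have := congrArg Prod.snd (h.ginv_eq hz)
  simpa [psi] using this

theorem ginv_fst (h : GenHyp d L τ M μ K) {z : CPhase d} (hz : z ∈ Vdom d L τ) :
    (ginv L τ μ K z).1 + (μ : ℂ) • gradPhi K (ginv L τ μ K z) = z.1 := by
  have := congrArg Prod.fst (h.ginv_eq hz)
  simpa [psi] using this

theorem ginv_differentiableAt (h : GenHyp d L τ M μ K) {z : CPhase d} (hz : z ∈ Vdom d L τ) :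
    DifferentiableAt ℂ (ginv L τ μ K) z := by
  have hτ := h.τ_pos
  have hnhds : Vdom d L τ ∈ nhds z := (Vdom_isOpen L τ).mem_nhds hz
  set w := ginv L τ μ K z with hw
  have hwm := h.ginv_mem hz
  have hpsi : DifferentiableAt ℂ (psi μ K) w :=
    h.psi_diff.differentiableAt ((Vdom_isOpen L _).mem_nhds (Vdom_mono (by linarith) hwm))
  have hn : ‖-fderiv ℂ (psi μ K) w‖ < 1 := by
    rw [norm_neg]
    have := h.psi_fderiv hwm
    linarith
  set u : (CPhase d →L[ℂ] CPhase d)ˣ := Units.oneSub (-fderiv ℂ (psi μ K) w) hn with hu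
  set e : CPhase d ≃L[ℂ] CPhase d := ContinuousLinearEquiv.ofUnit u with he
  have hder : HasFDerivAt (fun w => w + psi μ K w) (e : CPhase d →L[ℂ] CPhase d) w := by
    refine ((hasFDerivAt_id w).add hpsi.hasFDerivAt).congr_fderiv ?_
    refine ContinuousLinearMap.ext fun v => ?_
    change _ = (u : CPhase d →L[ℂ] CPhase d) v
    rw [hu, Units.val_oneSub]
    simp
  refine (HasFDerivAt.of_local_left_inverse (f := fun w => w + psi μ K w) (f' := e) ?_ hder ?_).differentiableAt
  · rw [Metric.continuousAt_iff]
    intro ε hε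
    obtain ⟨δ, hδ, hball⟩ := Metric.mem_nhds_iff.1 hnhds
    refine ⟨min δ (ε / 2), by positivity, fun {y} hy => ?_⟩
    have hyV : y ∈ Vdom d L τ := hball (lt_of_lt_of_le hy (min_le_left _ _))
    have h1 := h.inv_lip (h.ginv_mem hyV) hwm
    rw [h.ginv_eq hyV, h.ginv_eq hz, ← dist_eq_norm, ← dist_eq_norm] at h1
    have := lt_of_lt_of_le hy (min_le_right _ _)
    linarith
  · filter_upwards [hnhds] with y hy
    exact h.ginv_eq hy

end GenHyp

end GenMap


section GenIter

open Metric Set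

variable {d : ℕ}

namespace GenHyp

variable {L τ M μ : ℝ} {K : CPhase d → ℂ}

/-- The complex map generated by `K` with frequency shift `c`. -/
noncomputable def gmap (L τ μ : ℝ) (K : CPhase d → ℂ) (c : Fin d → ℂ) (z : CPhase d) : CPhase d :=
  ((ginv L τ μ K z).1, z.2 + c + (μ : ℂ) • gradJ K (ginv L τ μ K z))

/-- Primitive of the generated map. -/
noncomputable def act (L τ μ : ℝ) (K : CPhase d → ℂ) (z : CPhase d) : ℂ :=
  ∑ i, (ginv L τ μ K z).1 i * ((μ : ℂ) * gradJ K (ginv L τ μ K z) i) - μ * K (ginv L τ μ K z)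

theorem gmap_step (h : GenHyp d L τ M μ K) (c : Fin d → ℂ) {z : CPhase d} (hz : z ∈ Vdom d L τ) :
    ‖gmap L τ μ K c z - z - (0, c)‖ ≤ μ * (2 * M / τ) := by
  have hτ := h.τ_pos
  have hμ := h.μ_pos
  have hw : ginv L τ μ K z ∈ Vdom d L (3 * τ) := Vdom_mono (by linarith) (h.ginv_mem hz)
  rw [Prod.norm_def, max_le_iff]
  constructor
  · have h1 := h.ginv_fst hz
    have e : (gmap L τ μ K c z - z - (0, c)).1 = -((μ : ℂ) • gradPhi K (ginv L τ μ K z)) := by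
      have : (gmap L τ μ K c z - z - (0, c)).1 = (ginv L τ μ K z).1 - z.1 := by simp [gmap]
      rw [this, sub_eq_iff_eq_add, ← h1]
      abel
    rw [e, norm_neg, norm_smul, Complex.norm_real, Real.norm_eq_abs, abs_of_pos hμ]
    exact mul_le_mul_of_nonneg_left (h.gradPhi_bd hw) hμ.le
  · have e : (gmap L τ μ K c z - z - (0, c)).2 = ((μ : ℂ) • gradJ K (ginv L τ μ K z)) := by
      simp only [gmap, Prod.snd_sub]
      abel
    rw [e, norm_smul, Complex.norm_real, Real.norm_eq_abs, abs_of_pos hμ]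
    exact mul_le_mul_of_nonneg_left (h.gradJ_bd hw) hμ.le

theorem ginv_nhds (h : GenHyp d L τ M μ K) {z : CPhase d} (hz : z ∈ Vdom d L τ) :
    Vdom d L (4 * τ) ∈ nhds (ginv L τ μ K z) :=
  (Vdom_isOpen L _).mem_nhds (Vdom_mono (by have := h.τ_pos; linarith) (h.ginv_mem hz))

theorem gradJ_ginv_diff (h : GenHyp d L τ M μ K) {z : CPhase d} (hz : z ∈ Vdom d L τ) :
    DifferentiableAt ℂ (fun z => gradJ K (ginv L τ μ K z)) z :=
  (h.gradJ_diff.differentiableAt (h.ginv_nhds hz)).comp z (h.ginv_differentiableAt hz)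

theorem K_ginv_diff (h : GenHyp d L τ M μ K) {z : CPhase d} (hz : z ∈ Vdom d L τ) :
    DifferentiableAt ℂ (fun z => K (ginv L τ μ K z)) z :=
  (h.an.differentiableOn.differentiableAt (h.ginv_nhds hz)).comp z (h.ginv_differentiableAt hz)

theorem gmap_diff (h : GenHyp d L τ M μ K) (c : Fin d → ℂ) {z : CPhase d}
    (hz : z ∈ Vdom d L τ) : DifferentiableAt ℂ (gmap L τ μ K c) z := by
  have h1 := h.gradJ_ginv_diff hz
  have h2 := h.ginv_differentiableAt hz
  unfold gmap
  fun_prop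

theorem act_diff (h : GenHyp d L τ M μ K) {z : CPhase d}
    (hz : z ∈ Vdom d L τ) : DifferentiableAt ℂ (act L τ μ K) z := by
  have h1 := h.gradJ_ginv_diff hz
  have h2 := h.ginv_differentiableAt hz
  have h3 := h.K_ginv_diff hz
  have h4 : ∀ i, DifferentiableAt ℂ (fun z => gradJ K (ginv L τ μ K z) i) z :=
    differentiableAt_pi.1 h1
  have h5 : ∀ i, DifferentiableAt ℂ (fun z => (ginv L τ μ K z).1 i) z :=
    differentiableAt_pi.1 h2.fst
  unfold act
  exact (DifferentiableAt.fun_sum fun i _ => (h5 i).mul ((h4 i).const_mul _)).sub (h3.const_mul _)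

theorem act_bd (h : GenHyp d L τ M μ K) {z : CPhase d} (hz : z ∈ Vdom d L τ) :
    ‖act L τ μ K z‖ ≤ μ * (d * (L + 2 * τ) * (2 * M / τ) + M) := by
  have hτ := h.τ_pos
  have hμ := h.μ_pos
  have hM := h.M_nonneg
  have hL := h.L_nonneg
  have hw := h.ginv_mem hz
  set w := ginv L τ μ K z with hwd
  have hw3 : w ∈ Vdom d L (3 * τ) := Vdom_mono (by linarith) hw
  have hw4 : w ∈ Vdom d L (4 * τ) := Vdom_mono (by linarith) hw
  have hg := h.gradJ_bd hw3
  have hK := h.bd w hw4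
  rw [act, ← hwd]
  refine (norm_sub_le _ _).trans ?_
  have h1 : ‖∑ i, w.1 i * ((μ : ℂ) * gradJ K w i)‖ ≤ ∑ i : Fin d, (L + 2 * τ) * (μ * (2 * M / τ)) := by
    refine norm_sum_le_of_le _ fun i _ => ?_
    rw [norm_mul, norm_mul, Complex.norm_real, Real.norm_eq_abs, abs_of_pos hμ]
    have a1 : ‖w.1 i‖ ≤ L + 2 * τ := (norm_le_pi_norm w.1 i).trans hw.1.le
    have a2 : ‖gradJ K w i‖ ≤ 2 * M / τ := (norm_le_pi_norm _ i).trans hg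
    gcongr
  have h2 : ‖(μ : ℂ) * K w‖ ≤ μ * M := by
    rw [norm_mul, Complex.norm_real, Real.norm_eq_abs, abs_of_pos hμ]
    gcongr
  rw [Finset.sum_const, Finset.card_univ, Fintype.card_fin, nsmul_eq_mul] at h1
  calc _ ≤ _ := add_le_add h1 h2
    _ = _ := by ring

theorem act_exact (h : GenHyp d L τ M μ K) (c : Fin d → ℂ) {z : CPhase d} (hz : z ∈ Vdom d L τ)
    (P : ℂ → CPhase d) (hP : DifferentiableAt ℂ P 0) (hP0 : P 0 = z) :
    deriv (fun t => act L τ μ K (P t)) 0 = ∑ i, ((gmap L τ μ K c z).1 i *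
      deriv (fun t => (gmap L τ μ K c (P t)).2 i) 0 - z.1 i * deriv (fun t => (P t).2 i) 0) := by
  subst hP0
  have hgi := (h.ginv_differentiableAt hz).comp (0 : ℂ) hP
  have hgJ := (h.gradJ_ginv_diff hz).comp (0 : ℂ) hP
  set W : ℂ → CPhase d := fun t => ginv L τ μ K (P t) with hW
  have hWd : DifferentiableAt ℂ W 0 := hgi
  have hGd : DifferentiableAt ℂ (fun t => gradJ K (W t)) 0 := hgJ
  have hW1 : ∀ i, HasDerivAt (fun t => (W t).1 i) ((deriv W 0).1 i) 0 := fun i =>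
    (hasDerivAt_pi.1 hWd.hasDerivAt.fst) i
  have hP2 : ∀ i, HasDerivAt (fun t => (P t).2 i) ((deriv P 0).2 i) 0 := fun i =>
    (hasDerivAt_pi.1 hP.hasDerivAt.snd) i
  have hG : ∀ i, HasDerivAt (fun t => gradJ K (W t) i) (deriv (fun t => gradJ K (W t)) 0 i) 0 :=
    fun i => (hasDerivAt_pi.1 hGd.hasDerivAt) i
  have hW2 : (deriv W 0).2 = (deriv P 0).2 := by
    have e : (fun t => (W t).2) =ᶠ[nhds 0] fun t => (P t).2 := by
      have := hP.continuousAt.preimage_mem_nhds ((Vdom_isOpen L τ).mem_nhds hz)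
      filter_upwards [this] with t ht
      exact h.ginv_snd ht
    have d1 : HasDerivAt (fun t => (W t).2) (deriv W 0).2 0 := hWd.hasDerivAt.snd
    have d2 : HasDerivAt (fun t => (P t).2) (deriv P 0).2 0 := hP.hasDerivAt.snd
    exact (HasDerivAt.congr_of_eventuallyEq d1 e.symm).unique d2
  have hK : HasDerivAt (fun t => K (W t)) (fderiv ℂ K (W 0) (deriv W 0)) 0 :=
    ((h.an.differentiableOn.differentiableAt (h.ginv_nhds hz)).hasFDerivAt).comp_hasDerivAt
      (0 : ℂ) hWd.hasDerivAt
  have hfst := h.ginv_fst hz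
  have hact : HasDerivAt (fun t => act L τ μ K (P t))
      (∑ i, ((deriv W 0).1 i * ((μ : ℂ) * gradJ K (W 0) i)
        + (W 0).1 i * ((μ : ℂ) * deriv (fun t => gradJ K (W t)) 0 i))
        - μ * (fderiv ℂ K (W 0) (deriv W 0))) 0 := by
    refine HasDerivAt.sub (HasDerivAt.fun_sum fun i _ => ?_) (hK.const_mul _)
    exact (hW1 i).mul ((hG i).const_mul _)
  have hgm : ∀ i, HasDerivAt (fun t => (gmap L τ μ K c (P t)).2 i)
      ((deriv P 0).2 i + (μ : ℂ) * deriv (fun t => gradJ K (W t)) 0 i) 0 := by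
    intro i
    have := ((hP2 i).add_const (c i)).add ((hG i).const_mul (μ : ℂ))
    exact this
  rw [hact.deriv]
  simp only [fun i => (hgm i).deriv, fun i => (hP2 i).deriv]
  rw [fderiv_decomp, hW2, mul_add, Finset.mul_sum, Finset.mul_sum, ← Finset.sum_add_distrib,
    ← Finset.sum_sub_distrib]
  refine Finset.sum_congr rfl fun i _ => ?_
  have h1 : (P 0).1 i = (W 0).1 i + μ * gradPhi K (W 0) i := by
    rw [← hfst]; rfl
  have h2 : (gmap L τ μ K c (P 0)).1 i = (W 0).1 i := rfl
  rw [h1, h2]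
  ring

theorem iter_bd (h : GenHyp d L τ M μ K) {c : Fin d → ℂ} (hc : ∀ i, (c i).im = 0)
    {z : CPhase d} (hz : z ∈ Vdom d L (τ / 2)) {n : ℕ} (hn : n * (μ * (2 * M / τ)) ≤ τ / 2)
    (j : ℕ) (hj : j ≤ n) :
    (gmap L τ μ K c)^[j] z ∈ Vdom d L τ ∧
      ‖(gmap L τ μ K c)^[j] z - z - (0, (j : ℂ) • c)‖ ≤ j * (μ * (2 * M / τ)) := by
  have hτ := h.τ_pos
  have hb : 0 ≤ μ * (2 * M / τ) := by
    have := h.μ_pos.le; have := h.M_nonneg; positivity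
  induction j with
  | zero => exact ⟨Vdom_mono (by linarith) hz, by simp⟩
  | succ j ih =>
    obtain ⟨i1, i2⟩ := ih (by omega)
    have hs := h.gmap_step c i1
    rw [← Function.iterate_succ_apply' (gmap L τ μ K c)] at hs
    have key : ‖(gmap L τ μ K c)^[j + 1] z - z - (0, ((j + 1 : ℕ) : ℂ) • c)‖
        ≤ (j + 1 : ℕ) * (μ * (2 * M / τ)) := by
      have e : (gmap L τ μ K c)^[j + 1] z - z - (0, ((j + 1 : ℕ) : ℂ) • c)
          = ((gmap L τ μ K c)^[j + 1] z - (gmap L τ μ K c)^[j] z - (0, c))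
            + ((gmap L τ μ K c)^[j] z - z - (0, (j : ℂ) • c)) := by
        have : ((0, ((j + 1 : ℕ) : ℂ) • c) : CPhase d) = (0, c) + (0, (j : ℂ) • c) := by
          rw [Prod.mk_add_mk, add_zero]; push_cast; rw [add_smul, one_smul, add_comm]
        rw [this]; abel
      rw [e]
      refine (norm_add_le _ _).trans ?_
      push_cast
      linarith
    refine ⟨?_, key⟩
    have hsh := Vdom_shift hz hc ((j + 1 : ℕ) : ℂ) (by simp)
    have hle : ((j + 1 : ℕ) : ℝ) * (μ * (2 * M / τ)) ≤ τ / 2 := by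
      refine le_trans ?_ hn
      gcongr
    have := Vdom_add (z := (gmap L τ μ K c)^[j + 1] z) (η := τ / 2) hsh (by
      rw [← sub_sub]; exact key.trans hle)
    rwa [add_halves] at this

theorem iter_diff (h : GenHyp d L τ M μ K) {c : Fin d → ℂ} (hc : ∀ i, (c i).im = 0)
    {z : CPhase d} (hz : z ∈ Vdom d L (τ / 2)) {n : ℕ} (hn : n * (μ * (2 * M / τ)) ≤ τ / 2)
    (j : ℕ) (hj : j ≤ n) : DifferentiableAt ℂ ((gmap L τ μ K c)^[j]) z := by
  induction j with
  | zero => simp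
  | succ j ih =>
    rw [Function.iterate_succ']
    exact (h.gmap_diff c (h.iter_bd hc hz hn j (by omega)).1).comp z (ih (by omega))

/-- The corrected `n`-th iterate, close to the identity. -/
noncomputable def fmap (L τ μ : ℝ) (K : CPhase d → ℂ) (c : Fin d → ℂ) (n : ℕ) (z : CPhase d) :
    CPhase d := (gmap L τ μ K c)^[n] z - (0, (n : ℂ) • c)

/-- Primitive of the `n`-th iterate. -/
noncomputable def fact (L τ μ : ℝ) (K : CPhase d → ℂ) (c : Fin d → ℂ) (n : ℕ) (z : CPhase d) :
    ℂ := ∑ j ∈ Finset.range n, act L τ μ K ((gmap L τ μ K c)^[j] z)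

theorem fmap_bd (h : GenHyp d L τ M μ K) {c : Fin d → ℂ} (hc : ∀ i, (c i).im = 0)
    {z : CPhase d} (hz : z ∈ Vdom d L (τ / 2)) {n : ℕ} (hn : n * (μ * (2 * M / τ)) ≤ τ / 2) :
    ‖fmap L τ μ K c n z - z‖ ≤ n * (μ * (2 * M / τ)) := by
  have := (h.iter_bd hc hz hn n le_rfl).2
  rwa [sub_right_comm] at this

theorem fmap_diff (h : GenHyp d L τ M μ K) {c : Fin d → ℂ} (hc : ∀ i, (c i).im = 0)
    {z : CPhase d} (hz : z ∈ Vdom d L (τ / 2)) {n : ℕ} (hn : n * (μ * (2 * M / τ)) ≤ τ / 2) :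
    DifferentiableAt ℂ (fmap L τ μ K c n) z :=
  (h.iter_diff hc hz hn n le_rfl).sub_const _

theorem fact_diff (h : GenHyp d L τ M μ K) {c : Fin d → ℂ} (hc : ∀ i, (c i).im = 0)
    {z : CPhase d} (hz : z ∈ Vdom d L (τ / 2)) {n : ℕ} (hn : n * (μ * (2 * M / τ)) ≤ τ / 2) :
    DifferentiableAt ℂ (fact L τ μ K c n) z := by
  unfold fact
  refine DifferentiableAt.fun_sum fun j hj => ?_
  have hj' : j ≤ n := (Finset.mem_range.1 hj).le
  exact (h.act_diff (h.iter_bd hc hz hn j hj').1).comp z (h.iter_diff hc hz hn j hj')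

theorem fact_bd (h : GenHyp d L τ M μ K) {c : Fin d → ℂ} (hc : ∀ i, (c i).im = 0)
    {z : CPhase d} (hz : z ∈ Vdom d L (τ / 2)) {n : ℕ} (hn : n * (μ * (2 * M / τ)) ≤ τ / 2) :
    ‖fact L τ μ K c n z‖ ≤ n * (μ * (d * (L + 2 * τ) * (2 * M / τ) + M)) := by
  unfold fact
  refine (norm_sum_le_of_le _ fun j hj =>
    h.act_bd (h.iter_bd hc hz hn j (Finset.mem_range.1 hj).le).1).trans ?_
  simp

theorem iter_exact (h : GenHyp d L τ M μ K) {c : Fin d → ℂ} (hc : ∀ i, (c i).im = 0)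
    {z : CPhase d} (hz : z ∈ Vdom d L (τ / 2)) {n : ℕ} (hn : n * (μ * (2 * M / τ)) ≤ τ / 2)
    (P : ℂ → CPhase d) (hP : DifferentiableAt ℂ P 0) (hP0 : P 0 = z) (k : ℕ) (hk : k ≤ n) :
    deriv (fun t => fact L τ μ K c k (P t)) 0 = ∑ i, (((gmap L τ μ K c)^[k] z).1 i *
      deriv (fun t => ((gmap L τ μ K c)^[k] (P t)).2 i) 0 - z.1 i * deriv (fun t => (P t).2 i) 0) := by
  induction k with
  | zero => simp [fact]
  | succ k ih =>
    have hk' : k ≤ n := by omega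
    have hzk := (h.iter_bd hc hz hn k hk').1
    have hit : DifferentiableAt ℂ ((gmap L τ μ K c)^[k]) (P 0) := by
      rw [hP0]; exact h.iter_diff hc hz hn k hk'
    have hQ : DifferentiableAt ℂ (fun t => (gmap L τ μ K c)^[k] (P t)) 0 := hit.comp (0 : ℂ) hP
    have hex := h.act_exact c hzk _ hQ (by rw [hP0])
    have hkb : (k : ℝ) * (μ * (2 * M / τ)) ≤ τ / 2 := by
      refine le_trans ?_ hn
      have := h.μ_pos.le; have := h.M_nonneg; have := h.τ_pos
      gcongr
    have d1 : DifferentiableAt ℂ (fun t => fact L τ μ K c k (P t)) 0 := by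
      have : DifferentiableAt ℂ (fact L τ μ K c k) (P 0) := by
        rw [hP0]; exact h.fact_diff hc hz hkb
      exact this.comp (0 : ℂ) hP
    have d2 : DifferentiableAt ℂ (fun t => act L τ μ K ((gmap L τ μ K c)^[k] (P t))) 0 := by
      have : DifferentiableAt ℂ (act L τ μ K) ((gmap L τ μ K c)^[k] (P 0)) := by
        rw [hP0]; exact h.act_diff hzk
      exact this.comp (0 : ℂ) hQ
    have e : (fun t => fact L τ μ K c (k + 1) (P t)) = fun t =>
        fact L τ μ K c k (P t) + act L τ μ K ((gmap L τ μ K c)^[k] (P t)) := by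
      funext t
      rw [fact, Finset.sum_range_succ]; rfl
    rw [e, deriv_fun_add d1 d2, ih hk', hex, ← Finset.sum_add_distrib]
    refine Finset.sum_congr rfl fun i _ => ?_
    simp only [Function.iterate_succ_apply']
    ring

theorem fmap_exact (h : GenHyp d L τ M μ K) {c : Fin d → ℂ} (hc : ∀ i, (c i).im = 0)
    {z : CPhase d} (hz : z ∈ Vdom d L (τ / 2)) {n : ℕ} (hn : n * (μ * (2 * M / τ)) ≤ τ / 2)
    (P : ℂ → CPhase d) (hP : DifferentiableAt ℂ P 0) (hP0 : P 0 = z) :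
    deriv (fun t => fact L τ μ K c n (P t)) 0 = ∑ i, ((fmap L τ μ K c n z).1 i *
      deriv (fun t => (fmap L τ μ K c n (P t)).2 i) 0 - z.1 i * deriv (fun t => (P t).2 i) 0) := by
  rw [h.iter_exact hc hz hn P hP hP0 n le_rfl]
  refine Finset.sum_congr rfl fun i _ => ?_
  have e1 : (fmap L τ μ K c n z).1 i = ((gmap L τ μ K c)^[n] z).1 i := by simp [fmap]
  have e2 : (fun t => (fmap L τ μ K c n (P t)).2 i) =
      fun t => ((gmap L τ μ K c)^[n] (P t)).2 i - ((n : ℂ) • c) i := by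
    funext t; simp [fmap]
  rw [e1, e2, deriv_sub_const]

theorem iter_snd (c : Fin d → ℂ) (z : CPhase d) (k : ℕ) :
    ((gmap L τ μ K c)^[k] z).2 = z.2 + (k : ℂ) • c + ∑ j ∈ Finset.range k,
      (μ : ℂ) • gradJ K (ginv L τ μ K ((gmap L τ μ K c)^[j] z)) := by
  induction k with
  | zero => simp
  | succ k ih =>
    rw [Function.iterate_succ_apply', Finset.sum_range_succ]
    conv_lhs => rw [gmap]
    simp only
    rw [ih]
    push_cast
    rw [add_smul, one_smul]
    abel

theorem fmap_formula (h : GenHyp d L τ M μ K) {c : Fin d → ℂ} (hc : ∀ i, (c i).im = 0)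
    {z : CPhase d} (hz : z ∈ Vdom d L (τ / 2)) {n : ℕ} (hn : n * (μ * (2 * M / τ)) ≤ τ / 2) :
    ‖(∑ i, z.1 i * ((fmap L τ μ K c n z).2 i - z.2 i) - fact L τ μ K c n z)
      - μ * ∑ j ∈ Finset.range n, K (ginv L τ μ K ((gmap L τ μ K c)^[j] z))‖
      ≤ d * (n * (μ * (2 * M / τ))) ^ 2 := by
  have hτ := h.τ_pos
  have hμ := h.μ_pos
  set b := μ * (2 * M / τ) with hb
  have hb0 : 0 ≤ b := by
    have := h.M_nonneg; positivity
  set w : ℕ → CPhase d := fun j => ginv L τ μ K ((gmap L τ μ K c)^[j] z) with hw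
  have e0 : ∀ i, (fmap L τ μ K c n z).2 i - z.2 i = ∑ j ∈ Finset.range n, μ * gradJ K (w j) i := by
    intro i
    rw [fmap, Prod.snd_sub, iter_snd]
    simp [w]
    ring
  have e : (∑ i, z.1 i * ((fmap L τ μ K c n z).2 i - z.2 i) - fact L τ μ K c n z)
      - μ * ∑ j ∈ Finset.range n, K (w j)
      = ∑ j ∈ Finset.range n, ∑ i, (z.1 i - (w j).1 i) * (μ * gradJ K (w j) i) := by
    simp only [e0, fact, act, Finset.mul_sum]
    rw [Finset.sum_comm, ← Finset.sum_sub_distrib, ← Finset.sum_sub_distrib]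
    refine Finset.sum_congr rfl fun j _ => ?_
    simp only [sub_mul, Finset.sum_sub_distrib]
    simp only [hw]
    ring
  rw [e]
  have hbd : ∀ j ∈ Finset.range n, ‖∑ i, (z.1 i - (w j).1 i) * (μ * gradJ K (w j) i)‖
      ≤ d * ((n * b) * b) := by
    intro j hj
    have hj' := Finset.mem_range.1 hj
    have hzj := (h.iter_bd hc hz hn j hj'.le).1
    have hz1 := (h.iter_bd hc hz hn (j + 1) hj').2
    have hw3 : w j ∈ Vdom d L (3 * τ) := Vdom_mono (by linarith) (h.ginv_mem hzj)
    have hg := h.gradJ_bd hw3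
    have : ∀ i ∈ Finset.univ, ‖(z.1 i - (w j).1 i) * (μ * gradJ K (w j) i)‖ ≤ (n * b) * b := by
      intro i _
      rw [norm_mul, norm_mul, Complex.norm_real, Real.norm_eq_abs, abs_of_pos hμ]
      have a1 : ‖z.1 i - (w j).1 i‖ ≤ n * b := by
        have e1 : (w j).1 = ((gmap L τ μ K c)^[j + 1] z).1 := by
          rw [Function.iterate_succ_apply']; rfl
        have a2 := (norm_fst_apply_le _ i).trans hz1
        rw [e1, norm_sub_rev]
        have e2 : ((gmap L τ μ K c)^[j + 1] z - z - (0, ((j + 1 : ℕ) : ℂ) • c)).1 i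
            = ((gmap L τ μ K c)^[j + 1] z).1 i - z.1 i := by simp
        rw [e2] at a2
        refine a2.trans ?_
        have : ((j + 1 : ℕ) : ℝ) ≤ n := by exact_mod_cast hj'
        gcongr
      have a2 : ‖gradJ K (w j) i‖ ≤ 2 * M / τ := (norm_le_pi_norm _ i).trans hg
      rw [hb] at a1 ⊢
      gcongr
    refine (norm_sum_le_of_le _ this).trans ?_
    simp
  refine (norm_sum_le_of_le _ hbd).trans ?_
  rw [Finset.sum_const, Finset.card_range, nsmul_eq_mul]
  apply le_of_eq
  ring

theorem ball_sub {x : CPhase d} (hx1 : ‖x.1‖ ≤ L) (hx2 : ∀ i, (x.2 i).im = 0) (t : ℝ) :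
    ball x t ⊆ Vdom d L t := by
  intro y hy
  rw [mem_ball, dist_eq_norm] at hy
  refine ⟨?_, fun i => ?_⟩
  · have h1 : ‖y.1 - x.1‖ < t := (norm_fst_le (y - x)).trans_lt hy
    have h2 := norm_sub_norm_le y.1 x.1
    linarith
  · have h1 : ‖y.2 i - x.2 i‖ < t := (norm_snd_apply_le (y - x) i).trans_lt hy
    have h2 := (Complex.abs_im_le_norm (y.2 i - x.2 i)).trans_lt h1
    rwa [Complex.sub_im, hx2 i, sub_zero] at h2

/-- Core estimates. -/
theorem core (h : GenHyp d L τ M μ K) {c : Fin d → ℂ} (hc : ∀ i, (c i).im = 0)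
    {x : CPhase d} (hx1 : ‖x.1‖ ≤ L) (hx2 : ∀ i, (x.2 i).im = 0) {n m : ℕ} (hm1 : 1 ≤ m)
    (hm : 240 * m * (n * (μ * (2 * M / τ))) ≤ τ / 2) :
    ‖energy (fmap L τ μ K c n) m (fact L τ μ K c n) (fmap L τ μ K c n x)
      - energy (fmap L τ μ K c n) m (fact L τ μ K c n) x‖
      ≤ (d * (L + τ) * (n * (μ * (2 * M / τ)))
        + n * (μ * (d * (L + 2 * τ) * (2 * M / τ) + M))) / 3 ^ m ∧
    ‖energy (fmap L τ μ K c n) m (fact L τ μ K c n) x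
      - μ * ∑ j ∈ Finset.range n, K (ginv L τ μ K ((gmap L τ μ K c)^[j] x))‖
      ≤ (d * (L + τ) * (n * (μ * (2 * M / τ)))
        + n * (μ * (d * (L + 2 * τ) * (2 * M / τ) + M))) / m
        + d * (n * (μ * (2 * M / τ))) ^ 2 := by
  have hτ := h.τ_pos
  have hτ2 : 0 < τ / 2 := by linarith
  have hb0 : 0 ≤ n * (μ * (2 * M / τ)) := by
    have := h.M_nonneg; have := h.μ_pos.le; positivity
  have hn : n * (μ * (2 * M / τ)) ≤ τ / 2 := by
    refine le_trans ?_ hm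
    have : (1 : ℝ) ≤ m := by exact_mod_cast hm1
    nlinarith
  have hsub := ball_sub hx1 hx2 (τ / 2)
  have hxV : x ∈ Vdom d L (τ / 2) := hsub (mem_ball_self hτ2)
  have hf : DifferentiableOn ℂ (fmap L τ μ K c n) (ball x (τ / 2)) := fun z hz =>
    (h.fmap_diff hc (hsub hz) hn).differentiableWithinAt
  have hA : DifferentiableOn ℂ (fact L τ μ K c n) (ball x (τ / 2)) := fun z hz =>
    (h.fact_diff hc (hsub hz) hn).differentiableWithinAt
  have hfx := h.fmap_bd hc hxV hn
  refine ⟨energy_step hτ2 hb0 hm1 hm hf (fun z hz => h.fmap_bd hc (hsub hz) hn) hA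
    (fun z hz => h.fact_bd hc (hsub hz) hn) (fun i => ?_)
    (fun P hP hP0 => h.fmap_exact hc hxV hn P hP hP0), ?_⟩
  · have h1 : ‖(fmap L τ μ K c n x).1 - x.1‖ ≤ n * (μ * (2 * M / τ)) :=
      (norm_fst_le (fmap L τ μ K c n x - x)).trans hfx
    have h2 := norm_sub_norm_le (fmap L τ μ K c n x).1 x.1
    have h3 := norm_le_pi_norm (fmap L τ μ K c n x).1 i
    linarith
  · have h1 := energy_approx (Λ := L + τ) hτ2 hb0 hm1 hm hf (fun z hz => h.fmap_bd hc (hsub hz) hn) hA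
      (fun z hz => h.fact_bd hc (hsub hz) hn) (fun i => (norm_le_pi_norm x.1 i).trans (by linarith))
    have h2 := h.fmap_formula hc hxV hn
    refine (norm_sub_le_norm_sub_add_norm_sub _ _ _).trans (add_le_add h1 h2)

end GenHyp

end GenIter


section Complexify

open Metric Set

variable {d : ℕ}

/-- Complexification of a real multilinear form. -/
noncomputable def cmlf {n : ℕ} (f : ContinuousMultilinearMap ℝ (fun _ : Fin n => Fin d → ℝ) ℝ) :
    ContinuousMultilinearMap ℂ (fun _ : Fin n => Fin d → ℂ) ℂ :=
  ∑ s : Fin n → Fin d, ((f fun k => Pi.single (s k) 1 : ℝ) : ℂ) •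
    (ContinuousMultilinearMap.mkPiAlgebra ℂ (Fin n) ℂ).compContinuousLinearMap
      (fun k => ContinuousLinearMap.proj (s k))

theorem cmlf_apply_cx {n : ℕ} (f : ContinuousMultilinearMap ℝ (fun _ : Fin n => Fin d → ℝ) ℝ)
    (v : Fin n → Fin d → ℝ) : cmlf f (fun k => cx d (v k)) = (f v : ℂ) := by
  have h : f v = ∑ s : Fin n → Fin d, (∏ k, v k (s k)) * f fun k => Pi.single (s k) 1 := by
    have e : v = fun k => ∑ i, v k i • (Pi.single i (1 : ℝ) : Fin d → ℝ) := by
      funext k; ext j; simp [Finset.sum_apply, Pi.single_apply]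
    conv_lhs => rw [e]
    rw [f.map_sum]
    refine Finset.sum_congr rfl fun s _ => ?_
    rw [f.map_smul_univ, smul_eq_mul]
  rw [h, cmlf]
  simp only [_root_.sum_apply, _root_.smul_apply, smul_eq_mul,
    ContinuousMultilinearMap.compContinuousLinearMap_apply,
    ContinuousMultilinearMap.mkPiAlgebra_apply, ContinuousLinearMap.proj_apply, cx]
  push_cast
  exact Finset.sum_congr rfl fun s _ => mul_comm _ _

theorem norm_cmlf_le {n : ℕ} (f : ContinuousMultilinearMap ℝ (fun _ : Fin n => Fin d → ℝ) ℝ) :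
    ‖cmlf f‖ ≤ (d : ℝ) ^ n * ‖f‖ := by
  refine ContinuousMultilinearMap.opNorm_le_bound (by positivity) fun m => ?_
  have hs : ∀ s ∈ (Finset.univ : Finset (Fin n → Fin d)),
      ‖((f fun k => Pi.single (s k) 1 : ℝ) : ℂ) * ∏ k, m k (s k)‖ ≤ ‖f‖ * ∏ k, ‖m k‖ := by
    intro s _
    rw [norm_mul, norm_prod, Complex.norm_real]
    have h1 : ‖f fun k => Pi.single (s k) 1‖ ≤ ‖f‖ := by
      refine (f.le_opNorm _).trans ?_
      have : ∏ k : Fin n, ‖(Pi.single (s k) 1 : Fin d → ℝ)‖ ≤ 1 := by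
        refine Finset.prod_le_one (fun _ _ => norm_nonneg _) fun k _ => ?_
        simp [Pi.norm_single]
      nlinarith [norm_nonneg f]
    have h2 : ∏ k, ‖m k (s k)‖ ≤ ∏ k, ‖m k‖ :=
      Finset.prod_le_prod (fun _ _ => norm_nonneg _) fun k _ => norm_le_pi_norm (m k) (s k)
    exact mul_le_mul h1 h2 (Finset.prod_nonneg fun _ _ => norm_nonneg _) (norm_nonneg _)
  have e : cmlf f m = ∑ s : Fin n → Fin d, ((f fun k => Pi.single (s k) 1 : ℝ) : ℂ) * ∏ k, m k (s k) := by
    simp only [cmlf, _root_.sum_apply, _root_.smul_apply,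
      smul_eq_mul, ContinuousMultilinearMap.compContinuousLinearMap_apply,
      ContinuousMultilinearMap.mkPiAlgebra_apply, ContinuousLinearMap.proj_apply]
  rw [e]
  refine (norm_sum_le_of_le _ hs).trans (le_of_eq ?_)
  simp
  ring

theorem norm_cx (v : Fin d → ℝ) : ‖cx d v‖ = ‖v‖ := by
  simp only [Pi.norm_def]
  congr 1
  refine Finset.sup_congr rfl fun i _ => ?_
  ext
  simp [cx]

theorem cx_add (v w : Fin d → ℝ) : cx d (v + w) = cx d v + cx d w := by
  funext i; simp [cx]

theorem cx_sub (v w : Fin d → ℝ) : cx d (v - w) = cx d v - cx d w := by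
  funext i; simp [cx]

theorem cx_smul (a : ℝ) (v : Fin d → ℝ) : cx d (a • v) = (a : ℂ) • cx d v := by
  funext i; simp [cx]

theorem exists_cext {h : (Fin d → ℝ) → ℝ} {x : Fin d → ℝ} (hx : AnalyticAt ℝ h x) :
    ∃ ρ > 0, ∃ M : ℝ, ∃ g : (Fin d → ℂ) → ℂ, AnalyticOnNhd ℂ g (ball (cx d x) ρ) ∧
      (∀ z ∈ ball (cx d x) ρ, ‖g z‖ ≤ M) ∧ ∀ y ∈ ball x ρ, g (cx d y) = h y := by
  obtain ⟨p, r, hp⟩ := hx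
  obtain ⟨C, a, hC, ha, hb⟩ := p.le_mul_pow_of_radius_pos hp.radius_pos
  set q : FormalMultilinearSeries ℂ (Fin d → ℂ) ℂ := fun n => cmlf (p n) with hq
  have hrad : 0 < q.radius := by
    set t0 : NNReal := ⟨1 / (d * a + 1), by positivity⟩ with ht0
    have : (t0 : ENNReal) ≤ q.radius := by
      refine q.le_radius_of_bound C fun n => ?_
      have h1 : ‖q n‖ ≤ (d : ℝ) ^ n * (C * a ^ n) :=
        (norm_cmlf_le (p n)).trans (by gcongr; exact hb n)
      have h2 : (d * a / (d * a + 1)) ^ n ≤ 1 := by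
        refine pow_le_one₀ (by positivity) ?_
        rw [div_le_one (by positivity)]; linarith
      change ‖q n‖ * (1 / (d * a + 1)) ^ n ≤ C
      calc _ ≤ (d : ℝ) ^ n * (C * a ^ n) * (1 / (d * a + 1)) ^ n := by gcongr
        _ = C * (d * a / (d * a + 1)) ^ n := by
          rw [div_pow, div_pow, mul_pow, one_pow]; ring
        _ ≤ C := by nlinarith
    refine lt_of_lt_of_le ?_ this
    rw [ENNReal.coe_pos]
    exact (show (0 : ℝ) < 1 / (d * a + 1) by positivity)
  have hqs := q.hasFPowerSeriesOnBall hrad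
  have hqc : ContinuousAt q.sum 0 := hqs.analyticAt.continuousAt
  obtain ⟨ρ1, hρ1, hb1⟩ := Metric.continuousAt_iff.1 hqc 1 one_pos
  obtain ⟨ρ2, hρ2, hb2⟩ : ∃ ρ2 : ℝ, 0 < ρ2 ∧ ENNReal.ofReal ρ2 ≤ min r q.radius := by
    have : 0 < min r q.radius := lt_min hp.r_pos hrad
    obtain ⟨t, ht0, ht⟩ := ENNReal.lt_iff_exists_nnreal_btwn.1 this
    exact ⟨t, by exact_mod_cast ht0, by simpa using ht.le⟩
  set ρ := min ρ1 ρ2 with hρ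
  have hemem : ∀ {V : Type} [SeminormedAddCommGroup V] (y : V), ‖y‖ < ρ → ∀ R : ENNReal,
      min r q.radius ≤ R → y ∈ Metric.eball (0 : V) R := by
    intro V _ y hy R hR
    rw [Metric.mem_eball, edist_dist, dist_zero_right]
    refine lt_of_lt_of_le ?_ (hb2.trans hR)
    exact (ENNReal.ofReal_lt_ofReal_iff hρ2).2 (hy.trans_le (min_le_right _ _))
  refine ⟨ρ, lt_min hρ1 hρ2, ‖q.sum 0‖ + 1, fun z => q.sum (z - cx d x), ?_, ?_, ?_⟩
  · intro z hz
    rw [mem_ball, dist_eq_norm] at hz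
    have h1 : AnalyticAt ℂ q.sum (z - cx d x) :=
      hqs.analyticOnNhd _ (hemem _ hz _ (min_le_right _ _))
    have h2 : AnalyticAt ℂ (fun z => z - cx d x) z := analyticAt_id.sub analyticAt_const
    exact AnalyticAt.fun_comp (g := q.sum) (f := fun z => z - cx d x) h1 h2
  · intro z hz
    rw [mem_ball, dist_eq_norm] at hz
    have := hb1 (x := z - cx d x) (by simpa using hz.trans_le (min_le_left _ _))
    rw [dist_eq_norm] at this
    have h2 := norm_sub_norm_le (q.sum (z - cx d x)) (q.sum 0)
    linarith
  · intro y hy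
    rw [mem_ball, dist_eq_norm] at hy
    have h1 := hp.hasSum (y := y - x) (hemem _ hy _ (min_le_left _ _))
    have hcy : ‖cx d y - cx d x‖ < ρ := by rw [← cx_sub, norm_cx]; exact hy
    have h2 := hqs.hasSum (y := cx d y - cx d x) (hemem _ hcy _ (min_le_right _ _))
    have h3 : ∀ n, q n (fun _ => cx d y - cx d x) = ((p n (fun _ => y - x) : ℝ) : ℂ) := by
      intro n
      rw [← cmlf_apply_cx, cx_sub]
    simp only [h3, zero_add] at h2
    have h4 := (Complex.hasSum_ofReal (f := fun n => p n (fun _ => y - x))).2 h1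
    change q.sum (cx d y - cx d x) = _
    rw [h2.unique h4]
    simp

/-- Uniform complex extensions over a compact set. -/
theorem exists_cext_unif {h : (Fin d → ℝ) → ℝ} {S U : Set (Fin d → ℝ)} (hS : IsCompact S)
    (hSU : S ⊆ U) (hU : AnalyticOnNhd ℝ h U) :
    ∃ ρ > 0, ∃ M : ℝ, ∀ x ∈ S, ∃ g : (Fin d → ℂ) → ℂ, AnalyticOnNhd ℂ g (ball (cx d x) ρ) ∧
      (∀ z ∈ ball (cx d x) ρ, ‖g z‖ ≤ M) ∧ ∀ y ∈ ball x ρ, g (cx d y) = h y := by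
  refine hS.induction_on (p := fun S => ∃ ρ > 0, ∃ M : ℝ, ∀ x ∈ S, ∃ g : (Fin d → ℂ) → ℂ,
    AnalyticOnNhd ℂ g (ball (cx d x) ρ) ∧ (∀ z ∈ ball (cx d x) ρ, ‖g z‖ ≤ M) ∧
      ∀ y ∈ ball x ρ, g (cx d y) = h y) ⟨1, one_pos, 0, by simp⟩ ?_ ?_ ?_
  · rintro s t hst ⟨ρ, hρ, M, hM⟩
    exact ⟨ρ, hρ, M, fun x hx => hM x (hst hx)⟩
  · rintro s t ⟨ρ, hρ, M, hM⟩ ⟨ρ', hρ', M', hM'⟩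
    refine ⟨min ρ ρ', lt_min hρ hρ', max M M', fun x hx => ?_⟩
    rcases hx with hx | hx
    · obtain ⟨g, h1, h2, h3⟩ := hM x hx
      have hl := min_le_left ρ ρ'
      exact ⟨g, h1.mono (ball_subset_ball hl), fun z hz => (h2 z (ball_subset_ball hl hz)).trans
        (le_max_left _ _), fun y hy => h3 y (ball_subset_ball hl hy)⟩
    · obtain ⟨g, h1, h2, h3⟩ := hM' x hx
      have hl := min_le_right ρ ρ'
      exact ⟨g, h1.mono (ball_subset_ball hl), fun z hz => (h2 z (ball_subset_ball hl hz)).trans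
        (le_max_right _ _), fun y hy => h3 y (ball_subset_ball hl hy)⟩
  · intro x hx
    obtain ⟨ρ, hρ, M, g, h1, h2, h3⟩ := exists_cext (hU x (hSU hx))
    refine ⟨ball x (ρ / 2), mem_nhdsWithin_of_mem_nhds (ball_mem_nhds x (by linarith)), ρ / 2,
      by linarith, M, fun y hy => ⟨g, ?_⟩⟩
    have hsub : ball y (ρ / 2) ⊆ ball x ρ := ball_subset_ball' (by
      rw [mem_ball] at hy; linarith)
    have hsubc : ball (cx d y) (ρ / 2) ⊆ ball (cx d x) ρ := ball_subset_ball' (by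
      rw [mem_ball, dist_eq_norm] at hy
      rw [dist_eq_norm, ← cx_sub, norm_cx]; linarith)
    exact ⟨h1.mono hsubc, fun z hz => h2 z (hsubc hz), fun w hw => h3 w (hsub hw)⟩

end Complexify


section ScaledStab

open Metric Set

variable {d : ℕ}

/-- Complexification of a real phase point. -/
def iota (x : RPhase d) : CPhase d := (cx d x.1, cx d x.2)

theorem iota_inj {x y : RPhase d} (h : iota x = iota y) : x = y := by
  have h1 := congrArg Prod.fst h
  have h2 := congrArg Prod.snd h
  ext i
  · have := congrFun h1 i
    simpa [iota, cx] using this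
  · have := congrFun h2 i
    simpa [iota, cx] using this

/-- The scaled problem near a resonance. -/
structure Scaled (d : ℕ) (L τ Mq Ms μ ν : ℝ) (n : ℕ) (q : (Fin d → ℂ) → ℂ) (u : CPhase d → ℂ)
    (qr : (Fin d → ℝ) → ℝ) (G : RPhase d → RPhase d) (ω : Fin d → ℝ) : Prop where
  gen : GenHyp d L τ (Mq + Ms) μ (fun z => q z.1 + u z)
  qdiff : DifferentiableOn ℂ q (ball 0 (L + 4 * τ))
  qbd : ∀ J ∈ ball (0 : Fin d → ℂ) (L + 4 * τ), ‖q J‖ ≤ Mq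
  ubd : ∀ w ∈ Vdom d L (4 * τ), ‖u w‖ ≤ Ms
  qreal : ∀ J, ‖J‖ < L + τ → q (cx d J) = qr J
  qlow : ∀ J, ‖J‖ < L + τ → ν / 2 * ‖J‖ ^ 2 ≤ qr J
  hG : ∀ x : RPhase d, ‖x.1‖ < L + τ →
    GenHyp.gmap L τ μ (fun z => q z.1 + u z) (cx d ω) (iota x) = iota (G x)
  hGs : ∀ (x : RPhase d) (e : Fin d → ℤ),
    G (x.1, x.2 + fun i => (e i : ℝ)) = ((G x).1, (G x).2 + fun i => (e i : ℝ))
  hres : ∀ i, ∃ z : ℤ, (n : ℝ) * ω i = z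

namespace Scaled

variable {L τ Mq Ms μ ν : ℝ} {n : ℕ} {q : (Fin d → ℂ) → ℂ} {u : CPhase d → ℂ}
    {qr : (Fin d → ℝ) → ℝ} {G : RPhase d → RPhase d} {ω : Fin d → ℝ}

theorem cx_im (v : Fin d → ℝ) (i : Fin d) : (cx d v i).im = 0 := by simp [cx]

theorem iota_mem (h : Scaled d L τ Mq Ms μ ν n q u qr G ω) {x : RPhase d} (hx : ‖x.1‖ ≤ L) :
    iota x ∈ Vdom d L (τ / 2) := by
  have := h.gen.τ_pos
  exact GenHyp.ball_sub (x := iota x) (by simpa [iota, norm_cx] using hx) (cx_im _) _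
    (mem_ball_self (by linarith))

theorem orbit (h : Scaled d L τ Mq Ms μ ν n q u qr G ω) {x : RPhase d} (hx : ‖x.1‖ ≤ L)
    (hn : n * (μ * (2 * (Mq + Ms) / τ)) ≤ τ / 2) (j : ℕ) (hj : j ≤ n) :
    (GenHyp.gmap L τ μ (fun z => q z.1 + u z) (cx d ω))^[j] (iota x) = iota (G^[j] x) ∧
    ‖(G^[j] x).1‖ < L + τ ∧ ‖(G^[j] x).1 - x.1‖ ≤ n * (μ * (2 * (Mq + Ms) / τ)) := by
  have key : ∀ j ≤ n, (GenHyp.gmap L τ μ (fun z => q z.1 + u z) (cx d ω))^[j] (iota x)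
      = iota (G^[j] x) → ‖(G^[j] x).1‖ < L + τ ∧
        ‖(G^[j] x).1 - x.1‖ ≤ n * (μ * (2 * (Mq + Ms) / τ)) := by
    intro j hj e
    obtain ⟨h1, h2⟩ := h.gen.iter_bd (c := cx d ω) (cx_im _) (h.iota_mem hx) hn j hj
    rw [e] at h1 h2
    refine ⟨by simpa [iota, norm_cx] using h1.1, ?_⟩
    have h3 := (norm_fst_le _).trans h2
    have e2 : (iota (G^[j] x) - iota x - (0, (j : ℂ) • cx d ω)).1 = cx d ((G^[j] x).1 - x.1) := by
      rw [cx_sub]; simp [iota]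
    rw [e2, norm_cx] at h3
    refine h3.trans ?_
    have := h.gen.M_nonneg
    have := h.gen.μ_pos
    have := h.gen.τ_pos
    gcongr
  induction j with
  | zero => exact ⟨rfl, key 0 hj rfl⟩
  | succ j ih =>
    obtain ⟨i1, i2, -⟩ := ih (by omega)
    have e : (GenHyp.gmap L τ μ (fun z => q z.1 + u z) (cx d ω))^[j + 1] (iota x)
        = iota (G^[j + 1] x) := by
      rw [Function.iterate_succ_apply', i1, h.hG _ i2, Function.iterate_succ_apply']
    exact ⟨e, key _ hj e⟩

theorem avg (h : Scaled d L τ Mq Ms μ ν n q u qr G ω) {x : RPhase d} (hx : ‖x.1‖ ≤ L)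
    (hn : n * (μ * (2 * (Mq + Ms) / τ)) ≤ τ / 2) :
    ‖(μ : ℂ) * ∑ j ∈ Finset.range n, (fun z : CPhase d => q z.1 + u z)
      (GenHyp.ginv L τ μ (fun z => q z.1 + u z)
        ((GenHyp.gmap L τ μ (fun z => q z.1 + u z) (cx d ω))^[j] (iota x)))
      - ((n * μ * qr x.1 : ℝ) : ℂ)‖
      ≤ n * μ * (Ms + 2 * Mq / τ * (n * (μ * (2 * (Mq + Ms) / τ)))) := by
  have hτ := h.gen.τ_pos
  have hμ := h.gen.μ_pos
  have hMs : 0 ≤ Ms := (norm_nonneg _).trans (h.ubd _ (Vdom_mono (by linarith) (h.iota_mem hx)))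
  have hxb : cx d x.1 ∈ ball (0 : Fin d → ℂ) (L + 4 * τ) := by
    rw [mem_ball_zero_iff, norm_cx]; linarith
  have hMq : 0 ≤ Mq := (norm_nonneg _).trans (h.qbd _ hxb)
  set K : CPhase d → ℂ := fun z => q z.1 + u z with hK
  have e : ((n * μ * qr x.1 : ℝ) : ℂ) = (μ : ℂ) * ∑ j ∈ Finset.range n, (qr x.1 : ℂ) := by
    rw [Finset.sum_const, Finset.card_range, nsmul_eq_mul]; push_cast; ring
  rw [e, ← mul_sub, ← Finset.sum_sub_distrib, norm_mul, Complex.norm_real, Real.norm_eq_abs,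
    abs_of_pos hμ]
  have hb : ∀ j ∈ Finset.range n, ‖K (GenHyp.ginv L τ μ K
      ((GenHyp.gmap L τ μ K (cx d ω))^[j] (iota x))) - (qr x.1 : ℂ)‖
      ≤ Ms + 2 * Mq / τ * (n * (μ * (2 * (Mq + Ms) / τ))) := by
    intro j hj
    have hj' := Finset.mem_range.1 hj
    obtain ⟨o1, o2, o3⟩ := h.orbit hx hn (j + 1) hj'
    have hV := (h.gen.iter_bd (c := cx d ω) (cx_im _) (h.iota_mem hx) hn j hj'.le).1
    have hw := h.gen.ginv_mem hV
    have hw1 : (GenHyp.ginv L τ μ K ((GenHyp.gmap L τ μ K (cx d ω))^[j] (iota x))).1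
        = cx d (G^[j + 1] x).1 := by
      have := congrArg Prod.fst o1
      rw [Function.iterate_succ_apply'] at this
      exact this
    set w := GenHyp.ginv L τ μ K ((GenHyp.gmap L τ μ K (cx d ω))^[j] (iota x)) with hwd
    have h1 := h.ubd w (Vdom_mono (by linarith) hw)
    have h2 : ‖q w.1 - q (cx d x.1)‖ ≤ 2 * Mq / τ * (n * (μ * (2 * (Mq + Ms) / τ))) := by
      rw [hw1]
      have hsub : ball (cx d x.1) τ ⊆ ball (0 : Fin d → ℂ) (L + 4 * τ) :=
        ball_subset_ball' (by rw [dist_zero_right, norm_cx]; linarith)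
      have hd : ‖cx d (G^[j + 1] x).1 - cx d x.1‖ ≤ n * (μ * (2 * (Mq + Ms) / τ)) := by
        rw [← cx_sub, norm_cx]; exact o3
      refine (ni_schwarz (h.qdiff.mono hsub) (fun y hy => h.qbd y (hsub hy)) ?_).trans ?_
      · rw [mem_ball, dist_eq_norm]; linarith
      · gcongr
    rw [h.qreal x.1 (by linarith)] at h2
    have e3 : K w - (qr x.1 : ℂ) = u w + (q w.1 - qr x.1) := by simp only [hK]; ring
    rw [e3]
    exact (norm_add_le _ _).trans (add_le_add h1 h2)
  have := norm_sum_le_of_le _ hb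
  rw [Finset.sum_const, Finset.card_range, nsmul_eq_mul] at this
  calc _ ≤ μ * _ := mul_le_mul_of_nonneg_left this hμ.le
    _ = _ := by ring

/-- Real return map. -/
def ret (G : RPhase d → RPhase d) (ω : Fin d → ℝ) (n : ℕ) (x : RPhase d) : RPhase d :=
  G^[n] x - (0, (n : ℝ) • ω)

theorem iter_shift (h : Scaled d L τ Mq Ms μ ν n q u qr G ω) (k : ℕ) (x : RPhase d)
    (e : Fin d → ℤ) : G^[k] (x.1, x.2 + fun i => (e i : ℝ))
      = ((G^[k] x).1, (G^[k] x).2 + fun i => (e i : ℝ)) := by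
  induction k with
  | zero => rfl
  | succ k ih => rw [Function.iterate_succ_apply', ih, h.hGs, Function.iterate_succ_apply']

theorem ret_iter (h : Scaled d L τ Mq Ms μ ν n q u qr G ω) (x : RPhase d) (j : ℕ) :
    ∃ e : Fin d → ℤ, (ret G ω n)^[j] x
      = ((G^[n * j] x).1, (G^[n * j] x).2 + fun i => (e i : ℝ)) := by
  choose z hz using h.hres
  induction j with
  | zero => exact ⟨0, by ext i <;> simp⟩
  | succ j ih =>
    obtain ⟨e, he⟩ := ih
    refine ⟨fun i => e i - z i, ?_⟩
    rw [Function.iterate_succ_apply', he, ret, h.iter_shift, ← Function.iterate_add_apply,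
      show n + n * j = n * (j + 1) by ring]
    ext i
    · simp
    · simp [hz]; ring

theorem fmap_iota (h : Scaled d L τ Mq Ms μ ν n q u qr G ω) {x : RPhase d} (hx : ‖x.1‖ ≤ L)
    (hn : n * (μ * (2 * (Mq + Ms) / τ)) ≤ τ / 2) :
    GenHyp.fmap L τ μ (fun z => q z.1 + u z) (cx d ω) n (iota x) = iota (ret G ω n x) := by
  rw [GenHyp.fmap, (h.orbit hx hn n le_rfl).1, ret]
  ext i
  · simp [iota]
  · simp [iota, cx]

/-- Main scaled stability estimate. -/
theorem stab (h : Scaled d L τ Mq Ms μ ν n q u qr G ω) (hn0 : 0 < n) (hν : 0 < ν) {m : ℕ}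
    (hm1 : 1 ≤ m) (hm : 240 * m * (n * (μ * (2 * (Mq + Ms) / τ))) ≤ τ / 2)
    {a κ C1 : ℝ} (ha : 0 ≤ a) (haL : a + n * (μ * (2 * (Mq + Ms) / τ)) ≤ L)
    (ha2 : 7 * Ms / ν ≤ a ^ 2)
    (hC1 : C1 = d * (L + τ) * (2 * (Mq + Ms) / τ) + (d * (L + 2 * τ) * (2 * (Mq + Ms) / τ)
      + (Mq + Ms)))
    (hκ : κ = 2 * Mq / τ * (n * (μ * (2 * (Mq + Ms) / τ))) + C1 / m
      + d * (n * μ) * (2 * (Mq + Ms) / τ) ^ 2)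
    (hκs : 2 * κ ≤ Ms / 4) {x₀ : RPhase d} (hx₀ : ‖x₀.1‖ ≤ L) (hq₀ : qr x₀.1 ≤ Ms)
    (k : ℕ) (hk : k * (C1 / 3 ^ m) ≤ Ms / 4) :
    ‖(G^[k] x₀).1‖ ≤ a + n * (μ * (2 * (Mq + Ms) / τ)) := by
  have hτ := h.gen.τ_pos
  have hμ := h.gen.μ_pos
  have hM := h.gen.M_nonneg
  have hL := h.gen.L_nonneg
  have hb0 : 0 ≤ n * (μ * (2 * (Mq + Ms) / τ)) := by positivity
  have hn : n * (μ * (2 * (Mq + Ms) / τ)) ≤ τ / 2 := by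
    refine le_trans ?_ hm
    have : (1 : ℝ) ≤ m := by exact_mod_cast hm1
    nlinarith
  have hC10 : 0 ≤ C1 := by rw [hC1]; positivity
  have hD : 0 < n * μ := by positivity
  set δ := n * (μ * (2 * (Mq + Ms) / τ)) with hδ
  set H : CPhase d → ℂ := energy (GenHyp.fmap L τ μ (fun z => q z.1 + u z) (cx d ω) n) m
    (GenHyp.fact L τ μ (fun z => q z.1 + u z) (cx d ω) n) with hH
  have hErr : d * (L + τ) * δ + n * (μ * (d * (L + 2 * τ) * (2 * (Mq + Ms) / τ) + (Mq + Ms)))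
      = n * μ * C1 := by rw [hC1, hδ]; ring
  have hap : ∀ x : RPhase d, ‖x.1‖ ≤ L →
      ‖H (iota x) - ((n * μ * qr x.1 : ℝ) : ℂ)‖ ≤ n * μ * (Ms + κ) := by
    intro x hx
    have h1 := (h.gen.core (c := cx d ω) (cx_im _) (x := iota x)
      (by simpa [iota, norm_cx] using hx) (cx_im _) hm1 hm).2
    have h2 := h.avg hx hn
    refine (norm_sub_le_norm_sub_add_norm_sub _ _ _).trans ((add_le_add h1 h2).trans (le_of_eq ?_))
    rw [hErr, hκ, hδ]; ring
  have hst : ∀ x : RPhase d, ‖x.1‖ ≤ L →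
      ‖H (iota (ret G ω n x)) - H (iota x)‖ ≤ n * μ * C1 / 3 ^ m := by
    intro x hx
    have h1 := (h.gen.core (c := cx d ω) (cx_im _) (x := iota x)
      (by simpa [iota, norm_cx] using hx) (cx_im _) hm1 hm).1
    rw [h.fmap_iota hx hn, hErr] at h1
    exact h1
  have hfst : ∀ j, ((ret G ω n)^[j] x₀).1 = (G^[n * j] x₀).1 := by
    intro j
    obtain ⟨e, he⟩ := h.ret_iter x₀ j
    rw [he]
  have hMs : 0 ≤ Ms := (norm_nonneg _).trans (h.ubd _ (Vdom_mono (by linarith) (h.iota_mem hx₀)))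
  -- one implication: energy closeness gives the action bound
  have himp : ∀ j : ℕ, j ≤ k → ‖((ret G ω n)^[j] x₀).1‖ ≤ L →
      ‖H (iota ((ret G ω n)^[j] x₀)) - H (iota x₀)‖ ≤ j * (n * μ * C1 / 3 ^ m) →
      ‖((ret G ω n)^[j] x₀).1‖ ≤ a := by
    intro j hj hjL hjE
    set x := (ret G ω n)^[j] x₀ with hx
    have h1 := hap x hjL
    have h2 := hap x₀ hx₀
    have h3 : ‖((n * μ * qr x.1 : ℝ) : ℂ) - ((n * μ * qr x₀.1 : ℝ) : ℂ)‖
        ≤ n * μ * (Ms + κ) + j * (n * μ * C1 / 3 ^ m) + n * μ * (Ms + κ) := by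
      have e : ((n * μ * qr x.1 : ℝ) : ℂ) - ((n * μ * qr x₀.1 : ℝ) : ℂ)
          = -(H (iota x) - ((n * μ * qr x.1 : ℝ) : ℂ)) + (H (iota x) - H (iota x₀))
            + (H (iota x₀) - ((n * μ * qr x₀.1 : ℝ) : ℂ)) := by ring
      rw [e]
      refine (norm_add_le _ _).trans (add_le_add ((norm_add_le _ _).trans (add_le_add ?_ hjE)) h2)
      rwa [norm_neg]
    rw [← Complex.ofReal_sub, Complex.norm_real, Real.norm_eq_abs] at h3
    have h4 := (le_abs_self _).trans h3
    have h5 : (j : ℝ) * (C1 / 3 ^ m) ≤ Ms / 4 := by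
      refine le_trans ?_ hk
      gcongr
    have h6 : n * μ * (qr x.1) ≤ n * μ * (qr x₀.1 + 2 * (Ms + κ) + j * (C1 / 3 ^ m)) := by
      have e : n * μ * (qr x₀.1 + 2 * (Ms + κ) + j * (C1 / 3 ^ m))
        = n * μ * qr x₀.1 + (n * μ * (Ms + κ) + j * (n * μ * C1 / 3 ^ m) + n * μ * (Ms + κ)) := by
        ring
      rw [e]; linarith
    have h7 := le_of_mul_le_mul_left h6 hD
    have h8 := h.qlow x.1 (by linarith)
    have h9 : ν / 2 * ‖x.1‖ ^ 2 ≤ 7 / 2 * Ms := by linarith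
    have h10 : ‖x.1‖ ^ 2 ≤ 7 * Ms / ν := by
      rw [le_div_iff₀ hν]; nlinarith
    exact abs_le_of_sq_le_sq' (h10.trans ha2) ha |>.2
  have hmain : ∀ j : ℕ, j ≤ k → ‖((ret G ω n)^[j] x₀).1‖ ≤ a ∧
      ‖H (iota ((ret G ω n)^[j] x₀)) - H (iota x₀)‖ ≤ j * (n * μ * C1 / 3 ^ m) := by
    intro j
    induction j with
    | zero =>
      intro hj
      have h0 : ‖H (iota ((ret G ω n)^[0] x₀)) - H (iota x₀)‖
          ≤ (0 : ℕ) * (n * μ * C1 / 3 ^ m) := by simp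
      exact ⟨himp 0 hj hx₀ h0, h0⟩
    | succ j ih =>
      intro hj
      obtain ⟨i1, i2⟩ := ih (by omega)
      have iL : ‖((ret G ω n)^[j] x₀).1‖ ≤ L := by linarith
      have hE : ‖H (iota ((ret G ω n)^[j + 1] x₀)) - H (iota x₀)‖
          ≤ (j + 1 : ℕ) * (n * μ * C1 / 3 ^ m) := by
        have := hst _ iL
        rw [← Function.iterate_succ_apply' (ret G ω n)] at this
        refine (norm_sub_le_norm_sub_add_norm_sub _ _ _).trans ((add_le_add this i2).trans
          (le_of_eq ?_))
        push_cast; ring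
      have hN : ‖((ret G ω n)^[j + 1] x₀).1‖ ≤ L := by
        have h3 := (h.orbit iL hn n le_rfl).2.2
        have e : (G^[n] ((ret G ω n)^[j] x₀)).1 = ((ret G ω n)^[j + 1] x₀).1 := by
          rw [Function.iterate_succ_apply', ret]; simp
        rw [e] at h3
        have h4 := norm_sub_norm_le ((ret G ω n)^[j + 1] x₀).1 ((ret G ω n)^[j] x₀).1
        linarith
      exact ⟨himp _ hj hN hE, hE⟩
  have hdiv := Nat.div_add_mod k n
  have h1 := (hmain (k / n) (Nat.div_le_self k n)).1
  rw [hfst] at h1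
  have h2 := (h.orbit (x := G^[n * (k / n)] x₀) (by linarith) hn (k % n) (Nat.mod_lt k hn0).le).2.2
  rw [← Function.iterate_add_apply, add_comm, hdiv] at h2
  have h3 := norm_sub_norm_le (G^[k] x₀).1 (G^[n * (k / n)] x₀).1
  linarith

end Scaled

end ScaledStab


section ScaledConst

open Metric Set

variable {d : ℕ}

theorem Scaled.exists_const (d : ℕ) {L τ Mq Ms ν : ℝ} (hτ : 0 < τ) (hMq : 0 ≤ Mq) (hMs : 0 < Ms)
    (hν : 0 < ν) (hL : Real.sqrt (7 * Ms / ν) + 1 ≤ L) :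
    ∃ c₄ c₅ D₀ : ℝ, 0 < c₄ ∧ 0 < c₅ ∧ 0 < D₀ ∧ ∀ (μ : ℝ) (n : ℕ) (q : (Fin d → ℂ) → ℂ)
      (u : CPhase d → ℂ) (qr : (Fin d → ℝ) → ℝ) (G : RPhase d → RPhase d) (ω : Fin d → ℝ),
      Scaled d L τ Mq Ms μ ν n q u qr G ω → 0 < n → n * μ ≤ D₀ → ∀ x₀ : RPhase d,
        ‖x₀.1‖ ≤ L → qr x₀.1 ≤ Ms → ∀ k : ℕ, (k : ℝ) ≤ c₄ * Real.exp (c₅ / (n * μ)) →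
          ‖(G^[k] x₀).1‖ ^ 2 ≤ 11 * Ms / ν := by
  have hL0 : 0 ≤ L := by have := Real.sqrt_nonneg (7 * Ms / ν); linarith
  set B := 2 * (Mq + Ms) / τ with hB
  have hB0 : 0 < B := by positivity
  obtain ⟨C1, hC1⟩ : ∃ C1, C1 = d * (L + τ) * (2 * (Mq + Ms) / τ)
    + (d * (L + 2 * τ) * (2 * (Mq + Ms) / τ) + (Mq + Ms)) := ⟨_, rfl⟩
  have hC10 : 0 < C1 := by rw [hC1]; positivity
  set a := Real.sqrt (7 * Ms / ν) with ha
  set a' := Real.sqrt (11 * Ms / ν) with ha'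
  have ha0 : 0 ≤ a := Real.sqrt_nonneg _
  have haa : a < a' := by
    apply Real.sqrt_lt_sqrt (by positivity)
    gcongr
    norm_num
  set Cκ := 2 * Mq / τ * B + C1 * (960 * B / τ) + d * B ^ 2 with hCκ
  have hCκ0 : 0 < Cκ := by positivity
  refine ⟨Ms / (4 * C1 * Real.exp 1), τ / (480 * B),
    min (min (τ / (480 * B)) (1 / B)) (min ((a' - a) / B) (Ms / (8 * Cκ))), by positivity,
    by positivity, ?_, ?_⟩
  · have : 0 < a' - a := by linarith
    positivity
  intro μ n q u qr G ω h hn hD x₀ hx₀ hq₀ k hk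
  have hμ := h.gen.μ_pos
  have hD0 : 0 < n * μ := by positivity
  set D := (n : ℝ) * μ with hDdef
  have hd1 : D ≤ τ / (480 * B) := hD.trans ((min_le_left _ _).trans (min_le_left _ _))
  have hd2 : D ≤ 1 / B := hD.trans ((min_le_left _ _).trans (min_le_right _ _))
  have hd3 : D ≤ (a' - a) / B := hD.trans ((min_le_right _ _).trans (min_le_left _ _))
  have hd4 : D ≤ Ms / (8 * Cκ) := hD.trans ((min_le_right _ _).trans (min_le_right _ _))
  have eδ : n * (μ * (2 * (Mq + Ms) / τ)) = D * B := by rw [hDdef, hB]; ring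
  set y := τ / (480 * B) / D with hy
  have hy1 : 1 ≤ y := by rw [hy, le_div_iff₀ hD0]; linarith
  set m := ⌊y⌋₊ with hm
  have hm1 : 1 ≤ m := Nat.le_floor (by simpa using hy1)
  have hm1r : (1 : ℝ) ≤ m := by exact_mod_cast hm1
  have hmy : (m : ℝ) ≤ y := Nat.floor_le (by linarith)
  have hmy2 : y < m + 1 := Nat.lt_floor_add_one y
  have hyDB : y * (D * B) = τ / 480 := by
    rw [hy]; field_simp
  have hm240 : 240 * m * (n * (μ * (2 * (Mq + Ms) / τ))) ≤ τ / 2 := by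
    rw [eδ]
    have : m * (D * B) ≤ y * (D * B) := by gcongr
    linarith
  have hDB : D * B ≤ 1 := by rwa [le_div_iff₀ hB0] at hd2
  have hDB2 : D * B ≤ a' - a := by rwa [le_div_iff₀ hB0] at hd3
  have hminv : C1 / m ≤ C1 * (960 * B / τ) * D := by
    rw [div_le_iff₀ (by linarith)]
    have h1 : 1 ≤ 960 * (D * B) / τ * m := by
      rw [div_mul_eq_mul_div, le_div_iff₀ hτ]
      have : y * (D * B) ≤ (2 * m) * (D * B) := by
        gcongr; linarith
      nlinarith
    calc C1 = C1 * 1 := by ring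
      _ ≤ C1 * (960 * (D * B) / τ * m) := by gcongr
      _ = _ := by ring
  have hκs : 2 * (2 * Mq / τ * (n * (μ * (2 * (Mq + Ms) / τ))) + C1 / m
      + d * (n * μ) * (2 * (Mq + Ms) / τ) ^ 2) ≤ Ms / 4 := by
    rw [eδ, ← hDdef, ← hB]
    have h1 : 2 * Mq / τ * (D * B) + C1 / m + d * D * B ^ 2 ≤ Cκ * D := by
      rw [hCκ]; linarith
    rw [le_div_iff₀ (by positivity)] at hd4
    linarith
  have hexp : Real.exp (y - 1) ≤ 3 ^ m := by
    have h1 : Real.exp (y - 1) ≤ Real.exp m := Real.exp_le_exp.2 (by linarith)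
    have h2 : Real.exp m = Real.exp 1 ^ m := by rw [← Real.exp_nat_mul, mul_one]
    have h3 : Real.exp 1 ≤ 3 := by have := Real.exp_one_lt_d9; linarith
    rw [h2] at h1
    exact h1.trans (by gcongr)
  have hkk : k * (C1 / 3 ^ m) ≤ Ms / 4 := by
    have h1 : C1 / 3 ^ m ≤ C1 / Real.exp (y - 1) := by gcongr
    calc k * (C1 / 3 ^ m) ≤ (Ms / (4 * C1 * Real.exp 1) * Real.exp y) * (C1 / Real.exp (y - 1)) := by
          gcongr
      _ = Ms / 4 := by
          rw [Real.exp_sub]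
          have := Real.exp_pos y
          have := Real.exp_pos 1
          field_simp
  have hfin := h.stab hn hν hm1 hm240 ha0 (by rw [eδ]; linarith)
    (by rw [ha, Real.sq_sqrt (by positivity)]) hC1 rfl hκs hx₀ hq₀ k hkk
  rw [eδ] at hfin
  have h1 : ‖(G^[k] x₀).1‖ ≤ a' := by linarith
  calc _ ≤ a' ^ 2 := by gcongr
    _ = _ := Real.sq_sqrt (by positivity)

end ScaledConst


section RealCalc

open Metric Set

variable {d : ℕ}

theorem second_order_mono {f f' f'' : ℝ → ℝ} (h1 : ∀ t ∈ Icc (0 : ℝ) 1, HasDerivAt f (f' t) t)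
    (h2 : ∀ t ∈ Icc (0 : ℝ) 1, HasDerivAt f' (f'' t) t) (h3 : ∀ t ∈ Icc (0 : ℝ) 1, 0 ≤ f'' t)
    (h0 : f' 0 = 0) : f 0 ≤ f 1 := by
  have m1 : MonotoneOn f' (Icc 0 1) := by
    refine monotoneOn_of_deriv_nonneg (convex_Icc 0 1)
      (fun t ht => (h2 t ht).continuousAt.continuousWithinAt)
      (fun t ht => (h2 t (interior_subset ht)).differentiableAt.differentiableWithinAt)
      fun t ht => ?_
    rw [(h2 t (interior_subset ht)).deriv]
    exact h3 t (interior_subset ht)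
  have m2 : MonotoneOn f (Icc 0 1) := by
    refine monotoneOn_of_deriv_nonneg (convex_Icc 0 1)
      (fun t ht => (h1 t ht).continuousAt.continuousWithinAt)
      (fun t ht => (h1 t (interior_subset ht)).differentiableAt.differentiableWithinAt)
      fun t ht => ?_
    have ht' : t ∈ Icc (0 : ℝ) 1 := interior_subset ht
    rw [(h1 t ht').deriv, ← h0]
    exact m1 (by simp) ht' ht'.1
  exact m2 (by simp) (by simp) zero_le_one

theorem omega_diff {h₀ : (Fin d → ℝ) → ℝ} {ω : (Fin d → ℝ) → Fin d → ℝ} {U : Set (Fin d → ℝ)}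
    (hU : IsOpen U) (han : AnalyticOnNhd ℝ h₀ U)
    (hω : ∀ I ∈ U, HasFDerivAt h₀
      (∑ i, ω I i • (ContinuousLinearMap.proj i : (Fin d → ℝ) →L[ℝ] ℝ)) I)
    {I : Fin d → ℝ} (hI : I ∈ U) : DifferentiableAt ℝ ω I := by
  refine differentiableAt_pi.2 fun i => ?_
  have h1 : DifferentiableAt ℝ (fun I => fderiv ℝ h₀ I (Pi.single i 1)) I :=
    ((han.fderiv I hI).differentiableAt).clm_apply (differentiableAt_const _)
  refine h1.congr_of_eventuallyEq ?_
  filter_upwards [hU.mem_nhds hI] with y hy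
  rw [(hω y hy).fderiv]
  simp [Pi.single_apply]

theorem quad_bounds {h₀ : (Fin d → ℝ) → ℝ} {ω : (Fin d → ℝ) → Fin d → ℝ} {x : Fin d → ℝ}
    {σ ν nh2 : ℝ} (han : AnalyticOnNhd ℝ h₀ (ball x σ))
    (hω : ∀ I ∈ ball x σ, HasFDerivAt h₀
      (∑ i, ω I i • (ContinuousLinearMap.proj i : (Fin d → ℝ) →L[ℝ] ℝ)) I)
    (hconvex : ∀ I ∈ ball x σ, ∀ v : Fin d → ℝ,
      ν * ∑ i, v i ^ 2 ≤ ∑ i, fderiv ℝ ω I v i * v i)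
    (hh2 : ∀ I ∈ ball x σ, ∀ v : Fin d → ℝ,
      ∑ i, fderiv ℝ ω I v i * v i ≤ nh2 * ∑ i, v i ^ 2)
    {v : Fin d → ℝ} (hv : ‖v‖ < σ) :
    ν / 2 * ∑ i, v i ^ 2 ≤ h₀ (x + v) - h₀ x - ∑ i, ω x i * v i ∧
      h₀ (x + v) - h₀ x - ∑ i, ω x i * v i ≤ nh2 / 2 * ∑ i, v i ^ 2 := by
  have hmem : ∀ t ∈ Icc (0 : ℝ) 1, x + t • v ∈ ball x σ := by
    intro t ht
    rw [mem_ball, dist_eq_norm, add_sub_cancel_left, norm_smul, Real.norm_eq_abs, abs_of_nonneg ht.1]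
    have := norm_nonneg v
    nlinarith [ht.2]
  have hpath : ∀ t : ℝ, HasDerivAt (fun t : ℝ => x + t • v) v t := by
    intro t
    have := ((hasDerivAt_id t).smul_const v).const_add x
    simpa using this
  have g1 : ∀ t ∈ Icc (0 : ℝ) 1, HasDerivAt (fun t : ℝ => h₀ (x + t • v))
      (∑ i, ω (x + t • v) i * v i) t := by
    intro t ht
    have := (hω _ (hmem t ht)).comp_hasDerivAt t (hpath t)
    exact this.congr_deriv (by simp)
  have g2 : ∀ t ∈ Icc (0 : ℝ) 1, HasDerivAt (fun t : ℝ => ∑ i, ω (x + t • v) i * v i)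
      (∑ i, fderiv ℝ ω (x + t • v) v i * v i) t := by
    intro t ht
    have hd := (omega_diff isOpen_ball han hω (hmem t ht)).hasFDerivAt.comp_hasDerivAt t (hpath t)
    refine HasDerivAt.fun_sum fun i _ => ?_
    exact ((hasDerivAt_pi.1 hd) i).mul_const _
  set S := ∑ i, v i ^ 2 with hS
  set W := ∑ i, ω x i * v i with hW
  have hlin : ∀ c t : ℝ, HasDerivAt (fun t : ℝ => t * W + c / 2 * t ^ 2 * S) (W + c * t * S) t := by
    intro c t
    have := ((hasDerivAt_id t).mul_const W).add (((hasDerivAt_pow 2 t).const_mul (c / 2)).mul_const S)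
    exact this.congr_deriv (by push_cast; ring)
  have hlin2 : ∀ c t : ℝ, HasDerivAt (fun t : ℝ => W + c * t * S) (c * S) t := by
    intro c t
    have := ((((hasDerivAt_id t).const_mul c).mul_const S).const_add W)
    simpa using this
  constructor
  · have := second_order_mono (f := fun t => h₀ (x + t • v) - (t * W + ν / 2 * t ^ 2 * S))
      (fun t ht => (g1 t ht).sub (hlin ν t)) (fun t ht => (g2 t ht).sub (hlin2 ν t))
      (fun t ht => by have := hconvex _ (hmem t ht) v; linarith) (by simp [hW])
    simp at this
    linarith
  · have := second_order_mono (f := fun t => (t * W + nh2 / 2 * t ^ 2 * S) - h₀ (x + t • v))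
      (fun t ht => (hlin nh2 t).sub (g1 t ht)) (fun t ht => (hlin2 nh2 t).sub (g2 t ht))
      (fun t ht => by have := hh2 _ (hmem t ht) v; linarith) (by simp [hW])
    simp at this
    linarith

theorem norm_sq_le_sum (v : Fin d → ℝ) (hd : 1 ≤ d) : ‖v‖ ^ 2 ≤ ∑ i, v i ^ 2 := by
  have : Nonempty (Fin d) := ⟨⟨0, hd⟩⟩
  obtain ⟨i, hi⟩ : ∃ i, ‖v‖ = ‖v i‖ := by
    obtain ⟨i, -, hi⟩ := Finset.exists_max_image (Finset.univ : Finset (Fin d)) (fun i => ‖v i‖)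
      Finset.univ_nonempty
    refine ⟨i, le_antisymm ?_ (norm_le_pi_norm v i)⟩
    exact (pi_norm_le_iff_of_nonneg (norm_nonneg _)).2 fun j => hi j (Finset.mem_univ j)
  rw [hi, Real.norm_eq_abs, sq_abs]
  exact Finset.single_le_sum (f := fun i => v i ^ 2) (fun _ _ => sq_nonneg _) (Finset.mem_univ i)

theorem sum_le_norm_sq (v : Fin d → ℝ) : ∑ i, v i ^ 2 ≤ d * ‖v‖ ^ 2 := by
  have : ∀ i ∈ Finset.univ, v i ^ 2 ≤ ‖v‖ ^ 2 := fun i _ => by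
    have h := norm_le_pi_norm v i
    rw [← sq_abs, ← Real.norm_eq_abs]
    gcongr
  refine (Finset.sum_le_sum this).trans (le_of_eq ?_)
  simp

/-- Gradient of a complex extension at real points. -/
theorem cext_grad {h₀ : (Fin d → ℝ) → ℝ} {g : (Fin d → ℂ) → ℂ} {I w : Fin d → ℝ}
    (hg : DifferentiableAt ℂ g (cx d I)) (heq : ∀ᶠ y in nhds I, g (cx d y) = h₀ y)
    (hw : HasFDerivAt h₀
      (∑ i, w i • (ContinuousLinearMap.proj i : (Fin d → ℝ) →L[ℝ] ℝ)) I) (i : Fin d) :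
    fderiv ℂ g (cx d I) (Pi.single i 1) = w i := by
  have hpath : HasDerivAt (fun t : ℝ => I + t • (Pi.single i 1 : Fin d → ℝ)) (Pi.single i 1) 0 := by
    have := ((hasDerivAt_id (0 : ℝ)).smul_const (Pi.single i 1 : Fin d → ℝ)).const_add I
    simpa using this
  have hpathc : HasDerivAt (fun t : ℝ => cx d (I + t • (Pi.single i 1 : Fin d → ℝ)))
      (Pi.single i 1 : Fin d → ℂ) 0 := by
    refine hasDerivAt_pi.2 fun j => ?_
    have := ((hasDerivAt_pi.1 hpath) j).ofReal_comp
    refine this.congr_deriv ?_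
    by_cases hj : j = i
    · subst hj; simp
    · simp [Pi.single_eq_of_ne hj]
  have h1 : HasDerivAt (fun t : ℝ => ((h₀ (I + t • (Pi.single i 1 : Fin d → ℝ)) : ℝ) : ℂ)) (w i : ℂ) 0 := by
    have h2 : HasDerivAt (fun t : ℝ => h₀ (I + t • (Pi.single i 1 : Fin d → ℝ))) (w i) 0 := by
      have := HasFDerivAt.comp_hasDerivAt (0 : ℝ) (f := fun t : ℝ => I + t • (Pi.single i 1 : Fin d → ℝ))
        (by simpa using hw) hpath
      exact this.congr_deriv (by simp [Pi.single_apply])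
    exact h2.ofReal_comp
  have h3 : HasDerivAt (fun t : ℝ => g (cx d (I + t • (Pi.single i 1 : Fin d → ℝ))))
      (fderiv ℂ g (cx d I) (Pi.single i 1)) 0 := by
    have := HasFDerivAt.comp_hasDerivAt (0 : ℝ) (l := g)
      (f := fun t : ℝ => cx d (I + t • (Pi.single i 1 : Fin d → ℝ)))
      (l' := (fderiv ℂ g (cx d I)).restrictScalars ℝ)
      (by simpa using hg.hasFDerivAt.restrictScalars ℝ) hpathc
    exact this
  have h4 : (fun t : ℝ => g (cx d (I + t • (Pi.single i 1 : Fin d → ℝ)))) =ᶠ[nhds 0]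
      fun t : ℝ => ((h₀ (I + t • (Pi.single i 1 : Fin d → ℝ)) : ℝ) : ℂ) := by
    have hc := hpath.continuousAt
    have hc' : Filter.Tendsto (fun t : ℝ => I + t • (Pi.single i 1 : Fin d → ℝ)) (nhds 0) (nhds I) := by
      simpa [ContinuousAt] using hc
    exact hc'.eventually heq
  exact h3.unique (HasDerivAt.congr_of_eventuallyEq h1 h4)

end RealCalc


section Assembly

open Metric Set

variable {d : ℕ}

/-- Second order Taylor bound. -/
theorem taylor_two {g : (Fin d → ℂ) → ℂ} {c z : Fin d → ℂ} {ρ M : ℝ} (hρ : 0 < ρ)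
    (hg : DifferentiableOn ℂ g (ball c ρ)) (hb : ∀ z ∈ ball c ρ, ‖g z‖ ≤ M)
    (hz : z ∈ ball c ρ) :
    ‖g z - g c - fderiv ℂ g c (z - c)‖ ≤ 4 * M * (‖z - c‖ / ρ) ^ 2 := by
  have hcc : c ∈ ball c ρ := mem_ball_self hρ
  have hA := ni_fderiv hρ hg hb
  have hgc : DifferentiableAt ℂ g c := hg.differentiableAt (isOpen_ball.mem_nhds hcc)
  have key := Complex.dist_le_mul_div_pow_of_mapsTo_ball_of_isLittleO (n := 1)
    (f := fun w => g w - fderiv ℂ g c (w - c)) (c := c) (R₁ := ρ) (R₂ := 4 * M) (z := z)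
    (hg.sub ((fderiv ℂ g c).differentiable.comp
      (differentiable_id.sub_const c)).differentiableOn)
    (fun w hw => by
      rw [mem_closedBall, dist_eq_norm]
      have h1 := hb w hw
      have h2 := hb c hcc
      have h3 : ‖fderiv ℂ g c (w - c)‖ ≤ 2 * M := by
        refine ((fderiv ℂ g c).le_opNorm _).trans ?_
        have hw' : ‖w - c‖ ≤ ρ := by rw [← dist_eq_norm]; exact (mem_ball.1 hw).le
        have hM : 0 ≤ M := (norm_nonneg _).trans h2
        calc ‖fderiv ℂ g c‖ * ‖w - c‖ ≤ (2 * M / ρ) * ρ := by gcongr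
          _ = 2 * M := by field_simp
      simp only [sub_self, map_zero, sub_zero]
      have := norm_sub_le (g w - fderiv ℂ g c (w - c)) (g c)
      have := norm_sub_le (g w) (fderiv ℂ g c (w - c))
      linarith)
    (by
      have := hgc.hasFDerivAt.isLittleO
      simp only [sub_self, map_zero, sub_zero, pow_one]
      rw [Asymptotics.isLittleO_norm_right]
      refine this.congr_left fun w => by ring)
    hz
  simp only [sub_self, map_zero, sub_zero, dist_eq_norm] at key
  refine le_trans (le_of_eq ?_) key
  congr 1
  ring

theorem dir_cauchy {f : CPhase d → ℂ} {z v : CPhase d} {r M : ℝ} (hr : 0 < r)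
    (h1 : ∀ t : ℂ, ‖t‖ < r → DifferentiableAt ℂ f (z + t • v))
    (h2 : ∀ t : ℂ, ‖t‖ < r → ‖f (z + t • v)‖ ≤ M) : ‖fderiv ℂ f z v‖ ≤ 2 * M / r := by
  have hl : ∀ t : ℂ, HasDerivAt (fun t : ℂ => z + t • v) v t := by
    intro t
    have := ((hasDerivAt_id t).smul_const v).const_add z
    simpa using this
  have h0 : DifferentiableAt ℂ f z := by simpa using h1 0 (by simpa using hr)
  have hd0 : HasDerivAt (fun t : ℂ => f (z + t • v)) (fderiv ℂ f z v) 0 :=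
    HasFDerivAt.comp_hasDerivAt (0 : ℂ) (f := fun t : ℂ => z + t • v) (l := f)
      (by simpa using h0.hasFDerivAt) (hl 0)
  have := ni_fderiv (g := fun t : ℂ => f (z + t • v)) (c := 0) hr (M := M)
    (fun t ht => ((h1 t (by simpa using ht)).comp t (hl t).differentiableAt).differentiableWithinAt)
    (fun t ht => h2 t (by simpa using ht))
  have e : fderiv ℂ f z v = fderiv ℂ (fun t : ℂ => f (z + t • v)) 0 1 := by
    rw [hd0.hasFDerivAt.fderiv]; simp
  rw [e]
  refine (ContinuousLinearMap.le_opNorm _ _).trans ?_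
  simpa using this

theorem real_dir {f : CPhase d → ℂ} {z v : CPhase d} (hf : DifferentiableAt ℂ f z)
    (h : ∀ᶠ t : ℝ in nhds 0, (f (z + (t : ℂ) • v)).im = 0) : (fderiv ℂ f z v).im = 0 := by
  have hl : HasDerivAt (fun t : ℝ => z + (t : ℂ) • v) v 0 := by
    have := ((hasDerivAt_id (0 : ℝ)).ofReal_comp.smul_const v).const_add z
    simpa using this
  have h1 : HasDerivAt (fun t : ℝ => f (z + (t : ℂ) • v)) (fderiv ℂ f z v) 0 := by
    have := HasFDerivAt.comp_hasDerivAt (0 : ℝ) (l := f)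
      (f := fun t : ℝ => z + (t : ℂ) • v)
      (l' := (fderiv ℂ f z).restrictScalars ℝ)
      (by simpa using hf.hasFDerivAt.restrictScalars ℝ) hl
    exact this
  have h2 : HasDerivAt (fun t : ℝ => (f (z + (t : ℂ) • v)).im) (fderiv ℂ f z v).im 0 :=
    Complex.imCLM.hasFDerivAt.comp_hasDerivAt (0 : ℝ) h1
  exact h2.unique (HasDerivAt.congr_of_eventuallyEq (hasDerivAt_const (0 : ℝ) (0 : ℝ)) h)

end Assembly


section Assembly2

open Metric Set

variable {d : ℕ}

/-- Scaled second order remainder. -/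
noncomputable def qfun (hC : (Fin d → ℂ) → ℂ) (c : Fin d → ℂ) (μ : ℝ) (J : Fin d → ℂ) : ℂ :=
  ((μ : ℂ) ^ 2)⁻¹ * (hC (c + (μ : ℂ) • J) - hC c - fderiv ℂ hC c ((μ : ℂ) • J))

/-- Scaled perturbation. -/
def ufun (s : CPhase d → ℂ) (c : Fin d → ℂ) (μ : ℝ) (z : CPhase d) : ℂ :=
  s (c + (μ : ℂ) • z.1, z.2)

/-- Scaled map. -/
noncomputable def Gfun (F : RPhase d → RPhase d) (I : Fin d → ℝ) (μ : ℝ) (x : RPhase d) : RPhase d :=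
  (μ⁻¹ • ((F (I + μ • x.1, x.2)).1 - I), (F (I + μ • x.1, x.2)).2)

theorem qfun_hasFDerivAt {hC : (Fin d → ℂ) → ℂ} {c : Fin d → ℂ} {μ : ℝ} {J : Fin d → ℂ}
    (h : DifferentiableAt ℂ hC (c + (μ : ℂ) • J)) :
    HasFDerivAt (qfun hC c μ) (((μ : ℂ) ^ 2)⁻¹ • (((fderiv ℂ hC (c + (μ : ℂ) • J)).comp
      ((μ : ℂ) • ContinuousLinearMap.id ℂ (Fin d → ℂ))) -
      (fderiv ℂ hC c).comp ((μ : ℂ) • ContinuousLinearMap.id ℂ (Fin d → ℂ)))) J := by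
  have hl : HasFDerivAt (fun J : Fin d → ℂ => (μ : ℂ) • J)
      ((μ : ℂ) • ContinuousLinearMap.id ℂ (Fin d → ℂ)) J :=
    ((μ : ℂ) • ContinuousLinearMap.id ℂ (Fin d → ℂ)).hasFDerivAt
  have h1 := h.hasFDerivAt.comp J (hl.const_add c)
  have h2 := (fderiv ℂ hC c).hasFDerivAt.comp J hl
  exact ((h1.sub_const (hC c)).sub h2).const_mul _

theorem ufun_hasFDerivAt {s : CPhase d → ℂ} {c : Fin d → ℂ} {μ : ℝ} {z : CPhase d}
    (h : DifferentiableAt ℂ s (c + (μ : ℂ) • z.1, z.2)) :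
    HasFDerivAt (ufun s c μ) ((fderiv ℂ s (c + (μ : ℂ) • z.1, z.2)).comp
      (((μ : ℂ) • ContinuousLinearMap.fst ℂ (Fin d → ℂ) (Fin d → ℂ)).prod
        (ContinuousLinearMap.snd ℂ (Fin d → ℂ) (Fin d → ℂ)))) z := by
  have h1 : HasFDerivAt (fun z : CPhase d => (c + (μ : ℂ) • z.1, z.2))
      (((μ : ℂ) • ContinuousLinearMap.fst ℂ (Fin d → ℂ) (Fin d → ℂ)).prod
        (ContinuousLinearMap.snd ℂ (Fin d → ℂ) (Fin d → ℂ))) z :=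
    ((((μ : ℂ) • ContinuousLinearMap.fst ℂ (Fin d → ℂ) (Fin d → ℂ)).hasFDerivAt).const_add c).prodMk
      hasFDerivAt_snd
  exact HasFDerivAt.comp z (f := fun z : CPhase d => (c + (μ : ℂ) • z.1, z.2)) h.hasFDerivAt h1

theorem scaled_fderiv {hC : (Fin d → ℂ) → ℂ} {s : CPhase d → ℂ} {c : Fin d → ℂ} {μ : ℝ}
    {z : CPhase d} (hμ : 0 < μ)
    (h : DifferentiableAt ℂ hC (c + (μ : ℂ) • z.1))
    (h' : DifferentiableAt ℂ s (c + (μ : ℂ) • z.1, z.2)) (v : CPhase d) :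
    fderiv ℂ (fun z => qfun hC c μ z.1 + ufun s c μ z) z v =
      (μ : ℂ)⁻¹ * (fderiv ℂ hC (c + (μ : ℂ) • z.1) v.1 - fderiv ℂ hC c v.1) +
      fderiv ℂ s (c + (μ : ℂ) • z.1, z.2) ((μ : ℂ) • v.1, v.2) := by
  have h1 := (qfun_hasFDerivAt h).comp z hasFDerivAt_fst
  have h2 := h1.add (ufun_hasFDerivAt h')
  have h3 : HasFDerivAt (fun z => qfun hC c μ z.1 + ufun s c μ z) _ z := h2
  rw [h3.fderiv]
  have : (μ : ℂ) ≠ 0 := by exact_mod_cast hμ.ne'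
  simp
  field_simp

theorem build_scaled (hd : 1 ≤ d) {L τ ρ M0 Mq Ms μ ν nh2 σ r : ℝ} {n : ℕ} {I : Fin d → ℝ}
    {h₀ : (Fin d → ℝ) → ℝ} {ω : (Fin d → ℝ) → Fin d → ℝ} {hC : (Fin d → ℂ) → ℂ}
    {s : CPhase d → ℂ} {F : RPhase d → RPhase d}
    (hτ : 0 < τ) (hL : 0 ≤ L) (hμ : 0 < μ) (hr : 0 < r) (hρ : 0 < ρ) (hσ : 0 < σ) (hMs : 0 ≤ Ms)
    (hM0 : 0 ≤ M0) (hν : 0 < ν)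
    (hMq : Mq = 4 * M0 / ρ ^ 2 * (L + 4 * τ) ^ 2)
    (hτr : 4 * τ ≤ r) (hμσ : μ * (L + 4 * τ) ≤ σ / 2) (hμρ : μ * (L + 4 * τ) ≤ ρ)
    (hμτ : μ * (2 * Ms / r) ≤ τ)
    (small1 : μ * (2 * (Mq + Ms) / τ) ≤ τ / 2) (small2 : μ * (4 * (Mq + Ms) / τ ^ 2) ≤ 1 / 2)
    (han : AnalyticOnNhd ℝ h₀ (ball I σ))
    (hω : ∀ y ∈ ball I σ, HasFDerivAt h₀
      (∑ i, ω y i • (ContinuousLinearMap.proj i : (Fin d → ℝ) →L[ℝ] ℝ)) y)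
    (hconvex : ∀ y ∈ ball I σ, ∀ v : Fin d → ℝ,
      ν * ∑ i, v i ^ 2 ≤ ∑ i, fderiv ℝ ω y v i * v i)
    (hh2 : ∀ y ∈ ball I σ, ∀ v : Fin d → ℝ,
      ∑ i, fderiv ℝ ω y v i * v i ≤ nh2 * ∑ i, v i ^ 2)
    (hCa : AnalyticOnNhd ℂ hC (ball (cx d I) ρ)) (hCb : ∀ z ∈ ball (cx d I) ρ, ‖hC z‖ ≤ M0)
    (hCr : ∀ y ∈ ball I ρ, hC (cx d y) = h₀ y)
    (hsa : ∀ z : CPhase d, ‖z.1 - cx d I‖ ≤ σ → (∀ i, |(z.2 i).im| ≤ r) → AnalyticAt ℂ s z)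
    (hsb : ∀ z : CPhase d, ‖z.1 - cx d I‖ ≤ σ → (∀ i, |(z.2 i).im| ≤ r) → ‖s z‖ ≤ Ms)
    (hsr : ∀ x : RPhase d, ‖x.1 - I‖ ≤ σ → (s (iota x)).im = 0)
    (hF : ∀ x : RPhase d, ‖x.1 - I‖ ≤ σ / 2 →
      (∀ i, (F x).1 i = x.1 i -
        μ ^ 2 * (fderiv ℂ s (cx d (F x).1, cx d x.2) (0, Pi.single i 1)).re) ∧
      (∀ i, (F x).2 i = x.2 i + ω (F x).1 i +
        μ ^ 2 * (fderiv ℂ s (cx d (F x).1, cx d x.2) (Pi.single i 1, 0)).re) ∧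
      (∀ i, ‖fderiv ℂ s (cx d (F x).1, cx d x.2) (0, Pi.single i 1)‖ ≤ 2 * Ms / r))
    (hlift : ∀ x : RPhase d, ∀ e : Fin d → ℤ,
      F (x.1, x.2 + fun i => (e i : ℝ)) = ((F x).1, (F x).2 + fun i => (e i : ℝ)))
    (hres : ∀ i, ∃ z : ℤ, (n : ℝ) * ω I i = z) :
    Scaled d L τ Mq Ms μ ν n (qfun hC (cx d I) μ) (ufun s (cx d I) μ)
      (fun J => (μ ^ 2)⁻¹ * (h₀ (I + μ • J) - h₀ I - ∑ i, ω I i * (μ • J) i))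
      (Gfun F I μ) (ω I) := by
  have hμC : (μ : ℂ) ≠ 0 := by exact_mod_cast hμ.ne'
  have hLτ : 0 < L + 4 * τ := by linarith
  have nsm : ∀ J : Fin d → ℂ, ‖(μ : ℂ) • J‖ = μ * ‖J‖ := fun J => by
    rw [norm_smul, Complex.norm_real, Real.norm_eq_abs, abs_of_pos hμ]
  have memC : ∀ J : Fin d → ℂ, ‖J‖ < L + 4 * τ → cx d I + (μ : ℂ) • J ∈ ball (cx d I) ρ := by
    intro J hJ
    rw [mem_ball, dist_eq_norm, add_sub_cancel_left, nsm]
    exact lt_of_lt_of_le (by gcongr) hμρ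
  have memS : ∀ J : Fin d → ℂ, ‖J‖ < L + 4 * τ → ‖cx d I + (μ : ℂ) • J - cx d I‖ ≤ σ := by
    intro J hJ
    rw [add_sub_cancel_left, nsm]
    have : μ * ‖J‖ ≤ μ * (L + 4 * τ) := by gcongr
    linarith
  have hdC : ∀ J : Fin d → ℂ, ‖J‖ < L + 4 * τ → DifferentiableAt ℂ hC (cx d I + (μ : ℂ) • J) :=
    fun J hJ => (hCa _ (memC J hJ)).differentiableAt
  have hsA : ∀ z ∈ Vdom d L (4 * τ), AnalyticAt ℂ s (cx d I + (μ : ℂ) • z.1, z.2) := fun z hz =>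
    hsa _ (memS _ hz.1) fun i => (hz.2 i).le.trans hτr
  have ubd : ∀ w ∈ Vdom d L (4 * τ), ‖ufun s (cx d I) μ w‖ ≤ Ms := fun z hz =>
    hsb _ (memS _ hz.1) fun i => (hz.2 i).le.trans hτr
  have qbd : ∀ J ∈ ball (0 : Fin d → ℂ) (L + 4 * τ), ‖qfun hC (cx d I) μ J‖ ≤ Mq := by
    intro J hJ
    have hJ' : ‖J‖ < L + 4 * τ := by simpa using hJ
    have := taylor_two hρ hCa.differentiableOn hCb (memC J hJ')
    rw [add_sub_cancel_left, nsm] at this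
    rw [qfun, norm_mul, norm_inv, norm_pow, Complex.norm_real, Real.norm_eq_abs, abs_of_pos hμ, hMq]
    calc (μ ^ 2)⁻¹ * _ ≤ (μ ^ 2)⁻¹ * (4 * M0 * (μ * ‖J‖ / ρ) ^ 2) := by gcongr
      _ = 4 * M0 / ρ ^ 2 * ‖J‖ ^ 2 := by field_simp
      _ ≤ _ := by gcongr
  have qan : ∀ J : Fin d → ℂ, ‖J‖ < L + 4 * τ → AnalyticAt ℂ (qfun hC (cx d I) μ) J := by
    intro J hJ
    have hl : AnalyticAt ℂ (fun J : Fin d → ℂ => (μ : ℂ) • J) J :=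
      ((μ : ℂ) • ContinuousLinearMap.id ℂ (Fin d → ℂ)).analyticAt J
    have h1 : AnalyticAt ℂ (fun J => hC (cx d I + (μ : ℂ) • J)) J :=
      AnalyticAt.fun_comp (hCa _ (memC J hJ)) (analyticAt_const.add hl)
    have h2 : AnalyticAt ℂ (fun J => fderiv ℂ hC (cx d I) ((μ : ℂ) • J)) J :=
      AnalyticAt.fun_comp ((fderiv ℂ hC (cx d I)).analyticAt _) hl
    exact analyticAt_const.mul ((h1.sub analyticAt_const).sub h2)
  have uan : ∀ z ∈ Vdom d L (4 * τ), AnalyticAt ℂ (ufun s (cx d I) μ) z := by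
    intro z hz
    have hl : AnalyticAt ℂ (fun z : CPhase d => (cx d I + (μ : ℂ) • z.1, z.2)) z :=
      (analyticAt_const.add (((μ : ℂ) • ContinuousLinearMap.fst ℂ (Fin d → ℂ) (Fin d → ℂ)).analyticAt z)).prod
        analyticAt_snd
    exact AnalyticAt.fun_comp (g := s) (f := fun z : CPhase d => (cx d I + (μ : ℂ) • z.1, z.2))
      (hsA z hz) hl
  have gen : GenHyp d L τ (Mq + Ms) μ
      (fun z => qfun hC (cx d I) μ z.1 + ufun s (cx d I) μ z) := by
    refine ⟨hτ, hL, hμ, by rw [hMq]; positivity, fun z hz => ?_, fun z hz => ?_, small1, small2⟩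
    · exact (AnalyticAt.fun_comp (qan _ hz.1) analyticAt_fst).add (uan z hz)
    · exact (norm_add_le _ _).trans (add_le_add (qbd _ (by simpa using hz.1)) (ubd _ hz))
  have memR : ∀ J : Fin d → ℝ, ‖J‖ < L + 4 * τ → ‖μ • J‖ < σ ∧ ‖μ • J‖ < ρ ∧ ‖μ • J‖ ≤ σ / 2 := by
    intro J hJ
    have e : ‖μ • J‖ = μ * ‖J‖ := by rw [norm_smul, Real.norm_eq_abs, abs_of_pos hμ]
    have : μ * ‖J‖ < μ * (L + 4 * τ) := by gcongr
    rw [e]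
    exact ⟨by linarith, by linarith, by linarith⟩
  have gradh : ∀ J : Fin d → ℝ, ‖J‖ < L + 4 * τ → ∀ i,
      fderiv ℂ hC (cx d (I + μ • J)) (Pi.single i 1) = ω (I + μ • J) i := by
    intro J hJ i
    obtain ⟨m1, m2, m3⟩ := memR J hJ
    refine cext_grad ?_ ?_ (hω _ (by simpa [dist_eq_norm] using m1)) i
    · rw [cx_add, cx_smul]; exact hdC _ (by rwa [norm_cx])
    · have : ball I ρ ∈ nhds (I + μ • J) := isOpen_ball.mem_nhds (by simpa [dist_eq_norm] using m2)
      filter_upwards [this] with y hy using hCr y hy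
  have gradh0 : ∀ i, fderiv ℂ hC (cx d I) (Pi.single i 1) = ω I i := by
    intro i
    have := gradh 0 (by simpa using hLτ) i
    simpa using this
  refine ⟨gen, fun J hJ => (qan J (by simpa using hJ)).differentiableAt.differentiableWithinAt,
    qbd, ubd, ?_, ?_, ?_, ?_, hres⟩
  · intro J hJ
    obtain ⟨m1, m2, m3⟩ := memR J (by linarith)
    have e1 : cx d I + (μ : ℂ) • cx d J = cx d (I + μ • J) := by rw [cx_add, cx_smul]
    have e2 : fderiv ℂ hC (cx d I) ((μ : ℂ) • cx d J) = ∑ i, (ω I i : ℂ) * (μ * J i) := by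
      have : (μ : ℂ) • cx d J = ∑ i, ((μ : ℂ) * J i) • (Pi.single i 1 : Fin d → ℂ) := by
        ext j
        simp [cx, Finset.sum_apply, Pi.single_apply]
      rw [this, map_sum]
      refine Finset.sum_congr rfl fun i _ => ?_
      rw [map_smul, gradh0, smul_eq_mul]; ring
    rw [qfun, e1, e2, hCr _ (by simpa [dist_eq_norm] using m2), hCr I (mem_ball_self hρ)]
    push_cast
    simp
  · intro J hJ
    obtain ⟨m1, m2, m3⟩ := memR J (by linarith)
    have h1 := (quad_bounds han hω hconvex hh2 m1).1
    have h2 := norm_sq_le_sum (μ • J) hd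
    have e : ‖μ • J‖ = μ * ‖J‖ := by rw [norm_smul, Real.norm_eq_abs, abs_of_pos hμ]
    rw [e] at h2
    have h3 : ν / 2 * (μ * ‖J‖) ^ 2 ≤ h₀ (I + μ • J) - h₀ I - ∑ i, ω I i * (μ • J) i :=
      le_trans (by gcongr) h1
    calc ν / 2 * ‖J‖ ^ 2 = (μ ^ 2)⁻¹ * (ν / 2 * (μ * ‖J‖) ^ 2) := by field_simp
      _ ≤ _ := by gcongr
  · intro x hx
    obtain ⟨m1, m2, m3⟩ := memR x.1 (by linarith)
    obtain ⟨f1, f2, f3⟩ := hF (I + μ • x.1, x.2) (by simpa using m3)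
    set Y := F (I + μ • x.1, x.2) with hY
    obtain ⟨J, hJ⟩ : ∃ J, J = μ⁻¹ • (Y.1 - I) := ⟨_, rfl⟩
    have eY : Y.1 = I + μ • J := by rw [hJ, smul_smul, mul_inv_cancel₀ hμ.ne']; simp
    have eG : Gfun F I μ x = (J, Y.2) := by rw [hJ]; rfl
    have hdist : ‖J - x.1‖ ≤ τ := by
      refine (pi_norm_le_iff_of_nonneg hτ.le).2 fun i => ?_
      have g1 := f1 i
      have : (J - x.1) i = - (μ * (fderiv ℂ s (cx d Y.1, cx d x.2) (0, Pi.single i 1)).re) := by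
        simp only [hJ, Pi.sub_apply, Pi.smul_apply, smul_eq_mul]
        rw [g1]
        simp only [Pi.add_apply, Pi.smul_apply, smul_eq_mul]
        field_simp
        ring
      rw [this, norm_neg, norm_mul, Real.norm_eq_abs, abs_of_pos hμ, Real.norm_eq_abs]
      refine le_trans ?_ hμτ
      have := (Complex.abs_re_le_norm _).trans (f3 i)
      gcongr
    have hJn : ‖J‖ < L + 2 * τ := by
      have := norm_add_le (J - x.1) x.1
      rw [sub_add_cancel] at this
      linarith
    have hJ4 : ‖J‖ < L + 4 * τ := by linarith
    obtain ⟨k1, k2, k3⟩ := memR J hJ4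
    have ec : cx d I + (μ : ℂ) • cx d J = cx d Y.1 := by rw [eY, cx_add, cx_smul]
    have hw : (cx d J, cx d x.2) ∈ Vdom d L (2 * τ) := by
      refine ⟨by simpa [norm_cx] using hJn, fun i => ?_⟩
      simp [cx]; linarith
    have hw4 : (cx d J, cx d x.2) ∈ Vdom d L (4 * τ) := Vdom_mono (by linarith) hw
    have hdS : DifferentiableAt ℂ s (cx d Y.1, cx d x.2) := by
      have := (hsA _ hw4).differentiableAt
      simpa only [ec] using this
    have hdH : DifferentiableAt ℂ hC (cx d Y.1) := by
      have := hdC (cx d J) (by rwa [norm_cx])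
      rwa [ec] at this
    have fdK := fun v : CPhase d => scaled_fderiv (z := (cx d J, cx d x.2)) (c := cx d I) hμ
      (by simpa only [ec] using hdH) (by simpa only [ec] using hdS) v
    simp only [ec] at fdK
    have re1 : ∀ v : RPhase d, (fderiv ℂ s (cx d Y.1, cx d x.2) (iota v)).im = 0 := by
      intro v
      refine real_dir hdS ?_
      have hcont : ContinuousAt (fun t : ℝ => ‖Y.1 + t • v.1 - I‖) 0 := by fun_prop
      have : ∀ᶠ t : ℝ in nhds 0, ‖Y.1 + t • v.1 - I‖ < σ := by
        refine hcont.eventually_lt continuousAt_const ?_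
        rw [eY]; simpa using k1
      filter_upwards [this] with t ht
      have := hsr (Y.1 + t • v.1, x.2 + t • v.2) ht.le
      simpa [iota, cx_add, cx_smul] using this
    have iotaS : ∀ i, iota ((0, Pi.single i 1) : RPhase d) = (0, Pi.single i 1) ∧
        iota ((Pi.single i 1, 0) : RPhase d) = (Pi.single i 1, 0) := by
      intro i
      have e1 : cx d (0 : Fin d → ℝ) = 0 := by ext; simp [cx]
      have e2 : cx d (Pi.single i 1 : Fin d → ℝ) = Pi.single i 1 := by
        ext j
        by_cases hj : j = i
        · subst hj; simp [cx]
        · simp [cx, Pi.single_eq_of_ne hj]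
      simp [iota, e1, e2]
    have ofre : ∀ z : ℂ, z.im = 0 → ((z.re : ℝ) : ℂ) = z := fun z hz =>
      Complex.ext (by simp) (by simp [hz])
    have rP : ∀ i, (((fderiv ℂ s (cx d Y.1, cx d x.2) (0, Pi.single i 1)).re : ℝ) : ℂ) =
        fderiv ℂ s (cx d Y.1, cx d x.2) (0, Pi.single i 1) := fun i =>
      ofre _ (by rw [← (iotaS i).1]; exact re1 _)
    have rJ : ∀ i, (((fderiv ℂ s (cx d Y.1, cx d x.2) (Pi.single i 1, 0)).re : ℝ) : ℂ) =
        fderiv ℂ s (cx d Y.1, cx d x.2) (Pi.single i 1, 0) := fun i =>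
      ofre _ (by rw [← (iotaS i).2]; exact re1 _)
    have hz : iota x ∈ Vdom d L τ := by
      refine ⟨by simpa [iota, norm_cx] using hx, fun i => ?_⟩
      simp [iota, cx]; exact hτ
    have hgi : GenHyp.ginv L τ μ (fun z => qfun hC (cx d I) μ z.1 + ufun s (cx d I) μ z) (iota x)
        = (cx d J, cx d x.2) := by
      refine gen.ginv_unique hz hw ?_
      ext i
      · simp only [GenHyp.psi, gradPhi, fdK, Prod.fst_add, Pi.add_apply, Pi.smul_apply, iota]
        simp only [map_zero, sub_zero, mul_zero, zero_add, smul_zero, smul_eq_mul]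
        rw [← rP i]
        have g1 := f1 i
        rw [eY] at g1
        simp only [Pi.add_apply, Pi.smul_apply, smul_eq_mul] at g1
        rw [← eY] at g1
        simp only [cx]
        norm_cast
        have hm := hμ.ne'
        apply mul_left_cancel₀ hm
        linear_combination g1
      · simp [GenHyp.psi, iota]
    rw [GenHyp.gmap, hgi, eG]
    ext i
    · simp [iota]
    · simp only [gradJ, fdK, Pi.add_apply, Pi.smul_apply, iota]
      have g0 := gradh J hJ4 i
      rw [← eY] at g0
      rw [g0, gradh0]
      have el : (((μ : ℂ) • (Pi.single i 1 : Fin d → ℂ), (0 : Fin d → ℂ)) : CPhase d) =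
        (μ : ℂ) • ((Pi.single i 1, 0) : CPhase d) := by simp
      rw [el, map_smul, ← rJ i]
      have g2 := f2 i
      simp only [smul_eq_mul, cx]
      rw [g2]
      push_cast
      field_simp
      ring
  · intro x e
    have := hlift (I + μ • x.1, x.2) e
    simp only at this
    simp only [Gfun]
    rw [this]

end Assembly2


section Assembly3

open Metric Set

variable {d : ℕ}

theorem Gfun_iter {F : RPhase d → RPhase d} {I : Fin d → ℝ} {μ : ℝ} (hμ : μ ≠ 0) (x : RPhase d)
    (k : ℕ) : (Gfun F I μ)^[k] x =
      (μ⁻¹ • ((F^[k] (I + μ • x.1, x.2)).1 - I), (F^[k] (I + μ • x.1, x.2)).2) := by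
  induction k with
  | zero => simp [smul_smul, inv_mul_cancel₀ hμ]
  | succ k ih =>
    rw [Function.iterate_succ_apply', ih, Function.iterate_succ_apply', Gfun]
    simp [smul_smul, mul_inv_cancel₀ hμ]

theorem small_exists (A : ℝ) {B : ℝ} (hB : 0 < B) :
    ∃ μ₀ > 0, ∀ μ : ℝ, 0 < μ → μ ≤ μ₀ → μ * A ≤ B := by
  refine ⟨B / (|A| + 1), by positivity, fun μ h1 h2 => ?_⟩
  rw [le_div_iff₀ (by positivity)] at h2
  have := le_abs_self A
  nlinarith

theorem rpow_small {ε D₀ : ℝ} {n : ℕ} (hε : 0 < ε) (hD : 0 < D₀)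
    (h1 : ε ≤ D₀ ^ (2 * ((d : ℝ) + 1))) (hn : (n : ℝ) < ε ^ (-((d : ℝ) / (2 * ((d : ℝ) + 1))))) :
    n * √ε ≤ D₀ := by
  have hs : 0 < √ε := Real.sqrt_pos.2 hε
  have hd1 : (0 : ℝ) < (d : ℝ) + 1 := by positivity
  calc n * √ε ≤ ε ^ (-((d : ℝ) / (2 * ((d : ℝ) + 1)))) * √ε := by gcongr
    _ = ε ^ (1 / (2 * ((d : ℝ) + 1))) := by
      rw [Real.sqrt_eq_rpow, ← Real.rpow_add hε]
      congr 1
      field_simp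
      ring
    _ ≤ (D₀ ^ (2 * ((d : ℝ) + 1))) ^ (1 / (2 * ((d : ℝ) + 1))) := by gcongr
    _ = D₀ := by
      rw [← Real.rpow_mul hD.le, mul_one_div, div_self (by positivity), Real.rpow_one]

theorem cx_dist (a b : Fin d → ℝ) : dist (cx d a) (cx d b) = dist a b := by
  rw [dist_eq_norm, dist_eq_norm, ← cx_sub, norm_cx]

end Assembly3

/-- **Improved stability in the nucleus of a resonance.**
In the Nekhoroshev setting, with `‖s‖ = M_s` the uniform bound of the perturbation on
`𝒟_F`, `‖h₀''‖ ≤ n_{h''}` a bound for the Hessian quadratic form of `h₀` and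
`ν₂ = d·n_{h''}`: there are constants `c₄, c₅ > 0`, independent of the resonance, and
`ε₀ > 0` such that if `0 < ε ≤ ε₀`, `n < ε^{−d/(2(d+1))}`, `n ω(I*) ∈ ℤ^d` with
`I* ∈ B_R`, and `|I₀ − I*|² ≤ 2 ν₂^{−1} ‖s‖ ε`, then
`|I_k − I*|² ≤ 11 ν^{−1} ‖s‖ ε` for all `0 ≤ k ≤ c₄ exp(c₅/√(n²ε))`. -/
theorem improved_stability_in_resonance_nucleus (d : ℕ) (hd : 1 ≤ d)
    (R σ r ν εbar Ms : ℝ)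
    (hR : 0 < R) (hσ : 0 < σ) (hr : 0 < r) (hν : 0 < ν) (hεbar : 0 < εbar)
    (c₀ : Fin d → ℝ) (BR : Set (Fin d → ℝ)) (hBR : BR = Metric.closedBall c₀ R)
    (Uσ : Set (Fin d → ℝ)) (hUσ : Uσ = {I | ∃ y ∈ BR, dist I y ≤ σ})
    (DF : Set (CPhase d))
    (hDF : DF = {z : CPhase d |
      (∃ y ∈ BR, dist z.1 (cx d y) ≤ σ) ∧ ∀ i, |(z.2 i).im| ≤ r})
    (h₀ : (Fin d → ℝ) → ℝ) (hh₀ : AnalyticOnNhd ℝ h₀ Uσ)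
    (ω : (Fin d → ℝ) → Fin d → ℝ)
    (hω : ∀ I ∈ Uσ, HasFDerivAt h₀
      (∑ i, ω I i • (ContinuousLinearMap.proj i : (Fin d → ℝ) →L[ℝ] ℝ)) I)
    (hconvex : ∀ I ∈ Uσ, ∀ v : Fin d → ℝ,
      ν * ∑ i, v i ^ 2 ≤ ∑ i, fderiv ℝ ω I v i * v i)
    (s : ℝ → CPhase d → ℂ)
    (hsa : ∀ ε ∈ Set.Icc (0 : ℝ) εbar, AnalyticOnNhd ℂ (s ε) DF)
    (hsreal : ∀ ε ∈ Set.Icc (0 : ℝ) εbar, ∀ x : RPhase d,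
      (cx d x.1, cx d x.2) ∈ DF → (s ε (cx d x.1, cx d x.2)).im = 0)
    (hsper : ∀ ε ∈ Set.Icc (0 : ℝ) εbar, ∀ z ∈ DF, ∀ e : Fin d → ℤ,
      s ε (z.1, z.2 + fun i => ((e i : ℝ) : ℂ)) = s ε z)
    (hsbound : ∀ ε ∈ Set.Icc (0 : ℝ) εbar, ∀ z ∈ DF, ‖s ε z‖ ≤ Ms)
    (F : ℝ → RPhase d → RPhase d)
    (hF : ∀ ε ∈ Set.Icc (0 : ℝ) εbar, ∀ x : RPhase d,
      (∃ y ∈ BR, dist x.1 y ≤ σ / 2) →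
      (∃ y ∈ BR, dist (F ε x).1 y ≤ σ) ∧
      (∀ i, (F ε x).1 i = x.1 i -
        ε * (fderiv ℂ (s ε) (cx d (F ε x).1, cx d x.2) (0, Pi.single i 1)).re) ∧
      (∀ i, (F ε x).2 i = x.2 i + ω (F ε x).1 i +
        ε * (fderiv ℂ (s ε) (cx d (F ε x).1, cx d x.2) (Pi.single i 1, 0)).re))
    (hlift : ∀ ε ∈ Set.Icc (0 : ℝ) εbar, ∀ x : RPhase d, ∀ e : Fin d → ℤ,
      F ε (x.1, x.2 + fun i => (e i : ℝ)) = ((F ε x).1, (F ε x).2 + fun i => (e i : ℝ)))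
    (nh2 : ℝ) (hnh2pos : 0 < nh2)
    (hh2 : ∀ I ∈ Uσ, ∀ v : Fin d → ℝ,
      ∑ i, fderiv ℝ ω I v i * v i ≤ nh2 * ∑ i, v i ^ 2) :
    ∃ c₄ c₅ ε₀ : ℝ, 0 < c₄ ∧ 0 < c₅ ∧ 0 < ε₀ ∧ ε₀ ≤ εbar ∧
      ∀ ε : ℝ, 0 < ε → ε ≤ ε₀ →
        ∀ n : ℕ, 0 < n → (n : ℝ) < ε ^ (-((d : ℝ) / (2 * ((d : ℝ) + 1)))) →
          ∀ Istar : Fin d → ℝ, Istar ∈ BR →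
            (∀ i, ∃ z : ℤ, (n : ℝ) * ω Istar i = (z : ℝ)) →
            ∀ x₀ : RPhase d,
              ‖x₀.1 - Istar‖ ^ 2 ≤ 2 * ((d : ℝ) * nh2)⁻¹ * Ms * ε →
              ∀ k : ℕ, (k : ℝ) ≤ c₄ * Real.exp (c₅ / Real.sqrt ((n : ℝ) ^ 2 * ε)) →
                ‖((F ε)^[k] x₀).1 - Istar‖ ^ 2 ≤ 11 * ν⁻¹ * Ms * ε := by
  have hDFmem : ∀ z : CPhase d, ∀ y ∈ BR, dist z.1 (cx d y) ≤ σ → (∀ i, |(z.2 i).im| ≤ r) →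
      z ∈ DF := by
    intro z y hy h1 h2
    rw [hDF]; exact ⟨⟨y, hy, h1⟩, h2⟩
  have hc₀ : c₀ ∈ BR := by rw [hBR]; exact Metric.mem_closedBall_self hR.le
  have hMs0 : 0 ≤ Ms := by
    refine (norm_nonneg _).trans (hsbound 0 ⟨le_rfl, hεbar.le⟩ (cx d c₀, 0)
      (hDFmem _ c₀ hc₀ (by simpa using hσ.le) fun i => by simpa using hr.le))
  -- Cauchy estimate for the angular derivative
  have hphi : ∀ ε ∈ Set.Icc (0 : ℝ) εbar, ∀ I φ : Fin d → ℝ, (∃ y ∈ BR, dist I y ≤ σ) → ∀ i,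
      ‖fderiv ℂ (s ε) (cx d I, cx d φ) (0, Pi.single i 1)‖ ≤ 2 * Ms / r := by
    rintro ε hε I φ ⟨y, hy, hIy⟩ i
    have hm : ∀ t : ℂ, ‖t‖ < r →
        ((cx d I, cx d φ) + t • ((0, Pi.single i 1) : CPhase d)) ∈ DF := by
      intro t ht
      refine hDFmem _ y hy (by simpa [cx_dist] using hIy) fun j => ?_
      by_cases hj : j = i
      · subst hj
        simp [cx]
        exact (Complex.abs_im_le_norm t).trans ht.le
      · simp [cx, Pi.single_eq_of_ne hj]
        exact hr.le
    exact dir_cauchy hr (fun t ht => (hsa ε hε _ (hm t ht)).differentiableAt)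
      fun t ht => hsbound ε hε _ (hm t ht)
  rcases hMs0.eq_or_lt with hMs | hMs
  · -- degenerate case
    refine ⟨1, 1, εbar, one_pos, one_pos, hεbar, le_rfl, ?_⟩
    intro ε hε hεle n hn hn' Istar hI hres x₀ hx₀ k hk
    have hεI : ε ∈ Set.Icc (0 : ℝ) εbar := ⟨hε.le, hεle⟩
    have hall : ∀ k : ℕ, ((F ε)^[k] x₀).1 = Istar := by
      intro k
      induction k with
      | zero =>
        rw [← hMs] at hx₀
        have h0 : ‖x₀.1 - Istar‖ ^ 2 ≤ 0 := by simpa using hx₀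
        have h1 : ‖x₀.1 - Istar‖ = 0 := by
          have := sq_nonneg ‖x₀.1 - Istar‖
          exact pow_eq_zero_iff (two_ne_zero) |>.1 (le_antisymm h0 this)
        simpa [sub_eq_zero] using h1
      | succ k ih =>
        rw [Function.iterate_succ_apply']
        obtain ⟨f0, f1, -⟩ := hF ε hεI ((F ε)^[k] x₀)
          ⟨Istar, hI, by rw [ih, dist_self]; linarith⟩
        ext i
        rw [f1 i]
        have := hphi ε hεI _ ((F ε)^[k] x₀).2 f0 i
        rw [← hMs] at this
        have h2 : fderiv ℂ (s ε) (cx d (F ε ((F ε)^[k] x₀)).1, cx d ((F ε)^[k] x₀).2)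
          (0, Pi.single i 1) = 0 := by simpa using this
        rw [h2, ih]; simp
    rw [hall k, ← hMs]; simp
  -- main case
  have hball : ∀ I ∈ BR, Metric.ball I σ ⊆ Uσ := by
    intro I hI y hy
    rw [hUσ]; exact ⟨I, hI, (Metric.mem_ball.1 hy).le⟩
  have hBU : BR ⊆ Uσ := fun I hI => hball I hI (Metric.mem_ball_self hσ)
  have hcomp : IsCompact BR := by rw [hBR]; exact isCompact_closedBall _ _
  obtain ⟨ρ, hρ, M0, hext⟩ := exists_cext_unif hcomp hBU hh₀
  have hM0 : 0 ≤ M0 := by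
    obtain ⟨g, -, hb, -⟩ := hext c₀ hc₀
    exact (norm_nonneg _).trans (hb _ (Metric.mem_ball_self hρ))
  obtain ⟨L, hL1, hL2⟩ : ∃ L : ℝ, √(7 * Ms / ν) + 1 ≤ L ∧ √(2 * ((d : ℝ) * nh2)⁻¹ * Ms) ≤ L :=
    ⟨_, le_max_left _ _, le_max_right _ _⟩
  have hL0 : 0 ≤ L := (Real.sqrt_nonneg _).trans hL2
  obtain ⟨τ, hτd⟩ : ∃ τ : ℝ, τ = r / 4 := ⟨_, rfl⟩
  have hτ : 0 < τ := by rw [hτd]; positivity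
  obtain ⟨Mq, hMq⟩ : ∃ Mq : ℝ, Mq = 4 * M0 / ρ ^ 2 * (L + 4 * τ) ^ 2 := ⟨_, rfl⟩
  have hMq0 : 0 ≤ Mq := by rw [hMq]; positivity
  obtain ⟨c₄, c₅, D₀, hc4, hc5, hD0, main⟩ := Scaled.exists_const d hτ hMq0 hMs hν hL1
  obtain ⟨a1, ha1, b1⟩ := small_exists (L + 4 * τ) (half_pos hσ)
  obtain ⟨a2, ha2, b2⟩ := small_exists (L + 4 * τ) hρ
  obtain ⟨a3, ha3, b3⟩ := small_exists (2 * Ms / r) hτ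
  obtain ⟨a4, ha4, b4⟩ := small_exists (2 * (Mq + Ms) / τ) (half_pos hτ)
  obtain ⟨a5, ha5, b5⟩ := small_exists (4 * (Mq + Ms) / τ ^ 2) (half_pos one_pos)
  obtain ⟨a, ha, hle⟩ : ∃ a > 0, a ≤ a1 ∧ a ≤ a2 ∧ a ≤ a3 ∧ a ≤ a4 ∧ a ≤ a5 := by
    refine ⟨min a1 (min a2 (min a3 (min a4 a5))), by simp [*], ?_⟩
    simp
  obtain ⟨l1, l2, l3, l4, l5⟩ := hle
  refine ⟨c₄, c₅, min εbar (min (a ^ 2) (D₀ ^ (2 * ((d : ℝ) + 1)))), hc4, hc5, ?_,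
    min_le_left _ _, ?_⟩
  · have := Real.rpow_pos_of_pos hD0 (2 * ((d : ℝ) + 1))
    have : 0 < a ^ 2 := by positivity
    simp [*]
  intro ε hε hεle n hn hn' Istar hI hres x₀ hx₀ k hk
  rw [le_min_iff, le_min_iff] at hεle
  obtain ⟨e1, e2, e3⟩ := hεle
  have hεI : ε ∈ Set.Icc (0 : ℝ) εbar := ⟨hε.le, e1⟩
  obtain ⟨μ, hμd⟩ : ∃ μ : ℝ, μ = √ε := ⟨_, rfl⟩
  have hμ : 0 < μ := by rw [hμd]; exact Real.sqrt_pos.2 hε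
  have hμ2 : μ ^ 2 = ε := by rw [hμd]; exact Real.sq_sqrt hε.le
  have hμa : μ ≤ a := by rw [hμd]; exact Real.sqrt_le_iff.2 ⟨ha.le, e2⟩
  have hnμ : n * μ ≤ D₀ := by rw [hμd]; exact rpow_small hε hD0 e3 hn'
  obtain ⟨hC, hCa, hCb, hCr⟩ := hext Istar hI
  have hDI : ∀ z : CPhase d, ‖z.1 - cx d Istar‖ ≤ σ → (∀ i, |(z.2 i).im| ≤ r) → z ∈ DF :=
    fun z h1 h2 => hDFmem z Istar hI (by rwa [dist_eq_norm]) h2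
  have sc := build_scaled (n := n) (nh2 := nh2) (h₀ := h₀) (s := s ε) (F := F ε) (I := Istar)
    (ω := ω) (ν := ν) (σ := σ) (r := r) (μ := μ)
    hd hτ hL0 hμ hr hρ hσ hMs.le hM0 hν hMq (by rw [hτd]; linarith)
    (b1 μ hμ (hμa.trans l1)) (b2 μ hμ (hμa.trans l2)) (b3 μ hμ (hμa.trans l3))
    (b4 μ hμ (hμa.trans l4)) (b5 μ hμ (hμa.trans l5))
    (fun y hy => hh₀ y (hball _ hI hy)) (fun y hy => hω y (hball _ hI hy))
    (fun y hy => hconvex y (hball _ hI hy)) (fun y hy => hh2 y (hball _ hI hy)) hCa hCb hCr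
    (fun z h1 h2 => hsa ε hεI z (hDI z h1 h2)) (fun z h1 h2 => hsbound ε hεI z (hDI z h1 h2))
    (fun x hx => hsreal ε hεI x (hDI _ (by rw [← cx_sub, norm_cx]; exact hx)
      fun i => by simp [cx]; exact hr.le))
    (fun x hx => by
      obtain ⟨f0, f1, f2⟩ := hF ε hεI x ⟨Istar, hI, by rwa [dist_eq_norm]⟩
      rw [hμ2]
      exact ⟨f1, f2, hphi ε hεI _ _ f0⟩)
    (hlift ε hεI) hres
  obtain ⟨y₀, hy₀⟩ : ∃ y₀ : RPhase d, y₀ = (μ⁻¹ • (x₀.1 - Istar), x₀.2) := ⟨_, rfl⟩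
  have hxy : (Istar + μ • y₀.1, y₀.2) = x₀ := by
    rw [hy₀]; simp [smul_smul, mul_inv_cancel₀ hμ.ne']
  have hyn : ‖y₀.1‖ ^ 2 ≤ 2 * ((d : ℝ) * nh2)⁻¹ * Ms := by
    rw [hy₀]
    simp only [norm_smul, norm_inv, Real.norm_eq_abs, abs_of_pos hμ]
    rw [mul_pow, inv_pow, hμ2, inv_mul_le_iff₀ hε]
    linarith
  have hdpos : (0 : ℝ) < d := by exact_mod_cast hd
  have hyL : ‖y₀.1‖ ≤ L := (Real.le_sqrt_of_sq_le hyn).trans hL2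
  have hyS : ‖μ • y₀.1‖ < σ := by
    rw [norm_smul, Real.norm_eq_abs, abs_of_pos hμ]
    have h1 := b1 μ hμ (hμa.trans l1)
    have h2 : μ * ‖y₀.1‖ ≤ μ * (L + 4 * τ) := by gcongr; linarith
    linarith
  have hq := (quad_bounds (fun y hy => hh₀ y (hball _ hI hy)) (fun y hy => hω y (hball _ hI hy))
    (fun y hy => hconvex y (hball _ hI hy)) (fun y hy => hh2 y (hball _ hI hy)) hyS).2
  have hqs : (μ ^ 2)⁻¹ * (h₀ (Istar + μ • y₀.1) - h₀ Istar - ∑ i, ω Istar i * (μ • y₀.1) i) ≤ Ms := by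
    have h1 := sum_le_norm_sq (μ • y₀.1)
    rw [norm_smul, Real.norm_eq_abs, abs_of_pos hμ] at h1
    rw [inv_mul_le_iff₀ (by positivity)]
    refine hq.trans ?_
    calc nh2 / 2 * ∑ i, (μ • y₀.1) i ^ 2 ≤ nh2 / 2 * (d * (μ * ‖y₀.1‖) ^ 2) := by gcongr
      _ = nh2 / 2 * d * μ ^ 2 * ‖y₀.1‖ ^ 2 := by ring
      _ ≤ nh2 / 2 * d * μ ^ 2 * (2 * ((d : ℝ) * nh2)⁻¹ * Ms) := by gcongr
      _ = μ ^ 2 * Ms := by field_simp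
  have hsq : √((n : ℝ) ^ 2 * ε) = n * μ := by
    rw [← hμ2, ← mul_pow, Real.sqrt_sq (by positivity)]
  rw [hsq] at hk
  have fin := main μ n _ _ _ _ _ sc hn hnμ y₀ hyL hqs k hk
  rw [Gfun_iter hμ.ne', hxy] at fin
  simp only [norm_smul, norm_inv, Real.norm_eq_abs, abs_of_pos hμ] at fin
  rw [mul_pow, inv_pow, hμ2, inv_mul_le_iff₀ hε] at fin
  refine fin.trans (le_of_eq ?_)
  field_simp
end

section
/- (Quantitative analytic implicit function theorem) Let A, B ⊆ ℂ^d be open sets, f : A × B → ℂ^d analytic, x₀ ∈ A and y₀ ∈ B. Suppose there is R > 0 such that the closed ball B_R(y₀) (sup norm) is contained in B and M := sup_{y ∈ B_R(y₀)} |f(x₀,y)| < R/(d+1). Then the equation y = y₀ + f(x₀,y) has a unique solution y in B_R(y₀); moreover this solution lies in the closed ball of radius M around y₀. -/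
/-- **Quantitative analytic implicit function theorem.**
`A, B ⊆ ℂ^d` open, `f : A × B → ℂ^d` analytic, `x₀ ∈ A`, `y₀ ∈ B`.  If the closed ball
`B_R(y₀)` (sup norm) is contained in `B` and `M` bounds `|f(x₀,·)|` on that ball with
`M < R/(d+1)`, then the equation `y = y₀ + f(x₀,y)` has a unique solution in `B_R(y₀)`;
moreover the solution lies in the closed ball of radius `M` around `y₀`. -/
theorem quantitative_analytic_implicit_function_theorem (d : ℕ) (hd : 1 ≤ d)
    (A B : Set (Fin d → ℂ)) (hA : IsOpen A) (hB : IsOpen B)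
    (f : (Fin d → ℂ) × (Fin d → ℂ) → Fin d → ℂ)
    (hf : AnalyticOnNhd ℂ f (A ×ˢ B))
    (x₀ : Fin d → ℂ) (hx₀ : x₀ ∈ A)
    (y₀ : Fin d → ℂ) (hy₀ : y₀ ∈ B)
    (R M : ℝ) (hR : 0 < R)
    (hball : Metric.closedBall y₀ R ⊆ B)
    (hMub : ∀ y ∈ Metric.closedBall y₀ R, ‖f (x₀, y)‖ ≤ M)
    (hM : M < R / (d + 1)) :
    ∃ y ∈ Metric.closedBall y₀ M,
      y = y₀ + f (x₀, y) ∧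
      ∀ y' ∈ Metric.closedBall y₀ R, y' = y₀ + f (x₀, y') → y' = y := by
  have hM0 : 0 ≤ M := (norm_nonneg _).trans (hMub y₀ (Metric.mem_closedBall_self hR.le))
  have hd' : (1 : ℝ) ≤ d := by exact_mod_cast hd
  have hM2 : 2 * M < R := by
    rw [lt_div_iff₀ (by positivity)] at hM
    nlinarith
  have hMR : M ≤ R := by linarith
  have hRM : 0 < R - M := by linarith
  set g : (Fin d → ℂ) → Fin d → ℂ := fun y => f (x₀, y) with hg
  have hgd : ∀ y ∈ Metric.closedBall y₀ R, DifferentiableAt ℂ g y := by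
    intro y hy
    have h1 : DifferentiableAt ℂ f (x₀, y) := (hf (x₀, y) ⟨hx₀, hball hy⟩).differentiableAt
    exact h1.comp y (by fun_prop)
  have hsub : Metric.closedBall y₀ M ⊆ Metric.closedBall y₀ R := Metric.closedBall_subset_closedBall hMR
  have hbound : ∀ y ∈ Metric.closedBall y₀ M, ‖fderiv ℂ g y‖ ≤ M / (R - M) := by
    intro y hy
    refine ContinuousLinearMap.opNorm_le_bound' _ (by positivity) ?_
    intro v hv
    have hv0 : 0 < ‖v‖ := lt_of_le_of_ne (norm_nonneg _) (Ne.symm hv)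
    have hmem : ∀ z : ℂ, ‖z‖ ≤ (R - M) / ‖v‖ → y + z • v ∈ Metric.closedBall y₀ R := by
      intro z hz
      rw [le_div_iff₀ hv0] at hz
      rw [mem_closedBall_iff_norm] at hy ⊢
      calc ‖y + z • v - y₀‖ = ‖(y - y₀) + z • v‖ := by congr 1; abel
        _ ≤ ‖y - y₀‖ + ‖z • v‖ := norm_add_le _ _
        _ ≤ R := by rw [norm_smul]; linarith
    have hline : ∀ z : ℂ, HasDerivAt (fun z : ℂ => y + z • v) v z := by
      intro z
      simpa using ((hasDerivAt_id z).smul_const v).const_add y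
    have hder : ∀ z : ℂ, ‖z‖ ≤ (R - M) / ‖v‖ →
        HasDerivAt (fun z : ℂ => g (y + z • v)) (fderiv ℂ g (y + z • v) v) z := fun z hz =>
      HasFDerivAt.comp_hasDerivAt (l := g) (f := fun z : ℂ => y + z • v) z
        (hgd _ (hmem z hz)).hasFDerivAt (hline z)
    have hr : 0 < (R - M) / ‖v‖ := by positivity
    have hC := Complex.norm_deriv_le_of_forall_mem_sphere_norm_le (c := 0) (C := M)
      (f := fun z : ℂ => g (y + z • v)) hr
      (DifferentiableOn.diffContOnCl_ball (U := Metric.closedBall 0 ((R - M) / ‖v‖))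
        (fun z hz => (hder z (by simpa using hz)).differentiableAt.differentiableWithinAt)
        subset_rfl)
      (fun z hz => hMub _ (hmem z (by simpa using hz.le)))
    rw [(hder 0 (by simpa using hr.le)).deriv] at hC
    simp only [zero_smul, add_zero] at hC
    refine hC.trans (le_of_eq ?_)
    field_simp
  have hLip : ∀ a ∈ Metric.closedBall y₀ M, ∀ b ∈ Metric.closedBall y₀ M,
      ‖g b - g a‖ ≤ M / (R - M) * ‖b - a‖ := fun a ha b hb =>
    (convex_closedBall y₀ M).norm_image_sub_le_of_norm_fderiv_le
      (fun x hx => hgd x (hsub hx)) hbound ha hb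
  have hK1 : M / (R - M) < 1 := by rw [div_lt_one hRM]; linarith
  have hmaps' : ∀ y ∈ Metric.closedBall y₀ R, y₀ + g y ∈ Metric.closedBall y₀ M := by
    intro y hy
    rw [mem_closedBall_iff_norm]
    simpa using hMub y hy
  have hmaps : Set.MapsTo (fun y => y₀ + g y) (Metric.closedBall y₀ M) (Metric.closedBall y₀ M) :=
    fun y hy => hmaps' y (hsub hy)
  have hK0 : 0 ≤ M / (R - M) := by positivity
  have hcon : ContractingWith ⟨M / (R - M), hK0⟩ (hmaps.restrict _ _ _) := by
    refine ⟨by exact_mod_cast hK1, LipschitzWith.of_dist_le_mul ?_⟩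
    rintro ⟨a, ha⟩ ⟨b, hb⟩
    have := hLip b hb a ha
    have e : dist (y₀ + g a) (y₀ + g b) ≤ M / (R - M) * dist a b := by
      simpa [dist_eq_norm] using this
    exact e
  obtain ⟨y, hy, hfix, -⟩ := hcon.exists_fixedPoint' Metric.isClosed_closedBall.isComplete hmaps
    (Metric.mem_closedBall_self hM0) (edist_ne_top _ _)
  have hfix' : y₀ + g y = y := hfix
  refine ⟨y, hy, hfix'.symm, ?_⟩
  intro y' hy' hfy'
  have hfy2 : y' = y₀ + g y' := hfy'
  have hy'M : y' ∈ Metric.closedBall y₀ M := by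
    rw [hfy2]; exact hmaps' y' hy'
  have h := hLip y hy y' hy'M
  have he : g y' - g y = y' - y := by
    have e1 : g y' = y' - y₀ := by rw [eq_sub_iff_add_eq, add_comm]; exact hfy2.symm
    have e2 : g y = y - y₀ := by rw [eq_sub_iff_add_eq, add_comm]; exact hfix'
    rw [e1, e2]; abel
  rw [he] at h
  have h0 : ‖y' - y‖ = 0 := by
    have := norm_nonneg (y' - y)
    nlinarith
  exact sub_eq_zero.mp (norm_eq_zero.mp h0)
end

section
/- (Explicit interpolation weights identity) For all integers m ≥ 1 and 1 ≤ j ≤ m, one has Σ_{k=j}^m (1/k)·binom(k,j) = ((m+1−j)/(j(m+1)))·binom(m+1,j). Consequently, for any x₀,…,x_m in ℝ^s, Σ_{k=1}^m ((−1)^{k−1}/k) Δ^k = −H_m·x₀ + Σ_{j=1}^m (−1)^{j+1} ((m+1−j)/(j(m+1)))·binom(m+1,j)·x_j, where Δ^k = Σ_{i=0}^k (−1)^{k−i} binom(k,i) x_i and H_m = Σ_{k=1}^m 1/k is the harmonic number. -/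
theorem weight_eq (m j : ℕ) (hj : j ≤ m) :
    ((m : ℝ) + 1 - j) / (j * ((m : ℝ) + 1)) * ((m + 1).choose j) = (m.choose j : ℝ) / j := by
  have h := Nat.choose_mul_succ_eq m j
  have h2 : ((m.choose j : ℝ)) * (m + 1) = ((m + 1).choose j : ℝ) * ((m : ℝ) + 1 - j) := by
    have h3 : ((m + 1 - j : ℕ) : ℝ) = (m : ℝ) + 1 - j := by
      rw [Nat.cast_sub (by omega)]; push_cast; ring
    rw [← h3]; exact_mod_cast h
  have hm : (m : ℝ) + 1 ≠ 0 := by positivity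
  rcases Nat.eq_zero_or_pos j with rfl | hp
  · simp
  have hj0 : (j : ℝ) ≠ 0 := by positivity
  field_simp
  linarith

theorem sum_eq (j : ℕ) (hj : 1 ≤ j) (m : ℕ) :
    ∑ k ∈ Finset.Icc 1 m, (1 : ℝ) / k * (k.choose j) = (m.choose j : ℝ) / j := by
  obtain ⟨j, rfl⟩ : ∃ i, j = i + 1 := ⟨j - 1, by omega⟩
  induction m with
  | zero => simp
  | succ m ih =>
    rw [Finset.sum_Icc_succ_top (by omega), ih]
    have h1 : ((m : ℝ) + 1) * (m.choose j) = ((m + 1).choose (j + 1)) * ((j : ℝ) + 1) := by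
      exact_mod_cast Nat.add_one_mul_choose_eq m j
    have h2 : ((m + 1).choose (j + 1) : ℝ) = m.choose j + m.choose (j + 1) := by
      exact_mod_cast Nat.choose_succ_succ m j
    have hm : (m : ℝ) + 1 ≠ 0 := by positivity
    have hj0 : (j : ℝ) + 1 ≠ 0 := by positivity
    push_cast
    field_simp
    have h3 : (m.choose (j + 1) : ℝ) = (m + 1).choose (j + 1) - m.choose j := by linarith
    rw [h3]
    linarith

/-- **Explicit interpolation weights identity.**
For `m ≥ 1` and `1 ≤ j ≤ m`, `Σ_{k=j}^m (1/k)·binom(k,j) = ((m+1−j)/(j(m+1)))·binom(m+1,j)`.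
Consequently for any `x₀,…,x_m` in `ℝ^s`,
`Σ_{k=1}^m ((−1)^{k−1}/k) Δ^k = −H_m x₀ + Σ_{j=1}^m (−1)^{j+1}((m+1−j)/(j(m+1))) binom(m+1,j) x_j`,
with `Δ^k = Σ_{i=0}^k (−1)^{k−i} binom(k,i) x_i` and `H_m = Σ_{k=1}^m 1/k`. -/
theorem interpolation_weights_identity (s m : ℕ) (hs : 1 ≤ s) (hm : 1 ≤ m) :
    (∀ j : ℕ, 1 ≤ j → j ≤ m →
      ∑ k ∈ Finset.Icc j m, (1 : ℝ) / k * (k.choose j) =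
        ((m : ℝ) + 1 - j) / (j * ((m : ℝ) + 1)) * ((m + 1).choose j)) ∧
    ∀ x : ℕ → Fin s → ℝ, ∀ i : Fin s,
      ∑ k ∈ Finset.Icc 1 m, (-1 : ℝ) ^ (k - 1) / k *
          ∑ l ∈ Finset.range (k + 1), (-1 : ℝ) ^ (k - l) * (k.choose l) * x l i =
        -(∑ k ∈ Finset.Icc 1 m, (1 : ℝ) / k) * x 0 i +
          ∑ j ∈ Finset.Icc 1 m, (-1 : ℝ) ^ (j + 1) *
            (((m : ℝ) + 1 - j) / (j * ((m : ℝ) + 1))) * ((m + 1).choose j) * x j i := by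
  constructor
  · intro j h1 hj
    rw [weight_eq m j hj, ← sum_eq j h1 m]
    apply Finset.sum_subset (Finset.Icc_subset_Icc_left h1)
    intro k hk hk'
    simp only [Finset.mem_Icc] at hk hk'
    rw [Nat.choose_eq_zero_of_lt (by omega)]
    simp
  · intro x i
    have key : ∀ k ∈ Finset.Icc 1 m, (-1 : ℝ) ^ (k - 1) / k *
          ∑ l ∈ Finset.range (k + 1), (-1 : ℝ) ^ (k - l) * (k.choose l) * x l i =
        -((1 : ℝ) / k * x 0 i) + ∑ l ∈ Finset.Icc 1 m,
          (-1 : ℝ) ^ (l + 1) * x l i * ((1 : ℝ) / k * (k.choose l)) := by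
      intro k hk
      rw [Finset.mem_Icc] at hk
      have e : ∀ l, l ≤ k → (-1 : ℝ) ^ (k - 1) * (-1 : ℝ) ^ (k - l) = (-1 : ℝ) ^ (l + 1) := by
        intro l hl
        obtain ⟨d, rfl⟩ := Nat.exists_eq_add_of_le hl
        rw [← pow_add]
        apply neg_one_pow_congr
        grind
      have hs : ∑ l ∈ Finset.range (k + 1), (-1 : ℝ) ^ (k - l) * (k.choose l) * x l i =
          ∑ l ∈ Finset.range (m + 1), (-1 : ℝ) ^ (k - l) * (k.choose l) * x l i := by
        apply Finset.sum_subset (Finset.range_subset_range.2 (by omega))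
        intro l _ hl
        rw [Finset.mem_range] at hl
        rw [Nat.choose_eq_zero_of_lt (by omega)]
        simp
      have hr : Finset.range (m + 1) = insert 0 (Finset.Icc 1 m) := by
        ext a; simp; omega
      rw [hs, hr, Finset.sum_insert (by simp), mul_add, Finset.mul_sum]
      congr 1
      · have := e 0 (by omega)
        simp only [Nat.choose_zero_right, Nat.cast_one]
        linear_combination (x 0 i / k) * this
      · apply Finset.sum_congr rfl
        intro l _
        by_cases hl : l ≤ k
        · linear_combination (x l i / k * (k.choose l)) * e l hl
        · rw [Nat.choose_eq_zero_of_lt (by omega)]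
          simp
    rw [Finset.sum_congr rfl key, Finset.sum_add_distrib, Finset.sum_neg_distrib,
      ← Finset.sum_mul, neg_mul, Finset.sum_comm]
    congr 1
    apply Finset.sum_congr rfl
    intro l hl
    rw [Finset.mem_Icc] at hl
    rw [← Finset.mul_sum, sum_eq l hl.1 m, ← weight_eq m l hl.2]
    ring
end

section
/- (Closedness of the cross-form one-form for a symplectic map) Let U ⊆ ℝ^d × ℝ^d be open and simply connected, and let u, v : U → ℝ^d be continuously differentiable. Suppose f : (p,q) ↦ (p̄,q̄) is a diffeomorphism whose graph is given in cross form by p = p̄ + u(p̄,q), q̄ = q + v(p̄,q) for (p̄,q) ∈ U, and that f preserves the standard symplectic form, i.e. Df(x)ᵀ J Df(x) = J at every point x of its domain, where J is the standard 2d×2d symplectic matrix. Then the 1-form Σ_{l=1}^d (u_l dq_l + v_l dp̄_l) on U is closed, and hence there exists s : U → ℝ with ∂s/∂q_l = u_l and ∂s/∂p̄_l = v_l for all l; in particular f is generated by the generating function p̄·q + s(p̄,q). -/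
open Topology Set Filter

/-- The real line with the discrete topology. -/
def DiscR : Type := ℝ

instance : TopologicalSpace DiscR := ⊥

instance : DiscreteTopology DiscR := ⟨rfl⟩

/-- The underlying real number. -/
def DiscR.val (v : DiscR) : ℝ := v

/-- The point of `DiscR` given by a real number. -/
def DiscR.of (v : ℝ) : DiscR := v

/-- The covering space of local primitives. -/
noncomputable def primCore {E : Type*} [NormedAddCommGroup E]
    (U : Set E) (g : U → E → ℝ) (B : U → Set E) (hB : ∀ i, IsOpen (B i)) (hm : ∀ i : U, (i : E) ∈ B i)
    (hc : ∀ i j, ∃ c : ℝ, ∀ x ∈ B i ∩ B j, g i x - g j x = c) :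
    FiberBundleCore U U DiscR where
  baseSet i := Subtype.val ⁻¹' B i
  isOpen_baseSet i := (hB i).preimage continuous_subtype_val
  indexAt := id
  mem_baseSet_at := hm
  coordChange i j x v := DiscR.of (v.val + (g i x - g j x))
  coordChange_self i x _ v := by
    rw [sub_self, add_zero]; rfl
  continuousOn_coordChange i j := by
    obtain ⟨c, hc⟩ := hc i j
    have h : Continuous (fun p : U × DiscR => DiscR.of (p.2.val + c)) :=
      (continuous_of_discreteTopology (f := fun v : DiscR => DiscR.of (v.val + c))).comp
        continuous_snd
    refine h.continuousOn.congr fun p hp => ?_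
    simp only [hc _ hp.1]
  coordChange_comp i j k x _ v := by
    change DiscR.of ((v.val + (g i x - g j x)) + (g j x - g k x)) = DiscR.of (v.val + (g i x - g k x))
    congr 1
    ring

theorem exists_primitive {E : Type*} [NormedAddCommGroup E] [NormedSpace ℝ E]
    {U : Set E} (hU : IsOpen U) (hsc : SimplyConnectedSpace U) {ω : E → E →L[ℝ] ℝ}
    (hω : DifferentiableOn ℝ ω U) (hs : ∀ a ∈ U, ∀ x y, fderiv ℝ ω a x y = fderiv ℝ ω a y x) :
    ∃ s : E → ℝ, ∀ x ∈ U, HasFDerivAt s (ω x) x := by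
  classical
  have h1 : ∀ i : U, ∃ r : ℝ, 0 < r ∧ Metric.ball (i : E) r ⊆ U := fun i =>
    Metric.isOpen_iff.1 hU i i.2
  choose r hr hrU using h1
  have h2 : ∀ i : U, ∃ g : E → ℝ, ∀ a ∈ Metric.ball (i : E) (r i), HasFDerivAt g (ω a) a := fun i =>
    (convex_ball _ _).exists_forall_hasFDerivAt_of_fderiv_symmetric Metric.isOpen_ball
      (hω.mono (hrU i)) (fun a ha => hs a (hrU i ha))
  choose g hg using h2
  have hc : ∀ i j : U, ∃ c : ℝ, ∀ x ∈ Metric.ball (i : E) (r i) ∩ Metric.ball (j : E) (r j),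
      g i x - g j x = c := by
    intro i j
    have ho := (Metric.isOpen_ball (x := (i : E)) (ε := r i)).inter
      (Metric.isOpen_ball (x := (j : E)) (ε := r j))
    have hcv := (convex_ball (i : E) (r i)).inter (convex_ball (j : E) (r j))
    have hd : ∀ x ∈ Metric.ball (i : E) (r i) ∩ Metric.ball (j : E) (r j),
        HasFDerivAt (fun x => g i x - g j x) (0 : E →L[ℝ] ℝ) x := fun x hx => by
      simpa using (hg i x hx.1).fun_sub (hg j x hx.2)
    exact ho.exists_is_const_of_fderiv_eq_zero hcv.isPreconnected
      (fun x hx => (hd x hx).differentiableAt.differentiableWithinAt) (fun x hx => (hd x hx).fderiv)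
  let Z := primCore U g (fun i => Metric.ball (i : E) (r i)) (fun _ => Metric.isOpen_ball)
    (fun i => Metric.mem_ball_self (hr i)) hc
  have cov : IsCoveringMap (Bundle.TotalSpace.proj : Bundle.TotalSpace DiscR Z.Fiber → U) :=
    FiberBundle.isCoveringMap
  have : LocallyPathConnectedSpace U := hU.locallyPathConnectedSpace
  obtain ⟨a₀⟩ : Nonempty U := inferInstance
  obtain ⟨F, ⟨-, hF⟩, -⟩ := cov.existsUnique_continuousMap_lifts (ContinuousMap.id U) a₀
    ⟨a₀, DiscR.of 0⟩ rfl
  have hF' : ∀ x, (F x).proj = x := fun x => congrFun hF x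
  let s : U → ℝ := fun x => DiscR.val (F x).snd + g x x
  have key : ∀ x : U, ∀ᶠ y in 𝓝 x, s y - g x y = s x - g x x := by
    intro x
    have hxs : F x ∈ (Z.localTriv x).source := by
      change ((F x).proj : E) ∈ Metric.ball (x : E) (r x)
      rw [hF' x]
      exact Metric.mem_ball_self (hr x)
    have hcont : ContinuousAt (fun y => (Z.localTriv x (F y)).2) x :=
      continuousAt_snd.comp (((Z.localTriv x).continuousAt hxs).comp F.continuous.continuousAt)
    have hev : ∀ᶠ y in 𝓝 x, (Z.localTriv x (F y)).2 = (Z.localTriv x (F x)).2 :=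
      hcont.eventually (by simp [nhds_discrete] : ∀ᶠ z in 𝓝 (Z.localTriv x (F x)).2, z = _)
    have hval : ∀ y : U, (Z.localTriv x (F y)).2 = DiscR.of (s y - g x y) := by
      intro y
      have : (Z.localTriv x (F y)).2 = DiscR.of (DiscR.val (F y).snd +
        (g (F y).proj (F y).proj - g x (F y).proj)) := rfl
      rw [this, hF' y]
      congr 1
      exact (add_sub_assoc _ _ _).symm
    filter_upwards [hev] with y hy
    rw [hval, hval] at hy
    exact hy
  refine ⟨fun x => if h : x ∈ U then s ⟨x, h⟩ else 0, fun x hx => ?_⟩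
  have hk := key ⟨x, hx⟩
  rw [nhds_subtype_eq_comap, eventually_comap] at hk
  have : (fun y => if h : y ∈ U then s ⟨y, h⟩ else 0) =ᶠ[𝓝 x]
      fun y => g ⟨x, hx⟩ y + (s ⟨x, hx⟩ - g ⟨x, hx⟩ x) := by
    filter_upwards [hk, hU.mem_nhds hx] with y hy hyU
    have := hy ⟨y, hyU⟩ rfl
    simp only [hyU, dif_pos]
    linarith
  exact ((hg ⟨x, hx⟩ x (Metric.mem_ball_self (hr _))).add_const _).congr_of_eventuallyEq this


/-- **Closedness of the cross-form one-form for a symplectic map.**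
`U ⊆ ℝ^d × ℝ^d` open and simply connected, `u, v : U → ℝ^d` continuously differentiable.
If the diffeomorphism `f : (p,q) ↦ (p̄,q̄)` is given in cross form by
`p = p̄ + u(p̄,q)`, `q̄ = q + v(p̄,q)` for `(p̄,q) ∈ U`, and `f` preserves the standard
symplectic form on its domain `Ω`, then the 1-form `Σ_l (u_l dq_l + v_l dp̄_l)` on `U`
is closed (symmetry of its derivative), and there exists `s : U → ℝ` with
`∂s/∂q_l = u_l` and `∂s/∂p̄_l = v_l`; i.e. `f` has generating function `p̄·q + s(p̄,q)`. -/
theorem cross_form_one_form_closed_and_exact (d : ℕ) (hd : 1 ≤ d)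
    (U : Set ((Fin d → ℝ) × (Fin d → ℝ))) (hUopen : IsOpen U)
    (hUsc : SimplyConnectedSpace U)
    (u v : (Fin d → ℝ) × (Fin d → ℝ) → Fin d → ℝ)
    (hu : ContDiffOn ℝ 1 u U) (hv : ContDiffOn ℝ 1 v U)
    (Ω : Set ((Fin d → ℝ) × (Fin d → ℝ)))
    (hΩ : Ω = (fun x : (Fin d → ℝ) × (Fin d → ℝ) => (x.1 + u x, x.2)) '' U)
    (f : (Fin d → ℝ) × (Fin d → ℝ) → (Fin d → ℝ) × (Fin d → ℝ))
    (hfdiff : ∀ x ∈ Ω, DifferentiableAt ℝ f x)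
    (hfbij : Set.BijOn f Ω ((fun x : (Fin d → ℝ) × (Fin d → ℝ) => (x.1, x.2 + v x)) '' U))
    (hcross : ∀ x ∈ U, f (x.1 + u x, x.2) = (x.1, x.2 + v x))
    (hsympl : ∀ x ∈ Ω, ∀ w₁ w₂ : (Fin d → ℝ) × (Fin d → ℝ),
      ∑ i, ((fderiv ℝ f x w₁).1 i * (fderiv ℝ f x w₂).2 i -
            (fderiv ℝ f x w₁).2 i * (fderiv ℝ f x w₂).1 i)
        = ∑ i, (w₁.1 i * w₂.2 i - w₁.2 i * w₂.1 i)) :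
    (∀ x ∈ U, ∀ w₁ w₂ : (Fin d → ℝ) × (Fin d → ℝ),
      ∑ i, (fderiv ℝ v x w₁ i * w₂.1 i + fderiv ℝ u x w₁ i * w₂.2 i)
        = ∑ i, (fderiv ℝ v x w₂ i * w₁.1 i + fderiv ℝ u x w₂ i * w₁.2 i)) ∧
    ∃ s : (Fin d → ℝ) × (Fin d → ℝ) → ℝ, ∀ x ∈ U,
      DifferentiableAt ℝ s x ∧
      (∀ i, fderiv ℝ s x (0, Pi.single i 1) = u x i) ∧
      (∀ i, fderiv ℝ s x (Pi.single i 1, 0) = v x i) := by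
  have hdu : ∀ x ∈ U, DifferentiableAt ℝ u x := fun x hx =>
    (hu.differentiableOn one_ne_zero).differentiableAt (hUopen.mem_nhds hx)
  have hdv : ∀ x ∈ U, DifferentiableAt ℝ v x := fun x hx =>
    (hv.differentiableOn one_ne_zero).differentiableAt (hUopen.mem_nhds hx)
  have closed : ∀ x ∈ U, ∀ w₁ w₂ : (Fin d → ℝ) × (Fin d → ℝ),
      ∑ i, (fderiv ℝ v x w₁ i * w₂.1 i + fderiv ℝ u x w₁ i * w₂.2 i)
        = ∑ i, (fderiv ℝ v x w₂ i * w₁.1 i + fderiv ℝ u x w₂ i * w₁.2 i) := by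
    intro x hx w₁ w₂
    have hΩx : (x.1 + u x, x.2) ∈ Ω := by rw [hΩ]; exact ⟨x, hx, rfl⟩
    have hφ : HasFDerivAt (fun x : (Fin d → ℝ) × (Fin d → ℝ) => (x.1 + u x, x.2))
        ((ContinuousLinearMap.fst ℝ _ _ + fderiv ℝ u x).prod (ContinuousLinearMap.snd ℝ _ _)) x :=
      (hasFDerivAt_fst.add (hdu x hx).hasFDerivAt).prodMk hasFDerivAt_snd
    have hψ : HasFDerivAt (fun x : (Fin d → ℝ) × (Fin d → ℝ) => (x.1, x.2 + v x))
        ((ContinuousLinearMap.fst ℝ _ _).prod (ContinuousLinearMap.snd ℝ _ _ + fderiv ℝ v x)) x :=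
      hasFDerivAt_fst.prodMk (hasFDerivAt_snd.add (hdv x hx).hasFDerivAt)
    have hcomp := (hfdiff _ hΩx).hasFDerivAt.comp x hφ
    have hψ' := hψ.congr_of_eventuallyEq
      (f₁ := f ∘ (fun x : (Fin d → ℝ) × (Fin d → ℝ) => (x.1 + u x, x.2)))
      (by filter_upwards [hUopen.mem_nhds hx] with y hy using hcross y hy)
    have heq := hcomp.unique hψ'
    have e : ∀ w : (Fin d → ℝ) × (Fin d → ℝ),
        fderiv ℝ f (x.1 + u x, x.2) (w.1 + fderiv ℝ u x w, w.2) = (w.1, w.2 + fderiv ℝ v x w) :=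
      fun w => congrArg (fun L => L w) heq
    have h := hsympl _ hΩx (w₁.1 + fderiv ℝ u x w₁, w₁.2) (w₂.1 + fderiv ℝ u x w₂, w₂.2)
    rw [e, e] at h
    rw [← sub_eq_zero, ← Finset.sum_sub_distrib] at h ⊢
    rw [← neg_eq_zero, ← Finset.sum_neg_distrib, ← h]
    refine Finset.sum_congr rfl fun i _ => ?_
    simp only [Pi.add_apply]
    ring
  refine ⟨closed, ?_⟩
  -- the 1-form as a map into the dual space
  let L : (Fin d → ℝ) →L[ℝ] (Fin d → ℝ) →L[ℝ] ℝ :=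
    ∑ i, (ContinuousLinearMap.proj (R := ℝ) (φ := fun _ : Fin d => ℝ) i).smulRight
      (ContinuousLinearMap.proj (R := ℝ) (φ := fun _ : Fin d => ℝ) i)
  have hL : ∀ a b, L a b = ∑ i, a i * b i := fun a b => by
    simp [L]
  let P1 := (ContinuousLinearMap.compL ℝ ((Fin d → ℝ) × (Fin d → ℝ)) (Fin d → ℝ) ℝ).flip
    (ContinuousLinearMap.fst ℝ (Fin d → ℝ) (Fin d → ℝ))
  let P2 := (ContinuousLinearMap.compL ℝ ((Fin d → ℝ) × (Fin d → ℝ)) (Fin d → ℝ) ℝ).flip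
    (ContinuousLinearMap.snd ℝ (Fin d → ℝ) (Fin d → ℝ))
  let M1 := P1.comp L
  let M2 := P2.comp L
  have hM1 : ∀ a w, M1 a w = ∑ i, a i * w.1 i := fun a w => hL a w.1
  have hM2 : ∀ a w, M2 a w = ∑ i, a i * w.2 i := fun a w => hL a w.2
  have hder : ∀ x ∈ U, HasFDerivAt (fun x => M1 (v x) + M2 (u x))
      (M1.comp (fderiv ℝ v x) + M2.comp (fderiv ℝ u x)) x := fun x hx =>
    (M1.hasFDerivAt.comp x (hdv x hx).hasFDerivAt).add
      (M2.hasFDerivAt.comp x (hdu x hx).hasFDerivAt)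
  obtain ⟨s, hs⟩ := exists_primitive hUopen hUsc (ω := fun x => M1 (v x) + M2 (u x))
    (fun x hx => (hder x hx).differentiableAt.differentiableWithinAt) (fun x hx a b => by
      rw [(hder x hx).fderiv]
      have := closed x hx a b
      simp only [Finset.sum_add_distrib] at this
      simpa only [add_apply, ContinuousLinearMap.comp_apply, hM1, hM2] using this)
  refine ⟨s, fun x hx => ⟨(hs x hx).differentiableAt, fun i => ?_, fun i => ?_⟩⟩
  · rw [(hs x hx).fderiv, add_apply, hM1, hM2]
    simp [Pi.single_apply]
  · rw [(hs x hx).fderiv, add_apply, hM1, hM2]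
    simp [Pi.single_apply]
end
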